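/- For any ε > 0 and any s ∈ ℝ^N with s¹ ≥ s² ≥ ⋯ ≥ s^N ≥ 0 and |s| ≤ 2(1−ε), there exist parameters α ∈ (0,1), κ ∈ (0, 2(1−α)), and δ ∈ (0, √(2ακ/N)) such that P_n[ N^α_{s−δ, s+δ} ≤ n^κ ] → 0 as n → ∞, where N^α_{s−δ,s+δ} := #{ B ∈ Π_α ∩ 𝔹 : (s^i − δ) log n < (h_B)^i < (s^i + δ) log n for all 1 ≤ i ≤ N }. -/

import Mathlib

open MeasureTheory Real Filter Asymptotics
open scoped ENNReal NNReal Classical BigOperators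

noncomputable section

abbrev Site : Type := ℤ × ℤ

abbrev Spin (N : ℕ) : Type := EuclideanSpace ℝ (Fin N)

abbrev Conf (N : ℕ) : Type := Site → Spin N

/-- `Λ_n = [-n/2, n/2]² ∩ ℤ²`. -/
def Lam (n : ℕ) : Finset Site :=
  (Finset.Icc (-(n : ℤ)) (n : ℤ) ×ˢ Finset.Icc (-(n : ℤ)) (n : ℤ)).filter
    (fun x => 2 * |x.1| ≤ (n : ℤ) ∧ 2 * |x.2| ≤ (n : ℤ))

/-- extension of a configuration on `Λ_n` by zero (Dirichlet boundary condition). -/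
def extZero (n : ℕ) {N : ℕ} (ω : {x // x ∈ Lam n} → Spin N) : Conf N :=
  fun x => if h : x ∈ Lam n then ω ⟨x, h⟩ else 0

/-- Dirichlet energy `(1/(8π)) Σ_{x∼y} |φ(x) - φ(y)|²`, i.e. coupling `𝔤 = 1/(2π)`;
the sum over the enlarged box `Λ_{n+4}` covers all nearest-neighbour edges meeting
`Λ_n ∪ ∂Λ_n` (edges not meeting `Λ_n` contribute `0` since `φ ≡ 0` there). -/
def dirEnergy (n N : ℕ) (φ : Conf N) : ℝ :=
  (1 / (8 * π)) *
    ∑ x ∈ Lam (n + 4), (‖φ x - φ (x + ((1 : ℤ), (0 : ℤ)))‖ ^ 2 +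
      ‖φ x - φ (x + ((0 : ℤ), (1 : ℤ)))‖ ^ 2)

def gffAux (n N : ℕ) : Measure ({x // x ∈ Lam n} → Spin N) :=
  (Measure.pi fun _ => (volume : Measure (Spin N))).withDensity
    (fun ω => ENNReal.ofReal (Real.exp (- dirEnergy n N (extZero n ω))))

/-- The law `P_n` of the `N`-vectorial Dirichlet GFF on `Λ_n`, viewed as a probability
measure on full configurations (extended by `0` outside `Λ_n`). -/
def gff (n N : ℕ) : Measure (Conf N) :=
  (gffAux n N Set.univ)⁻¹ • (gffAux n N).map (extZero n)

/-- conditional probability `μ[A | B]`. -/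
def condProb {α : Type*} [MeasurableSpace α] (μ : Measure α) (B A : Set α) : ℝ≥0∞ :=
  μ (A ∩ B) / μ B

/-- conditional expectation `E_μ[f | B]`. -/
def condExpOn {α : Type*} [MeasurableSpace α] (μ : Measure α) (B : Set α) (f : α → ℝ) : ℝ :=
  (∫ x in B, f x ∂μ) / (μ B).toReal

/-- `Λ = [-1/2,1/2]²`. -/
def unitSq : Set (ℝ × ℝ) := Set.Icc (-(1/2 : ℝ), -(1/2 : ℝ)) (1/2, 1/2)

/-- `D_n = (nD) ∩ ℤ²`. -/
def Dn (D : Set (ℝ × ℝ)) (n : ℕ) : Set Site :=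
  {x | ((x.1 : ℝ) / n, (x.2 : ℝ) / n) ∈ D}

/-- the event `Ω^I_V = {φ(x) ∉ I ∀ x ∈ V}`. -/
def avoids {N : ℕ} (V : Set Site) (I : Set (Spin N)) : Set (Conf N) :=
  {φ | ∀ x ∈ V, φ x ∉ I}

/-- the closest even integer to `n^α`. -/
def evenSide (n : ℕ) (α : ℝ) : ℤ := 2 * round ((n : ℝ) ^ α / 2)

/-- the discrete box of side length `a` centered at `c`. -/
def boxAt (a : ℤ) (c : Site) : Set Site :=
  {y | 2 * |y.1 - c.1| ≤ a ∧ 2 * |y.2 - c.2| ≤ a}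

/-- the inner boundary of the discrete box of side length `a` centered at `c`. -/
def innerBdryAt (a : ℤ) (c : Site) : Set Site :=
  {y | y ∈ boxAt a c ∧ (2 * |y.1 - c.1| = a ∨ 2 * |y.2 - c.2| = a)}

/-- `c` is a center of a box of `Π_α(x₀)`. -/
def isCenter (D : Set (ℝ × ℝ)) (n : ℕ) (α : ℝ) (x0 : Site) (c : Site) : Prop :=
  (∃ k l : ℤ, c = x0 + (k * evenSide n α, l * evenSide n α)) ∧
    boxAt (evenSide n α) c ⊆ Dn D n

/-- the centers of the boxes of `Π_α(x₀)`, as a finite set. -/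
def centersF (D : Set (ℝ × ℝ)) (n : ℕ) (α : ℝ) (x0 : Site) : Finset Site :=
  (Lam n).filter (fun c => isCenter D n α x0 c)

/-- `⨅_α(x₀)`, the union of the inner boundaries of the boxes of `Π_α(x₀)`. -/
def gridK (D : Set (ℝ × ℝ)) (n : ℕ) (α : ℝ) (x0 : Site) : Set Site :=
  ⋃ c ∈ centersF D n α x0, innerBdryAt (evenSide n α) c

/-- the σ-algebra generated by the coordinates in `K`. -/
def mGrid (N : ℕ) (K : Set Site) : MeasurableSpace (Conf N) :=
  MeasurableSpace.comap (fun φ (y : K) => φ y) inferInstance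

/-- the harmonic extension `h^K(c) = E[φ(c) | F_K]` as a random variable. -/
def harmExt (n N : ℕ) (K : Set Site) (c : Site) : Conf N → Spin N :=
  (gff n N)[fun ψ => ψ c | mGrid N K]

/-- covariance of two real random variables. -/
def covar {α : Type*} [MeasurableSpace α] (μ : Measure α) (X Y : α → ℝ) : ℝ :=
  ∫ ω, (X ω - ∫ ω', X ω' ∂μ) * (Y ω - ∫ ω', Y ω' ∂μ) ∂μ

/-- the lattice Euclidean ball `𝔹 = B²(0, ρ) ∩ ℤ²`. -/
def latBall (ρ : ℝ) : Set Site :=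
  {x | Real.sqrt ((x.1 : ℝ) ^ 2 + (x.2 : ℝ) ^ 2) < ρ}

/-- `N^α_{s-δ,s+δ}`: the number of boxes `B ∈ Π_α ∩ 𝔹` with
`(s^i - δ) log n < (h_B)^i < (s^i + δ) log n` for all `i`. -/
def countRange (D : Set (ℝ × ℝ)) (N n : ℕ) (α : ℝ) (ρ : ℝ) (s : Fin N → ℝ) (δ : ℝ)
    (φ : Conf N) : ℕ :=
  ((centersF D n α (0, 0)).filter (fun c =>
    boxAt (evenSide n α) c ⊆ latBall ρ ∧
      ∀ i : Fin N,
        (s i - δ) * Real.log n < harmExt n N (gridK D n α (0, 0)) c φ i ∧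
          harmExt n N (gridK D n α (0, 0)) c φ i < (s i + δ) * Real.log n)).card

/-!
Write `L = log n` and `v = 2(1 - α)`. As each edge is counted once in `dirEnergy`, the field has
variance about `2L`, the box values `h_B` have variance about `vL` per coordinate, and there are
about `n ^ v` boxes. For `γ = s / v`, which has `|γ| ≤ 1` once `α ≤ ε`, consider
`Z_γ = ∑_B exp (γ · h_B)`. Two boxes at distance `d n^α` have covariance at most about
`vL - 2 log d`, so `E Z_γ² ≤ n^η (E Z_γ)²` and the Paley–Zygmund inequality bounds
`P (Z_γ ≥ E Z_γ / 2)` below by a small negative power of `n`. Since `log Z_γ` is a Lipschitz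
function of a Gaussian vector, concentration upgrades this to `Z_γ ≥ n^(-η') E Z_γ` with high
probability. By Markov's inequality for `Z_{γ ± t e_i}`, the boxes whose value leaves the window of
half-width `δL` around `sL` contribute negligibly to `Z_γ`, while each box inside contributes at
most a known power of `n`; hence at least `n^κ` boxes lie inside.

The covariance bounds come from the Dirichlet Green function. It is compared by the maximum
principle with the smoothed logarithm `log (|x - c|² + C)`, whose total discrete Laplacian mass `4π`
is computed as a flux through boxes. The box value itself is the average of the field under harmonic
measure, which equals the conditional expectation because uncorrelated jointly Gaussian variables
are independent.
-/

/-! ### Lattice Laplacian and maximum principle -/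

section Laplacian

/-- The four nearest neighbours of `x` in `ℤ²`. -/
def latticeNbrs (x : Site) : Finset Site :=
  {(x.1 + 1, x.2), (x.1 - 1, x.2), (x.1, x.2 + 1), (x.1, x.2 - 1)}

lemma mem_latticeNbrs {x y : Site} :
    y ∈ latticeNbrs x ↔
      y = (x.1 + 1, x.2) ∨ y = (x.1 - 1, x.2) ∨ y = (x.1, x.2 + 1) ∨ y = (x.1, x.2 - 1) := by
  simp only [latticeNbrs, Finset.mem_insert, Finset.mem_singleton]

/-- The unnormalised lattice Laplacian `Δf(x) = ∑_{y ∼ x} (f(y) - f(x))`. -/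
def latticeLap : (Site → ℝ) →ₗ[ℝ] (Site → ℝ) where
  toFun f x :=
    f (x.1 + 1, x.2) + f (x.1 - 1, x.2) + f (x.1, x.2 + 1) + f (x.1, x.2 - 1) - 4 * f x
  map_add' f g := by ext x; simp only [Pi.add_apply]; ring
  map_smul' a f := by ext x; simp only [Pi.smul_apply, smul_eq_mul, RingHom.id_apply]; ring

lemma latticeLap_apply (f : Site → ℝ) (x : Site) :
    latticeLap f x =
      f (x.1 + 1, x.2) + f (x.1 - 1, x.2) + f (x.1, x.2 + 1) + f (x.1, x.2 - 1) - 4 * f x :=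
  rfl

lemma latticeLap_const_sub (a : ℝ) (f : Site → ℝ) (x : Site) :
    latticeLap (fun y => a - f y) x = -latticeLap f x := by
  simp only [latticeLap_apply]; ring

lemma latticeLap_const_mul (a : ℝ) (f : Site → ℝ) (x : Site) :
    latticeLap (fun y => a * f y) x = a * latticeLap f x := by
  simp only [latticeLap_apply]; ring

lemma latticeLap_comp_swap (f : Site → ℝ) (x : Site) :
    latticeLap (fun y => f y.swap) x = latticeLap f x.swap := by
  simp only [latticeLap_apply, Prod.swap]; ring

lemma latticeLap_comp_affine (f : Site → ℝ) (c : Site) {σ : ℤ} (hσ : σ = 1 ∨ σ = -1) (x : Site) :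
    latticeLap (fun y => f (c.1 + σ * y.1, c.2 + y.2)) x =
      latticeLap f (c.1 + σ * x.1, c.2 + x.2) := by
  have hnext : c.2 + (x.2 + 1) = c.2 + x.2 + 1 := by ring
  have hprev : c.2 + (x.2 - 1) = c.2 + x.2 - 1 := by ring
  rcases hσ with rfl | rfl
  · have hright : c.1 + 1 * (x.1 + 1) = c.1 + 1 * x.1 + 1 := by ring
    have hleft : c.1 + 1 * (x.1 - 1) = c.1 + 1 * x.1 - 1 := by ring
    simp only [latticeLap_apply, hright, hleft, hnext, hprev]
  · have hright : c.1 + -1 * (x.1 + 1) = c.1 + -1 * x.1 - 1 := by ring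
    have hleft : c.1 + -1 * (x.1 - 1) = c.1 + -1 * x.1 + 1 := by ring
    simp only [latticeLap_apply, hright, hleft, hnext, hprev]
    ring

variable {V : Finset Site} {f g : Site → ℝ}

lemma nonneg_of_latticeLap_nonpos (hV : ∀ x ∈ V, latticeLap f x ≤ 0)
    (hb : ∀ v ∈ V, ∀ y ∈ latticeNbrs v, y ∉ V → 0 ≤ f y) {x : Site} (hx : x ∈ V) : 0 ≤ f x := by
  by_contra! hneg
  obtain ⟨m, hmV, hmin⟩ := V.exists_min_image f ⟨x, hx⟩
  have hm0 : f m < 0 := (hmin x hx).trans_lt hneg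
  have hge : ∀ v ∈ V, ∀ y ∈ latticeNbrs v, f m ≤ f y := fun v hv y hy => by
    by_cases hyV : y ∈ V
    · exact hmin y hyV
    · exact hm0.le.trans (hb v hv y hy hyV)
  obtain ⟨z, hzW, hzmax⟩ :=
    (V.filter (fun y => f y = f m)).exists_max_image (fun y => y.1) ⟨m, by simp [hmV]⟩
  obtain ⟨hzV, hzm⟩ := Finset.mem_filter.1 hzW
  have hright : f m < f (z.1 + 1, z.2) := by
    refine lt_of_le_of_ne (hge z hzV _ (by simp [mem_latticeNbrs])) fun heq => ?_
    have hV' : (z.1 + 1, z.2) ∈ V := by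
      by_contra hout
      exact absurd (hb z hzV _ (by simp [mem_latticeNbrs]) hout) (by linarith)
    have := hzmax _ (Finset.mem_filter.2 ⟨hV', heq.symm⟩)
    simp at this
  have hlap := hV z hzV
  rw [latticeLap_apply] at hlap
  linarith [hge z hzV (z.1 - 1, z.2) (by simp [mem_latticeNbrs]),
    hge z hzV (z.1, z.2 + 1) (by simp [mem_latticeNbrs]),
    hge z hzV (z.1, z.2 - 1) (by simp [mem_latticeNbrs])]

lemma le_of_latticeLap_le (hV : ∀ x ∈ V, latticeLap g x ≤ latticeLap f x)
    (hb : ∀ v ∈ V, ∀ y ∈ latticeNbrs v, y ∉ V → f y ≤ g y) {x : Site} (hx : x ∈ V) :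
    f x ≤ g x := by
  refine sub_nonneg.1 (nonneg_of_latticeLap_nonpos (f := g - f) (fun x hx => ?_)
    (fun v hv y hy hyV => sub_nonneg.2 (hb v hv y hy hyV)) hx)
  rw [map_sub]
  exact sub_nonpos.2 (hV x hx)

end Laplacian

/-! ### Green function and Dirichlet form -/

section Green

variable (V : Finset Site)

/-- The lattice Laplacian on `V` with zero boundary values outside `V`. -/
def dirichletLap : (V → ℝ) →ₗ[ℝ] (V → ℝ) :=
  LinearMap.funLeft ℝ ℝ Subtype.val ∘ₗ latticeLap ∘ₗ
    Function.ExtendByZero.linearMap ℝ (Subtype.val : V → Site)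

lemma extendByZero_of_notMem (u : V → ℝ) {x : Site} (hx : x ∉ V) :
    Function.ExtendByZero.linearMap ℝ (Subtype.val : V → Site) u x = 0 :=
  Function.extend_apply' _ _ _ (by simpa using hx)

lemma dirichletLap_surjective : Function.Surjective (dirichletLap V) := by
  refine LinearMap.surjective_of_injective ((injective_iff_map_eq_zero _).2 fun u hu => ?_)
  set w := Function.ExtendByZero.linearMap ℝ (Subtype.val : V → Site) u
  have hharm : ∀ x ∈ V, latticeLap w x = 0 := fun x hx => congrFun hu ⟨x, hx⟩
  have hzero : ∀ v ∈ V, ∀ y ∈ latticeNbrs v, y ∉ V → w y = 0 :=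
    fun _ _ y _ hy => extendByZero_of_notMem V u hy
  funext ⟨x, hx⟩
  have hval : w x = u ⟨x, hx⟩ := Subtype.val_injective.extend_apply u 0 ⟨x, hx⟩
  rw [← hval]
  refine le_antisymm ?_ (nonneg_of_latticeLap_nonpos (fun x hx => (hharm x hx).le)
    (fun v hv y hy hyV => (hzero v hv y hy hyV).ge) hx)
  exact le_of_latticeLap_le (g := 0) (fun x hx => by simp [hharm x hx])
    (fun v hv y hy hyV => (hzero v hv y hy hyV).le) hx

/-- The Green function of `V`, normalised by `-Δ (green V y) = 4π δ_y` on `V`; it is the covariance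
of each coordinate of the Dirichlet field on `V`. -/
def green (y : Site) : Site → ℝ :=
  Function.ExtendByZero.linearMap ℝ (Subtype.val : V → Site)
    (dirichletLap_surjective V fun x => if (x : Site) = y then -(4 * π) else 0).choose

variable {V}

lemma green_of_notMem (y : Site) {x : Site} (hx : x ∉ V) : green V y x = 0 :=
  extendByZero_of_notMem V _ hx

lemma latticeLap_green (y : Site) {x : Site} (hx : x ∈ V) :
    latticeLap (green V y) x = if x = y then -(4 * π) else 0 :=
  congrFun (dirichletLap_surjective V fun x => if (x : Site) = y then -(4 * π) else 0).choose_spec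
    ⟨x, hx⟩

lemma latticeLap_green_nonpos (y : Site) {x : Site} (hx : x ∈ V) :
    latticeLap (green V y) x ≤ 0 := by
  rw [latticeLap_green y hx]
  split_ifs <;> linarith [pi_pos]

lemma green_nonneg (V : Finset Site) (y x : Site) : 0 ≤ green V y x := by
  by_cases hx : x ∈ V
  · exact nonneg_of_latticeLap_nonpos (fun x hx => latticeLap_green_nonpos y hx)
      (fun _ _ x _ hx => (green_of_notMem y hx).ge) hx
  · exact (green_of_notMem y hx).ge

lemma green_eq_zero_of_pole_notMem {y : Site} (hy : y ∉ V) (x : Site) : green V y x = 0 := by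
  by_cases hx : x ∈ V
  · refine le_antisymm (le_of_latticeLap_le (g := 0) (fun x hx => ?_)
      (fun _ _ x _ hx => (green_of_notMem y hx).le) hx) (green_nonneg V y x)
    rw [latticeLap_green y hx, if_neg (ne_of_mem_of_not_mem hx hy), map_zero, Pi.zero_apply]
  · exact green_of_notMem y hx

variable (V) in
/-- The Dirichlet form `(4π)⁻¹ ∑_{x ∈ V} (-Δf)(x) g(x)`: on functions vanishing off `V` it is the
symmetric form whose quadratic part is twice the energy of the field. -/
def dirichletForm : (Site → ℝ) →ₗ[ℝ] (Site → ℝ) →ₗ[ℝ] ℝ :=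
  LinearMap.mk₂ ℝ (fun f g => (4 * π)⁻¹ * ∑ x ∈ V, -latticeLap f x * g x)
    (fun f f' g => by
      simp only [map_add, Pi.add_apply, neg_add, add_mul, Finset.sum_add_distrib, mul_add])
    (fun a f g => by
      simp only [map_smul, Pi.smul_apply, smul_eq_mul, Finset.mul_sum]
      exact Finset.sum_congr rfl fun x _ => by ring)
    (fun f g g' => by simp only [Pi.add_apply, mul_add, Finset.sum_add_distrib])
    (fun a f g => by
      simp only [Pi.smul_apply, smul_eq_mul, Finset.mul_sum]
      exact Finset.sum_congr rfl fun x _ => by ring)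

lemma dirichletForm_apply (f g : Site → ℝ) :
    dirichletForm V f g = (4 * π)⁻¹ * ∑ x ∈ V, -latticeLap f x * g x :=
  rfl

lemma sum_mul_shift {f g : Site → ℝ} (hf : ∀ x ∉ V, f x = 0) (hg : ∀ x ∉ V, g x = 0) (e : Site) :
    ∑ x ∈ V, f x * g (x + e) = ∑ x ∈ V, f (x - e) * g x := by
  have hleft : ∑ x ∈ V, f x * g (x + e) = ∑' x, f x * g (x + e) :=
    (tsum_eq_sum fun x hx => by rw [hf x hx, zero_mul]).symm
  have hright : ∑ x ∈ V, f (x - e) * g x = ∑' x, f (x - e) * g x :=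
    (tsum_eq_sum fun x hx => by rw [hg x hx, mul_zero]).symm
  rw [hleft, hright, ← (Equiv.addRight e).tsum_eq (fun x => f (x - e) * g x)]
  simp only [Equiv.coe_addRight, add_sub_cancel_right]

lemma sum_latticeLap_mul_comm {f g : Site → ℝ} (hf : ∀ x ∉ V, f x = 0) (hg : ∀ x ∉ V, g x = 0) :
    ∑ x ∈ V, latticeLap f x * g x = ∑ x ∈ V, latticeLap g x * f x := by
  have hshift := fun e => sum_mul_shift hf hg e
  have h1 := hshift (1, 0)
  have h2 := hshift (-1, 0)
  have h3 := hshift (0, 1)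
  have h4 := hshift (0, -1)
  simp only [Prod.add_def, Prod.sub_def, add_zero, sub_zero, sub_neg_eq_add,
    ← sub_eq_add_neg] at h1 h2 h3 h4
  calc ∑ x ∈ V, latticeLap f x * g x
      = ∑ x ∈ V, f (x.1 - 1, x.2) * g x + ∑ x ∈ V, f (x.1 + 1, x.2) * g x +
        ∑ x ∈ V, f (x.1, x.2 - 1) * g x + ∑ x ∈ V, f (x.1, x.2 + 1) * g x -
        4 * ∑ x ∈ V, f x * g x := by
        simp only [← Finset.sum_add_distrib, Finset.mul_sum, ← Finset.sum_sub_distrib,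
          latticeLap_apply]
        exact Finset.sum_congr rfl fun x _ => by ring
    _ = ∑ x ∈ V, latticeLap g x * f x := by
        rw [← h1, ← h2, ← h3, ← h4]
        simp only [← Finset.sum_add_distrib, Finset.mul_sum, ← Finset.sum_sub_distrib,
          latticeLap_apply]
        exact Finset.sum_congr rfl fun x _ => by ring

lemma dirichletForm_comm {f g : Site → ℝ} (hf : ∀ x ∉ V, f x = 0) (hg : ∀ x ∉ V, g x = 0) :
    dirichletForm V f g = dirichletForm V g f := by
  simp only [dirichletForm_apply, neg_mul, Finset.sum_neg_distrib,
    sum_latticeLap_mul_comm hf hg]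

lemma dirichletForm_green {y : Site} (hy : y ∈ V) (g : Site → ℝ) :
    dirichletForm V (green V y) g = g y := by
  have hterm : ∀ x ∈ V, -latticeLap (green V y) x * g x = if x = y then 4 * π * g x else 0 :=
    fun x hx => by rw [latticeLap_green y hx]; split_ifs <;> ring
  rw [dirichletForm_apply, Finset.sum_congr rfl hterm, Finset.sum_ite_eq' V y, if_pos hy]
  field_simp

lemma green_comm (y z : Site) : green V y z = green V z y := by
  by_cases hy : y ∈ V
  · by_cases hz : z ∈ V
    · rw [← dirichletForm_green hy (green V z), ← dirichletForm_green hz (green V y)]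
      exact dirichletForm_comm (fun x => green_of_notMem z) fun x => green_of_notMem y
    · rw [green_of_notMem y hz, green_eq_zero_of_pole_notMem hz]
  · rw [green_of_notMem z hy, green_eq_zero_of_pole_notMem hy]

end Green

/-! ### Smoothed logarithm and crude Green function bound -/

section SmoothedLog

/-- The smoothed squared distance `|x - c|² + C`. Its logarithm is a regularised multiple of the
logarithmic potential with pole `c`. -/
def smoothedDistSq (C : ℝ) (c x : Site) : ℝ :=
  ((x.1 : ℝ) - c.1) ^ 2 + ((x.2 : ℝ) - c.2) ^ 2 + C

lemma le_smoothedDistSq (C : ℝ) (c x : Site) : C ≤ smoothedDistSq C c x :=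
  le_add_of_nonneg_left (by positivity)

lemma smoothedDistSq_pos {C : ℝ} (hC : 0 < C) (c x : Site) : 0 < smoothedDistSq C c x :=
  hC.trans_le (le_smoothedDistSq C c x)

lemma latticeLap_log_smoothedDistSq {C : ℝ} (hC : 0 < C) (c x : Site) :
    latticeLap (fun y => log (smoothedDistSq C c y)) x =
      log (((smoothedDistSq C c x ^ 2 - 1) ^ 2 + 4 * C * (smoothedDistSq C c x + 1) ^ 2 +
        16 * ((x.1 : ℝ) - c.1) ^ 2 * ((x.2 : ℝ) - c.2) ^ 2) / smoothedDistSq C c x ^ 4) := by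
  have hpos := smoothedDistSq_pos hC c
  have hpow : 4 * log (smoothedDistSq C c x) = log (smoothedDistSq C c x ^ 4) := by
    rw [log_pow, Nat.cast_ofNat]
  rw [latticeLap_apply, hpow, ← log_mul (hpos _).ne' (hpos _).ne',
    ← log_mul (mul_pos (hpos _) (hpos _)).ne' (hpos _).ne',
    ← log_mul (mul_pos (mul_pos (hpos _) (hpos _)) (hpos _)).ne' (hpos _).ne',
    ← log_div (mul_pos (mul_pos (mul_pos (hpos _) (hpos _)) (hpos _)) (hpos _)).ne'
      (pow_pos (hpos _) 4).ne']
  congr 2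
  simp only [smoothedDistSq]
  push_cast
  ring

lemma log_one_add_le_latticeLap_log_smoothedDistSq {C : ℝ} (hC : 1 ≤ C) (c x : Site) :
    log (1 + (4 * C - 2) / smoothedDistSq C c x ^ 2) ≤
      latticeLap (fun y => log (smoothedDistSq C c y)) x := by
  have hq := smoothedDistSq_pos (zero_lt_one.trans_le hC) c x
  rw [latticeLap_log_smoothedDistSq (zero_lt_one.trans_le hC)]
  set q := smoothedDistSq C c x
  have hnonneg : 0 ≤ (4 * C - 2) / q ^ 2 := div_nonneg (by linarith) (by positivity)
  refine log_le_log (by linarith) ((le_div_iff₀ (by positivity)).2 ?_)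
  calc (1 + (4 * C - 2) / q ^ 2) * q ^ 4 = q ^ 4 + (4 * C - 2) * q ^ 2 := by field_simp
    _ ≤ (q ^ 2 - 1) ^ 2 + 4 * C * (q + 1) ^ 2 := by
      nlinarith [mul_pos (zero_lt_one.trans_le hC) hq]
    _ ≤ _ := le_add_of_nonneg_right (by positivity)

lemma latticeLap_log_smoothedDistSq_nonneg {C : ℝ} (hC : 1 ≤ C) (c x : Site) :
    0 ≤ latticeLap (fun y => log (smoothedDistSq C c y)) x := by
  refine le_trans (log_nonneg ?_) (log_one_add_le_latticeLap_log_smoothedDistSq hC c x)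
  exact le_add_of_nonneg_right (div_nonneg (by linarith) (sq_nonneg _))

lemma mem_Lam {n : ℕ} {x : Site} : x ∈ Lam n ↔ 2 * |x.1| ≤ (n : ℤ) ∧ 2 * |x.2| ≤ (n : ℤ) := by
  simp only [Lam, Finset.mem_filter, Finset.mem_product, Finset.mem_Icc, and_iff_right_iff_imp,
    ← abs_le]
  intro h
  have := abs_nonneg x.1
  have := abs_nonneg x.2
  omega

lemma mem_Lam_add_two_of_mem_latticeNbrs {n : ℕ} {x y : Site} (hx : x ∈ Lam n)
    (hy : y ∈ latticeNbrs x) : y ∈ Lam (n + 2) := by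
  rw [mem_Lam] at hx ⊢
  rcases mem_latticeNbrs.1 hy with rfl | rfl | rfl | rfl <;> dsimp only <;> push_cast <;> grind

lemma smoothedDistSq_le_of_mem_Lam {n : ℕ} (hn : 1 ≤ n) {C : ℝ} (hC : C ≤ (n : ℝ) ^ 2)
    {c x : Site} (hc : c ∈ Lam n) (hx : x ∈ Lam (n + 2)) :
    smoothedDistSq C c x ≤ 16 * (n : ℝ) ^ 2 := by
  rw [mem_Lam] at hc hx
  push_cast at hx
  have h1 : |(x.1 : ℝ) - c.1| ≤ 2 * (n : ℝ) := by
    exact_mod_cast (by have := abs_sub x.1 c.1; omega : |x.1 - c.1| ≤ 2 * (n : ℤ))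
  have h2 : |(x.2 : ℝ) - c.2| ≤ 2 * (n : ℝ) := by
    exact_mod_cast (by have := abs_sub x.2 c.2; omega : |x.2 - c.2| ≤ 2 * (n : ℤ))
  have h1sq := sq_le_sq' (abs_le.1 h1).1 (abs_le.1 h1).2
  have h2sq := sq_le_sq' (abs_le.1 h2).1 (abs_le.1 h2).2
  unfold smoothedDistSq
  nlinarith

lemma log_smoothedDistSq_le_of_mem_Lam {n : ℕ} (hn : 1 ≤ n) {C : ℝ} (hC0 : 0 < C)
    (hC : C ≤ (n : ℝ) ^ 2) {c x : Site} (hc : c ∈ Lam n) (hx : x ∈ Lam (n + 2)) :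
    log (smoothedDistSq C c x) ≤ log (16 * (n : ℝ) ^ 2) :=
  log_le_log (smoothedDistSq_pos hC0 c x) (smoothedDistSq_le_of_mem_Lam hn hC hc hx)

lemma latticeLap_green_ge_neg_log {n : ℕ} {z y : Site} (hy : y ∈ Lam n) :
    -latticeLap (fun x => log (smoothedDistSq 1 z x)) y ≤
      (4 * π)⁻¹ * latticeLap (green (Lam n) z) y := by
  rw [latticeLap_green z hy]
  split_ifs with h
  · subst h
    have hlog : (1 : ℝ) ≤ log (1 + (4 * 1 - 2) / 1 ^ 2) := by
      rw [le_log_iff_exp_le (by norm_num)]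
      norm_num
      linarith [exp_one_lt_d9]
    have hlap := log_one_add_le_latticeLap_log_smoothedDistSq le_rfl y y
    rw [show smoothedDistSq 1 y y = 1 by simp [smoothedDistSq]] at hlap
    rw [mul_neg, inv_mul_cancel₀ (by positivity)]
    linarith
  · rw [mul_zero]
    linarith [latticeLap_log_smoothedDistSq_nonneg le_rfl z y]

lemma green_Lam_le {n : ℕ} (hn : 1 ≤ n) {z : Site} (hz : z ∈ Lam n) (x : Site) :
    green (Lam n) z x ≤ 4 * π * log (16 * (n : ℝ) ^ 2) := by
  have hn' : (1 : ℝ) ≤ (n : ℝ) := by exact_mod_cast hn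
  have hlog : 0 ≤ log (16 * (n : ℝ) ^ 2) := log_nonneg (by nlinarith)
  by_cases hx : x ∈ Lam n
  · calc green (Lam n) z x
        ≤ 4 * π * (log (16 * (n : ℝ) ^ 2) - log (smoothedDistSq 1 z x)) := by
          refine le_of_latticeLap_le
            (g := fun y => 4 * π * (log (16 * (n : ℝ) ^ 2) - log (smoothedDistSq 1 z y)))
            (fun y hy => ?_) (fun v hv y hy hyV => ?_) hx
          · rw [latticeLap_const_mul, latticeLap_const_sub]
            exact (le_inv_mul_iff₀ (by positivity)).1 (latticeLap_green_ge_neg_log hy)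
          · rw [green_of_notMem z hyV]
            exact mul_nonneg (by positivity) (sub_nonneg.2 (log_smoothedDistSq_le_of_mem_Lam hn
              one_pos (one_le_pow₀ hn') hz (mem_Lam_add_two_of_mem_latticeNbrs hv hy)))
      _ ≤ 4 * π * log (16 * (n : ℝ) ^ 2) := by
          gcongr
          exact sub_le_self _ (log_nonneg (le_smoothedDistSq 1 z x))
  · rw [green_of_notMem z hx]
    positivity

end SmoothedLog

/-! ### Gradient estimate for harmonic functions -/

section Gradient

/-- A harmonic quadratic polynomial that vanishes to first order across the reflection line
`2 x₁ = k` and is at least `1` on the far sides of the box of radius `m`. -/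
def reflectionBarrier (m k : ℤ) (x : Site) : ℝ :=
  (4 * (x.2 : ℝ) ^ 2 - (2 * x.1 - k + 1) ^ 2 + 8 * m * (2 * x.1 - k + 1)) / (4 * m ^ 2)

lemma latticeLap_reflectionBarrier (m k : ℤ) (x : Site) :
    latticeLap (reflectionBarrier m k) x = 0 := by
  simp only [latticeLap_apply, reflectionBarrier]
  push_cast
  ring

lemma reflectionBarrier_nonneg {m k : ℤ} {x : Site} (hm : 1 ≤ m) (hk : 0 ≤ k)
    (hleft : k - 1 ≤ 2 * x.1) (hright : x.1 ≤ m) : 0 ≤ reflectionBarrier m k x := by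
  have hm' : (1 : ℝ) ≤ m := by exact_mod_cast hm
  have hk' : (0 : ℝ) ≤ k := by exact_mod_cast hk
  have hleft' : (k : ℝ) - 1 ≤ 2 * x.1 := by exact_mod_cast hleft
  have hright' : (x.1 : ℝ) ≤ m := by exact_mod_cast hright
  refine div_nonneg ?_ (by positivity)
  nlinarith [sq_nonneg (x.2 : ℝ)]

lemma one_le_reflectionBarrier {m k : ℤ} {x : Site} (hk : 0 ≤ k) (hkm : k ≤ m) (hm : 1 ≤ m)
    (hleft : k ≤ 2 * x.1) (hright : x.1 ≤ m) (hside : x.1 = m ∨ |x.2| = m) :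
    1 ≤ reflectionBarrier m k x := by
  have hk' : (0 : ℝ) ≤ k := by exact_mod_cast hk
  have hkm' : (k : ℝ) ≤ m := by exact_mod_cast hkm
  have hm' : (1 : ℝ) ≤ m := by exact_mod_cast hm
  have hleft' : (k : ℝ) ≤ 2 * x.1 := by exact_mod_cast hleft
  have hright' : (x.1 : ℝ) ≤ m := by exact_mod_cast hright
  rw [reflectionBarrier, one_le_div (by positivity)]
  rcases hside with hx | hx
  · rw [hx]
    nlinarith [sq_nonneg (x.2 : ℝ)]
  · have hsq : (x.2 : ℝ) ^ 2 = (m : ℝ) ^ 2 := by exact_mod_cast hx ▸ (sq_abs x.2).symm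
    rw [hsq]
    nlinarith

lemma reflectionBarrier_axis_le {m k : ℤ} (hm : 1 ≤ m) (hk : 1 ≤ k) :
    reflectionBarrier m k (k, 0) ≤ 4 * k / m := by
  have hm' : (1 : ℝ) ≤ m := by exact_mod_cast hm
  have hk' : (1 : ℝ) ≤ k := by exact_mod_cast hk
  rw [reflectionBarrier, div_le_div_iff₀ (by positivity) (by positivity)]
  push_cast
  calc (4 * (0 : ℝ) ^ 2 - (2 * k - k + 1) ^ 2 + 8 * m * (2 * k - k + 1)) * m
      ≤ 16 * m * k * m := by gcongr; nlinarith
    _ = 4 * k * (4 * m ^ 2) := by ring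

lemma latticeLap_reflect_sub (h : Site → ℝ) (k : ℤ) (x : Site) :
    latticeLap (fun y => h (k - y.1, y.2) - h y) x =
      latticeLap h (k - x.1, x.2) - latticeLap h x := by
  have hcomp := latticeLap_comp_affine h (k, 0) (Or.inr rfl) x
  simp only [zero_add, neg_one_mul, ← sub_eq_add_neg] at hcomp
  rw [← hcomp, ← Pi.sub_apply, ← map_sub]
  rfl

/-- The part of the half box `k/2 < x₁ < m`, `|x₂| < m` where `h` drops under reflection in the
line `2 x₁ = k`. -/
def reflectionDropSet (h : Site → ℝ) (m k : ℤ) : Finset Site :=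
  (Finset.Ioo (-m) m ×ˢ Finset.Ioo (-m) m).filter
    fun x => k < 2 * x.1 ∧ 0 < h (k - x.1, x.2) - h x

lemma mem_reflectionDropSet {h : Site → ℝ} {m k : ℤ} (hk : 0 ≤ k) {x : Site} :
    x ∈ reflectionDropSet h m k ↔
      k < 2 * x.1 ∧ x.1 < m ∧ |x.2| < m ∧ 0 < h (k - x.1, x.2) - h x := by
  simp only [reflectionDropSet, Finset.mem_filter, Finset.mem_product, Finset.mem_Ioo, abs_lt]
  grind

lemma reflect_sub_le_reflectionBarrier {h : Site → ℝ} {M : ℝ} (hosc : ∀ x y, h x - h y ≤ M)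
    {m k : ℤ} (hk : 0 ≤ k) (hkm : k ≤ m) (hm : 1 ≤ m) {v y : Site}
    (hv : v ∈ reflectionDropSet h m k) (hy : y ∈ latticeNbrs v)
    (hyV : y ∉ reflectionDropSet h m k) :
    h (k - y.1, y.2) - h y ≤ M * reflectionBarrier m k y := by
  have hM : 0 ≤ M := (sub_self (h 0)).ge.trans (hosc 0 0)
  obtain ⟨hv1, hv2, hv3, hv0⟩ := (mem_reflectionDropSet hk).1 hv
  have hy_left : k - 1 ≤ 2 * y.1 := by
    rcases mem_latticeNbrs.1 hy with rfl | rfl | rfl | rfl <;> dsimp only <;> omega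
  have hy_right : y.1 ≤ m := by
    rcases mem_latticeNbrs.1 hy with rfl | rfl | rfl | rfl <;> dsimp only <;> omega
  have hy_two : |y.2| ≤ m := by
    rcases mem_latticeNbrs.1 hy with rfl | rfl | rfl | rfl <;> dsimp only <;> grind
  by_cases hdrop : h (k - y.1, y.2) - h y ≤ 0
  · exact hdrop.trans (mul_nonneg hM (reflectionBarrier_nonneg hm hk hy_left hy_right))
  push Not at hdrop
  -- Crossing the line, `y` would be its own reflection or the reflection of `v`.
  have hy_cross : k < 2 * y.1 := by
    by_contra! hle
    rcases mem_latticeNbrs.1 hy with rfl | rfl | rfl | rfl <;> dsimp only at hle hdrop hy_left <;>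
      try omega
    obtain heq | heq : 2 * v.1 = k + 2 ∨ 2 * v.1 = k + 1 := by omega
    · rw [show k - (v.1 - 1) = v.1 - 1 by omega, sub_self] at hdrop
      exact hdrop.false
    · rw [show k - (v.1 - 1) = v.1 by omega] at hdrop
      rw [show k - v.1 = v.1 - 1 by omega] at hv0
      exact lt_asymm hdrop (by linarith)
  have hside : y.1 = m ∨ |y.2| = m := by
    by_contra! hne
    exact hyV ((mem_reflectionDropSet hk).2
      ⟨hy_cross, hy_right.lt_of_ne hne.1, hy_two.lt_of_ne hne.2, hdrop⟩)
  exact (hosc _ _).trans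
    (le_mul_of_one_le_right hM (one_le_reflectionBarrier hk hkm hm hy_cross.le hy_right hside))

-- Reflecting in the line `2 x₁ = k` exchanges the two points, and the difference of the reflected
-- and the original function is harmonic and odd, so it is dominated by a linearly growing barrier.
lemma sub_axis_le {h : Site → ℝ} {M : ℝ} (hosc : ∀ x y, h x - h y ≤ M) {m k : ℤ} (hk : 1 ≤ k)
    (hkm : k ≤ m) (hharm : ∀ x : Site, |x.1| < m → |x.2| < m → latticeLap h x = 0) :
    h (0, 0) - h (k, 0) ≤ M * (4 * k / m) := by
  have hM : 0 ≤ M := (sub_self (h 0)).ge.trans (hosc 0 0)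
  have hk' : (0 : ℝ) < k := by exact_mod_cast hk
  have hkm' : (k : ℝ) ≤ m := by exact_mod_cast hkm
  rcases le_or_gt (h (0, 0) - h (k, 0)) 0 with hdrop | hdrop
  · exact hdrop.trans (mul_nonneg hM (div_nonneg (by positivity) (by linarith)))
  rcases hkm.eq_or_lt with rfl | hlt
  · refine (hosc _ _).trans (le_mul_of_one_le_right hM ?_)
    rw [one_le_div hk']
    linarith
  have hmem : ((k, 0) : Site) ∈ reflectionDropSet h m k := by
    rw [mem_reflectionDropSet (by omega), sub_self, abs_zero]
    exact ⟨by dsimp only; omega, hlt, by omega, hdrop⟩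
  calc h (0, 0) - h (k, 0) = h (k - k, 0) - h (k, 0) := by rw [sub_self]
    _ ≤ M * reflectionBarrier m k (k, 0) := by
      refine le_of_latticeLap_le (V := reflectionDropSet h m k)
        (f := fun y => h (k - y.1, y.2) - h y) (g := fun y => M * reflectionBarrier m k y)
        (fun x hx => ?_) (fun v hv y => reflect_sub_le_reflectionBarrier hosc (by omega) hkm
          (by omega) hv) hmem
      obtain ⟨h1, h2, h3, -⟩ := (mem_reflectionDropSet (by omega)).1 hx
      rw [latticeLap_const_mul, latticeLap_reflectionBarrier, mul_zero, latticeLap_reflect_sub,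
        hharm x (by grind) h3, hharm (k - x.1, x.2) (by grind) h3, sub_zero]
    _ ≤ M * (4 * k / m) :=
      mul_le_mul_of_nonneg_left (reflectionBarrier_axis_le (by omega) hk) hM

lemma sub_horizontal_le {h : Site → ℝ} {M : ℝ} (hosc : ∀ x y, h x - h y ≤ M) {m : ℤ} {c : Site}
    (hharm : ∀ x : Site, |x.1 - c.1| < m → |x.2 - c.2| < m → latticeLap h x = 0) {j k : ℤ}
    (hjk : |j| ≤ k) (hk : 1 ≤ k) (hkm : k ≤ m) : h c - h (c.1 + j, c.2) ≤ M * (4 * k / m) := by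
  have hM : 0 ≤ M := (sub_self (h 0)).ge.trans (hosc 0 0)
  have hm : (0 : ℝ) < m := by exact_mod_cast (by omega : 0 < m)
  rcases eq_or_ne j 0 with rfl | hj
  · have : (0 : ℝ) < k := by exact_mod_cast hk
    simp only [add_zero, Prod.mk.eta, sub_self]
    positivity
  obtain ⟨σ, hσ, habs⟩ : ∃ σ : ℤ, (σ = 1 ∨ σ = -1) ∧ j = σ * |j| := by
    rcases abs_choice j with h' | h'
    · exact ⟨1, Or.inl rfl, by omega⟩
    · exact ⟨-1, Or.inr rfl, by omega⟩
  have hσabs : |σ| = 1 := by rcases hσ with rfl | rfl <;> rfl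
  have hgrad := sub_axis_le (h := fun y => h (c.1 + σ * y.1, c.2 + y.2)) (fun _ _ => hosc _ _)
    (Int.one_le_abs hj) (hjk.trans hkm) fun x h1 h2 => by
      rw [latticeLap_comp_affine h c hσ x]
      refine hharm _ ?_ ?_
      · rwa [add_sub_cancel_left, abs_mul, hσabs, one_mul]
      · rwa [add_sub_cancel_left]
  simp only [mul_zero, add_zero, Prod.mk.eta, ← habs] at hgrad
  refine hgrad.trans (mul_le_mul_of_nonneg_left ?_ hM)
  gcongr

lemma sub_vertical_le {h : Site → ℝ} {M : ℝ} (hosc : ∀ x y, h x - h y ≤ M) {m : ℤ} {c : Site}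
    (hharm : ∀ x : Site, |x.1 - c.1| < m → |x.2 - c.2| < m → latticeLap h x = 0) {j k : ℤ}
    (hjk : |j| ≤ k) (hk : 1 ≤ k) (hkm : k ≤ m) : h c - h (c.1, c.2 + j) ≤ M * (4 * k / m) :=
  sub_horizontal_le (h := fun y => h y.swap) (c := c.swap) (fun _ _ => hosc _ _)
    (fun x h1 h2 => (latticeLap_comp_swap h x).trans (hharm _ h2 h1)) hjk hk hkm

lemma harmonic_sub_le {h : Site → ℝ} {M : ℝ} (hosc : ∀ x y, h x - h y ≤ M) {m k : ℤ} (hk : 1 ≤ k)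
    (hkm : 2 * k ≤ m) {c y : Site}
    (hharm : ∀ x : Site, |x.1 - c.1| < m → |x.2 - c.2| < m → latticeLap h x = 0)
    (hy1 : |y.1 - c.1| ≤ k) (hy2 : |y.2 - c.2| ≤ k) : h c - h y ≤ M * (12 * k / m) := by
  have hM : 0 ≤ M := (sub_self (h 0)).ge.trans (hosc 0 0)
  have hk' : (0 : ℝ) < k := by exact_mod_cast hk
  have hkm' : 2 * (k : ℝ) ≤ m := by exact_mod_cast hkm
  have hhor : h c - h (y.1, c.2) ≤ M * (4 * k / m) := by
    simpa using sub_horizontal_le hosc hharm hy1 hk (by omega)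
  have hver : h (y.1, c.2) - h y ≤ M * (4 * k / ((m - k : ℤ) : ℝ)) := by
    have hharm' : ∀ x : Site, |x.1 - y.1| < m - k → |x.2 - c.2| < m - k → latticeLap h x = 0 :=
      fun x h1 h2 => hharm x
        (by linarith [abs_sub_le x.1 y.1 c.1]) (by omega)
    simpa using sub_vertical_le (c := (y.1, c.2)) hosc hharm' hy2 hk (by omega)
  have hhalf : 4 * k / ((m - k : ℤ) : ℝ) ≤ 8 * k / m := by
    push_cast
    rw [div_le_div_iff₀ (by linarith) (by linarith)]
    nlinarith
  calc h c - h y ≤ M * (4 * k / m) + M * (8 * k / m) := by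
        linarith [mul_le_mul_of_nonneg_left hhalf hM]
    _ = M * (12 * k / m) := by ring

end Gradient

/-! ### Flux of the smoothed logarithm -/

section Flux

/-- The box of sup-norm radius `R` around `c`. -/
def siteBox (c : Site) (R : ℕ) : Finset Site :=
  Finset.Icc (c.1 - R) (c.1 + R) ×ˢ Finset.Icc (c.2 - R) (c.2 + R)

lemma mem_siteBox {c x : Site} {R : ℕ} :
    x ∈ siteBox c R ↔ |x.1 - c.1| ≤ (R : ℤ) ∧ |x.2 - c.2| ≤ (R : ℤ) := by
  simp only [siteBox, Finset.mem_product, Finset.mem_Icc, abs_le]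
  omega

lemma self_mem_siteBox (c : Site) (R : ℕ) : c ∈ siteBox c R := by simp [mem_siteBox]

lemma siteBox_mono (c : Site) {R R' : ℕ} (h : R ≤ R') : siteBox c R ⊆ siteBox c R' := fun x hx => by
  rw [mem_siteBox] at hx ⊢
  omega

lemma exists_subset_siteBox (S : Finset Site) (c : Site) : ∃ R, S ⊆ siteBox c R := by
  refine ⟨∑ x ∈ S, ((x.1 - c.1).natAbs + (x.2 - c.2).natAbs), fun x hx => ?_⟩
  have := Finset.single_le_sum (f := fun x : Site => (x.1 - c.1).natAbs + (x.2 - c.2).natAbs)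
    (fun _ _ => Nat.zero_le _) hx
  simp only [mem_siteBox, abs_le]
  omega

lemma sum_siteBox_swap (g : Site → ℝ) (c : Site) (R : ℕ) :
    ∑ x ∈ siteBox c.swap R, g x.swap = ∑ x ∈ siteBox c R, g x := by
  simp only [siteBox, Finset.sum_product]
  exact Finset.sum_comm

lemma sum_Icc_secondDiff (g : ℤ → ℝ) (c : ℤ) (R : ℕ) :
    ∑ i ∈ Finset.Icc (c - R) (c + R), (g (i + 1) + g (i - 1) - 2 * g i) =
      (g (c + R + 1) - g (c + R)) + (g (c - R - 1) - g (c - R)) := by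
  induction R with
  | zero => simp; ring
  | succ k ih =>
    have hIcc : Finset.Icc (c - ((k + 1 : ℕ) : ℤ)) (c + ((k + 1 : ℕ) : ℤ)) =
        insert (c - k - 1) (insert (c + k + 1) (Finset.Icc (c - (k : ℤ)) (c + k))) := by
      ext x
      simp only [Finset.mem_Icc, Finset.mem_insert]
      omega
    rw [hIcc, Finset.sum_insert (by simp; omega), Finset.sum_insert (by simp), ih,
      sub_add_cancel, add_sub_cancel_right]
    push_cast
    rw [show c + ((k : ℤ) + 1) = c + k + 1 by ring, show c - ((k : ℤ) + 1) = c - k - 1 by ring]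
    ring

lemma sum_Icc_sub_center (g : ℤ → ℝ) (c : ℤ) (R : ℕ) :
    ∑ i ∈ Finset.Icc (c - R) (c + R), g (i - c) = ∑ i ∈ Finset.Icc (-(R : ℤ)) R, g i := by
  refine Finset.sum_nbij' (fun i => i - c) (fun i => i + c) ?_ ?_ (fun i _ => sub_add_cancel i c)
    (fun i _ => add_sub_cancel_right i c) fun _ _ => rfl <;>
  · simp only [Finset.mem_Icc]
    intros
    omega

lemma sum_siteBox_horizontal_secondDiff {C : ℝ} (hC : 0 < C) (c : Site) (R : ℕ) :
    ∑ x ∈ siteBox c R, (log (smoothedDistSq C c (x.1 + 1, x.2)) +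
        log (smoothedDistSq C c (x.1 - 1, x.2)) - 2 * log (smoothedDistSq C c x)) =
      2 * ∑ k ∈ Finset.Icc (-(R : ℤ)) R,
        log (1 + (2 * R + 1) / ((R : ℝ) ^ 2 + (k : ℝ) ^ 2 + C)) := by
  have hlog : ∀ k : ℤ, log (1 + (2 * R + 1) / ((R : ℝ) ^ 2 + (k : ℝ) ^ 2 + C)) =
      log (((R : ℝ) + 1) ^ 2 + (k : ℝ) ^ 2 + C) - log ((R : ℝ) ^ 2 + (k : ℝ) ^ 2 + C) :=
    fun k => by
      rw [← log_div (by positivity) (by positivity)]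
      congr 1
      field_simp
      ring
  rw [siteBox, Finset.sum_product_right, ← sum_Icc_sub_center _ c.2, Finset.mul_sum]
  refine Finset.sum_congr rfl fun j _ => ?_
  dsimp only
  rw [sum_Icc_secondDiff (fun i => log (smoothedDistSq C c (i, j))), hlog]
  simp only [smoothedDistSq]
  push_cast
  rw [show (c.1 : ℝ) + R + 1 - c.1 = R + 1 by ring, show (c.1 : ℝ) + R - c.1 = R by ring,
    show ((c.1 : ℝ) - R - 1 - c.1) ^ 2 = (R + 1) ^ 2 by ring,
    show ((c.1 : ℝ) - R - c.1) ^ 2 = R ^ 2 by ring]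
  ring

lemma sum_siteBox_latticeLap_log {C : ℝ} (hC : 0 < C) (c : Site) (R : ℕ) :
    ∑ x ∈ siteBox c R, latticeLap (fun y => log (smoothedDistSq C c y)) x =
      4 * ∑ k ∈ Finset.Icc (-(R : ℤ)) R,
        log (1 + (2 * R + 1) / ((R : ℝ) ^ 2 + (k : ℝ) ^ 2 + C)) := by
  have hswap : ∀ x, smoothedDistSq C c.swap x = smoothedDistSq C c x.swap := fun x => by
    simp only [smoothedDistSq, Prod.fst_swap, Prod.snd_swap]
    ring
  have hhor := sum_siteBox_horizontal_secondDiff hC c R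
  have hver := sum_siteBox_horizontal_secondDiff hC c.swap R
  simp only [hswap] at hver
  have hver' := (sum_siteBox_swap (fun x => log (smoothedDistSq C c (x.1, x.2 + 1)) +
    log (smoothedDistSq C c (x.1, x.2 - 1)) - 2 * log (smoothedDistSq C c x)) c R).symm.trans hver
  calc ∑ x ∈ siteBox c R, latticeLap (fun y => log (smoothedDistSq C c y)) x
      = _ := by
        rw [Finset.sum_congr rfl fun x _ => ?_, Finset.sum_add_distrib]
        rw [latticeLap_apply]
        ring
    _ = 2 * _ + 2 * _ := congrArg₂ (· + ·) hhor hver'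
    _ = _ := by ring

lemma sum_Icc_of_even {g : ℤ → ℝ} (hg : ∀ k, g (-k) = g k) (R : ℕ) :
    ∑ k ∈ Finset.Icc (-(R : ℤ)) R, g k = g 0 + 2 * ∑ k ∈ Finset.range R, g (k + 1) := by
  induction R with
  | zero => simp
  | succ k ih =>
    have hIcc : Finset.Icc (-((k + 1 : ℕ) : ℤ)) ((k + 1 : ℕ) : ℤ) =
        insert (-((k : ℤ) + 1)) (insert ((k : ℤ) + 1) (Finset.Icc (-(k : ℤ)) k)) := by
      ext x
      simp only [Finset.mem_Icc, Finset.mem_insert]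
      omega
    rw [hIcc, Finset.sum_insert (by simp; omega), Finset.sum_insert (by simp), ih,
      Finset.sum_range_succ, hg]
    ring

lemma antitoneOn_div_sq_add_sq {R : ℝ} (hR : 0 < R) :
    AntitoneOn (fun x : ℝ => R / (R ^ 2 + x ^ 2)) (Set.Icc 0 (0 + R)) := fun x hx y _ hxy => by
  have := hx.1
  dsimp only
  gcongr

lemma sum_div_sq_add_sq_le {R : ℕ} (hR : 0 < R) :
    ∑ k ∈ Finset.Icc (-(R : ℤ)) R, (R : ℝ) / ((R : ℝ) ^ 2 + (k : ℝ) ^ 2) ≤ π / 2 + 1 / R := by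
  have hR' : (0 : ℝ) < R := by exact_mod_cast hR
  have hsum := (antitoneOn_div_sq_add_sq hR').sum_le_integral
  rw [zero_add, integral_div_sq_add_sq, div_self hR'.ne', zero_div, arctan_one, arctan_zero,
    sub_zero] at hsum
  have hzero : (R : ℝ) / ((R : ℝ) ^ 2 + ((0 : ℤ) : ℝ) ^ 2) = 1 / R := by
    push_cast
    field_simp
    simp
  rw [sum_Icc_of_even (fun k => by rw [Int.cast_neg, neg_sq]), hzero]
  simp only [zero_add, Nat.cast_add, Nat.cast_one] at hsum
  push_cast
  linarith

lemma le_sum_div_sq_add_sq {R : ℕ} (hR : 0 < R) :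
    π / 2 ≤ ∑ k ∈ Finset.Icc (-(R : ℤ)) R, (R : ℝ) / ((R : ℝ) ^ 2 + (k : ℝ) ^ 2) := by
  have hR' : (0 : ℝ) < R := by exact_mod_cast hR
  have hsum := (antitoneOn_div_sq_add_sq hR').integral_le_sum
  rw [zero_add, integral_div_sq_add_sq, div_self hR'.ne', zero_div, arctan_one, arctan_zero,
    sub_zero] at hsum
  simp only [zero_add] at hsum
  have hlast := Finset.sum_range_succ (fun k : ℕ => (R : ℝ) / ((R : ℝ) ^ 2 + (k : ℝ) ^ 2)) R
  have hfirst := Finset.sum_range_succ' (fun k : ℕ => (R : ℝ) / ((R : ℝ) ^ 2 + (k : ℝ) ^ 2)) R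
  have hhalf : 2 * ((R : ℝ) / ((R : ℝ) ^ 2 + (R : ℝ) ^ 2)) = R / ((R : ℝ) ^ 2 + 0 ^ 2) := by
    field_simp
    ring
  rw [sum_Icc_of_even (fun k => by rw [Int.cast_neg, neg_sq])]
  push_cast at hfirst ⊢
  linarith [show 0 ≤ (R : ℝ) / ((R : ℝ) ^ 2 + (R : ℝ) ^ 2) by positivity]

lemma sum_siteBox_latticeLap_log_le {C : ℝ} (hC : 0 < C) (c : Site) {R : ℕ} (hR : 0 < R) :
    ∑ x ∈ siteBox c R, latticeLap (fun y => log (smoothedDistSq C c y)) x ≤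
      4 * ((2 + 1 / R) * (π / 2 + 1 / R)) := by
  have : (0 : ℝ) < R := by exact_mod_cast hR
  have hterm : ∀ k : ℤ, log (1 + (2 * R + 1) / ((R : ℝ) ^ 2 + (k : ℝ) ^ 2 + C)) ≤
      (2 + 1 / R) * ((R : ℝ) / ((R : ℝ) ^ 2 + (k : ℝ) ^ 2)) := fun k => by
    calc log (1 + (2 * R + 1) / ((R : ℝ) ^ 2 + (k : ℝ) ^ 2 + C))
        ≤ (2 * R + 1) / ((R : ℝ) ^ 2 + (k : ℝ) ^ 2 + C) := by
          have := log_le_sub_one_of_pos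
            (show 0 < 1 + (2 * R + 1) / ((R : ℝ) ^ 2 + (k : ℝ) ^ 2 + C) by positivity)
          linarith
      _ ≤ (2 * R + 1) / ((R : ℝ) ^ 2 + (k : ℝ) ^ 2) := by
          exact div_le_div_of_nonneg_left (by positivity) (by positivity) (by linarith)
      _ = (2 + 1 / R) * ((R : ℝ) / ((R : ℝ) ^ 2 + (k : ℝ) ^ 2)) := by field_simp
  rw [sum_siteBox_latticeLap_log hC]
  gcongr
  refine (Finset.sum_le_sum fun k _ => hterm k).trans ?_
  rw [← Finset.mul_sum]
  gcongr
  exact sum_div_sq_add_sq_le hR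

lemma sum_latticeLap_log_le {C : ℝ} (hC : 1 ≤ C) (c : Site) (S : Finset Site) :
    ∑ x ∈ S, latticeLap (fun y => log (smoothedDistSq C c y)) x ≤ 4 * π := by
  have hinv := tendsto_one_div_atTop_nhds_zero_nat (𝕜 := ℝ)
  have hlim : Tendsto (fun R : ℕ => 4 * ((2 + 1 / (R : ℝ)) * (π / 2 + 1 / (R : ℝ)))) atTop
      (nhds (4 * π)) := by
    convert ((hinv.const_add 2).mul (hinv.const_add (π / 2))).const_mul 4 using 2
    ring
  obtain ⟨R₀, hR₀⟩ := exists_subset_siteBox S c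
  refine ge_of_tendsto hlim ?_
  filter_upwards [eventually_ge_atTop R₀, eventually_gt_atTop 0] with R hR hRpos
  exact (Finset.sum_le_sum_of_subset_of_nonneg (hR₀.trans (siteBox_mono c hR))
    fun x _ _ => latticeLap_log_smoothedDistSq_nonneg hC c x).trans
    (sum_siteBox_latticeLap_log_le (zero_lt_one.trans_le hC) c hRpos)

lemma mul_one_sub_le_log_one_add {y b : ℝ} (hy : 0 ≤ y) (hyb : y ≤ b) :
    y * (1 - b) ≤ log (1 + y) := by
  have hlog := one_sub_inv_le_log_of_pos (show 0 < 1 + y by positivity)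
  rw [show 1 - (1 + y)⁻¹ = y / (1 + y) by field_simp; ring] at hlog
  refine le_trans ?_ hlog
  rw [le_div_iff₀ (by positivity)]
  nlinarith [mul_nonneg hy (sub_nonneg.2 hyb), mul_nonneg hy hy]

lemma le_log_one_add_flux {C R : ℝ} (hC : 0 < C) (hR : 3 ≤ R) (k : ℝ) :
    (1 - 3 / R) * (1 - C / R ^ 2) * 2 * (R / (R ^ 2 + k ^ 2)) ≤
      log (1 + (2 * R + 1) / (R ^ 2 + k ^ 2 + C)) := by
  have hRpos : 0 < R := by linarith
  have hthree : 0 ≤ 1 - 3 / R := by rwa [sub_nonneg, div_le_one hRpos]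
  set D := R ^ 2 + k ^ 2
  have hDpos : 0 < D := by positivity
  have hRD : R ^ 2 ≤ D := le_add_of_nonneg_right (sq_nonneg k)
  have hratio : 1 - C / R ^ 2 ≤ D / (D + C) := by
    have : C / (D + C) ≤ C / R ^ 2 := by gcongr; linarith
    rw [show D / (D + C) = 1 - C / (D + C) by field_simp; ring]
    linarith
  have hle : (2 * R + 1) / (D + C) ≤ 3 / R := by
    rw [div_le_div_iff₀ (by positivity) hRpos]
    nlinarith
  calc (1 - 3 / R) * (1 - C / R ^ 2) * 2 * (R / D)
      ≤ (1 - 3 / R) * (D / (D + C)) * 2 * (R / D) := by gcongr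
    _ = 2 * R / (D + C) * (1 - 3 / R) := by field_simp
    _ ≤ (2 * R + 1) / (D + C) * (1 - 3 / R) := by gcongr; linarith
    _ ≤ log (1 + (2 * R + 1) / (D + C)) := mul_one_sub_le_log_one_add (by positivity) hle

lemma le_sum_siteBox_latticeLap_log {C : ℝ} (hC : 0 < C) (c : Site) {R : ℕ} (hR : 3 ≤ R)
    (hCR : C ≤ (R : ℝ) ^ 2) :
    4 * π * ((1 - 3 / R) * (1 - C / (R : ℝ) ^ 2)) ≤
      ∑ x ∈ siteBox c R, latticeLap (fun y => log (smoothedDistSq C c y)) x := by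
  have hR' : (3 : ℝ) ≤ R := by exact_mod_cast hR
  have hthree : 0 ≤ 1 - 3 / (R : ℝ) := by rwa [sub_nonneg, div_le_one (by linarith)]
  have hratio : 0 ≤ 1 - C / (R : ℝ) ^ 2 := by rwa [sub_nonneg, div_le_one (by positivity)]
  rw [sum_siteBox_latticeLap_log hC]
  calc 4 * π * ((1 - 3 / R) * (1 - C / (R : ℝ) ^ 2))
      = 4 * ((1 - 3 / R) * (1 - C / (R : ℝ) ^ 2) * 2 * (π / 2)) := by ring
    _ ≤ 4 * ((1 - 3 / R) * (1 - C / (R : ℝ) ^ 2) * 2 *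
          ∑ k ∈ Finset.Icc (-(R : ℤ)) R, (R : ℝ) / ((R : ℝ) ^ 2 + (k : ℝ) ^ 2)) := by
        gcongr
        exact le_sum_div_sq_add_sq (by omega)
    _ ≤ _ := by
        rw [Finset.mul_sum]
        gcongr with k
        exact le_log_one_add_flux hC hR' k

end Flux

/-! ### Energy and harmonic averages over boxes -/

section Energy

variable {V W : Finset Site} {f : Site → ℝ}

lemma sum_sq_sub_shift (hf : ∀ x ∉ V, f x = 0) {e : Site} (hVW : V ⊆ W)
    (hW : ∀ x ∈ V, x - e ∈ W) :
    ∑ x ∈ W, (f x - f (x + e)) ^ 2 =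
      2 * ∑ x ∈ V, f x * f x - ∑ x ∈ V, f x * f (x + e) - ∑ x ∈ V, f (x - e) * f x := by
  have hW' : ∀ x ∉ W, f (x + e) = 0 := fun x hx => hf _ fun h => hx (by simpa using hW _ h)
  have hsq : ∑ x ∈ W, f x * f x = ∑ x ∈ V, f x * f x :=
    (Finset.sum_subset hVW fun x _ hx => by rw [hf x hx, zero_mul]).symm
  have hsq_shift : ∑ x ∈ W, f (x + e) * f (x + e) = ∑ x ∈ V, f x * f x := by
    calc ∑ x ∈ W, f (x + e) * f (x + e) = ∑' x, f (x + e) * f (x + e) :=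
          (tsum_eq_sum fun x hx => by rw [hW' x hx, zero_mul]).symm
      _ = ∑' x, f x * f x := (Equiv.addRight e).tsum_eq fun x => f x * f x
      _ = ∑ x ∈ V, f x * f x := tsum_eq_sum fun x hx => by rw [hf x hx, zero_mul]
  have hcross : ∑ x ∈ W, f x * f (x + e) = ∑ x ∈ V, f x * f (x + e) :=
    (Finset.sum_subset hVW fun x _ hx => by rw [hf x hx, zero_mul]).symm
  calc ∑ x ∈ W, (f x - f (x + e)) ^ 2
      = ∑ x ∈ W, f x * f x + ∑ x ∈ W, f (x + e) * f (x + e) - 2 * ∑ x ∈ W, f x * f (x + e) := by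
        rw [Finset.mul_sum, ← Finset.sum_add_distrib, ← Finset.sum_sub_distrib]
        exact Finset.sum_congr rfl fun x _ => by ring
    _ = _ := by
        rw [hsq, hsq_shift, hcross, ← sum_mul_shift hf hf e]
        ring

lemma dirichletForm_self_eq_sum_sq (hf : ∀ x ∉ V, f x = 0) (hVW : V ⊆ W)
    (hhor : ∀ x ∈ V, x - (1, 0) ∈ W) (hver : ∀ x ∈ V, x - (0, 1) ∈ W) :
    dirichletForm V f f =
      (4 * π)⁻¹ * ∑ x ∈ W, ((f x - f (x + (1, 0))) ^ 2 + (f x - f (x + (0, 1))) ^ 2) := by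
  rw [Finset.sum_add_distrib, sum_sq_sub_shift hf hVW hhor, sum_sq_sub_shift hf hVW hver,
    dirichletForm_apply]
  congr 1
  simp only [Finset.mul_sum, ← Finset.sum_sub_distrib, ← Finset.sum_add_distrib]
  refine Finset.sum_congr rfl fun x _ => ?_
  rw [latticeLap_apply]
  simp only [Prod.add_def, Prod.sub_def, add_zero, sub_zero]
  ring

lemma dirichletForm_self_nonneg (hf : ∀ x ∉ V, f x = 0) : 0 ≤ dirichletForm V f f := by
  rw [dirichletForm_self_eq_sum_sq (W := V ∪ V.image (· - (1, 0)) ∪ V.image (· - (0, 1))) hf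
    (fun x hx => by simp [hx])
    (fun x hx => Finset.mem_union_left _ (Finset.mem_union_right _ (Finset.mem_image_of_mem _ hx)))
    fun x hx => Finset.mem_union_right _ (Finset.mem_image_of_mem _ hx)]
  positivity

end Energy

section HarmonicAverage

/-- The sites of `siteBox c m` at sup-norm distance less than `m` from `c`. -/
def boxInterior (c : Site) (m : ℕ) : Finset Site :=
  Finset.Ioo (c.1 - m) (c.1 + m) ×ˢ Finset.Ioo (c.2 - m) (c.2 + m)

/-- The inner boundary of `siteBox c m`: the sites at sup-norm distance exactly `m` from `c`. -/
def boxBoundary (c : Site) (m : ℕ) : Finset Site :=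
  siteBox c m \ boxInterior c m

/-- Harmonic measure of `boxBoundary c m` seen from the centre `c`, as the Laplacian of the Green
function of the interior. -/
def harmonicMeasure (c : Site) (m : ℕ) (x : Site) : ℝ :=
  (4 * π)⁻¹ * latticeLap (green (boxInterior c m) c) x

/-- The representer, for the Dirichlet form of `V`, of the average of a function against the
harmonic measure of the box of radius `m` around `c`. -/
def boxAverageRep (V : Finset Site) (m : ℕ) (c : Site) : Site → ℝ :=
  green V c - green (boxInterior c m) c

variable {V : Finset Site} {c x : Site} {m : ℕ}

lemma mem_boxInterior : x ∈ boxInterior c m ↔ |x.1 - c.1| < (m : ℤ) ∧ |x.2 - c.2| < (m : ℤ) := by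
  simp only [boxInterior, Finset.mem_product, Finset.mem_Ioo, abs_lt]
  omega

lemma self_mem_boxInterior (c : Site) (hm : 1 ≤ m) : c ∈ boxInterior c m := by
  simp only [mem_boxInterior, sub_self, abs_zero]
  omega

lemma boxInterior_subset (c : Site) (m : ℕ) : boxInterior c m ⊆ siteBox c m := fun x hx => by
  rw [mem_boxInterior] at hx
  exact mem_siteBox.2 ⟨hx.1.le, hx.2.le⟩

lemma mem_siteBox_of_mem_latticeNbrs {y : Site} (hx : x ∈ boxInterior c m)
    (hy : y ∈ latticeNbrs x) : y ∈ siteBox c m := by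
  simp only [mem_boxInterior, mem_siteBox, abs_lt, abs_le] at hx ⊢
  rcases mem_latticeNbrs.1 hy with rfl | rfl | rfl | rfl <;> dsimp only <;> omega

lemma harmonicMeasure_nonneg (hx : x ∉ boxInterior c m) : 0 ≤ harmonicMeasure c m x := by
  have hnn := green_nonneg (boxInterior c m) c
  rw [harmonicMeasure, latticeLap_apply, green_of_notMem c hx, mul_zero, sub_zero]
  have := hnn (x.1 + 1, x.2)
  have := hnn (x.1 - 1, x.2)
  have := hnn (x.1, x.2 + 1)
  have := hnn (x.1, x.2 - 1)
  positivity

lemma latticeLap_green_boxInterior_of_notMem (hx : x ∉ siteBox c m) :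
    latticeLap (green (boxInterior c m) c) x = 0 := by
  have hzero : ∀ y, x ∈ insert y (latticeNbrs y) → green (boxInterior c m) c y = 0 := fun y hy => by
    refine green_of_notMem c fun hyc => hx ?_
    rcases Finset.mem_insert.1 hy with rfl | hy
    · exact boxInterior_subset c m hyc
    · exact mem_siteBox_of_mem_latticeNbrs hyc hy
  rw [latticeLap_apply, hzero x (Finset.mem_insert_self _ _), hzero, hzero, hzero, hzero]
  · norm_num
  all_goals exact Finset.mem_insert_of_mem (mem_latticeNbrs.2 (by simp))

lemma dirichletForm_green_boxInterior (hm : 1 ≤ m) (hV : siteBox c m ⊆ V) (g : Site → ℝ) :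
    dirichletForm V (green (boxInterior c m) c) g =
      g c - ∑ x ∈ boxBoundary c m, harmonicMeasure c m x * g x := by
  have hinterior := dirichletForm_green (self_mem_boxInterior c hm) g
  rw [dirichletForm_apply] at hinterior
  rw [dirichletForm_apply, ← Finset.sum_subset hV fun x _ hx => by
      rw [latticeLap_green_boxInterior_of_notMem hx, neg_zero, zero_mul],
    ← Finset.sum_sdiff (boxInterior_subset c m), mul_add, hinterior]
  simp only [boxBoundary, harmonicMeasure, neg_mul, Finset.sum_neg_distrib, mul_assoc,
    ← Finset.mul_sum]
  ring

lemma dirichletForm_boxAverageRep (hm : 1 ≤ m) (hV : siteBox c m ⊆ V) (g : Site → ℝ) :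
    dirichletForm V (boxAverageRep V m c) g =
      ∑ x ∈ boxBoundary c m, harmonicMeasure c m x * g x := by
  rw [boxAverageRep, map_sub, LinearMap.sub_apply, dirichletForm_green (hV (self_mem_siteBox c m)),
    dirichletForm_green_boxInterior hm hV, sub_sub_cancel]

lemma boxAverageRep_of_notMem (hV : siteBox c m ⊆ V) (hx : x ∉ V) : boxAverageRep V m c x = 0 := by
  rw [boxAverageRep, Pi.sub_apply, green_of_notMem c hx,
    green_of_notMem c fun h => hx (hV (boxInterior_subset c m h)), sub_zero]

lemma sum_harmonicMeasure (hm : 1 ≤ m) : ∑ x ∈ boxBoundary c m, harmonicMeasure c m x = 1 := by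
  set ind : Site → ℝ := fun x => if x ∈ siteBox c m then 1 else 0
  have hind : ∀ x ∉ siteBox c m, ind x = 0 := fun x hx => if_neg hx
  have hgreen : ∀ x ∉ siteBox c m, green (boxInterior c m) c x = 0 :=
    fun x hx => green_of_notMem c fun h => hx (boxInterior_subset c m h)
  -- The indicator of the box is harmonic in the interior, where the Green function lives.
  have hform : dirichletForm (siteBox c m) (green (boxInterior c m) c) ind = 0 := by
    rw [dirichletForm_comm hgreen hind, dirichletForm_apply,
      Finset.sum_eq_zero fun x _ => ?_, mul_zero]
    by_cases hx : x ∈ boxInterior c m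
    · have hone : ∀ y ∈ insert x (latticeNbrs x), ind y = 1 := fun y hy => by
        rcases Finset.mem_insert.1 hy with rfl | hy
        · exact if_pos (boxInterior_subset c m hx)
        · exact if_pos (mem_siteBox_of_mem_latticeNbrs hx hy)
      rw [latticeLap_apply, hone, hone, hone, hone, hone]
      · norm_num
      all_goals simp [mem_latticeNbrs]
    · rw [green_of_notMem c hx, mul_zero]
  rw [dirichletForm_green_boxInterior hm subset_rfl, sub_eq_zero] at hform
  rw [show ind c = 1 from if_pos (self_mem_siteBox c m)] at hform
  rw [hform]
  refine Finset.sum_congr rfl fun x hx => ?_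
  rw [show ind x = 1 from if_pos (Finset.mem_sdiff.1 hx).1, mul_one]

lemma sum_harmonicMeasure_mul_le (hm : 1 ≤ m) {g : Site → ℝ} {A : ℝ}
    (hg : ∀ x ∈ boxBoundary c m, g x ≤ A) :
    ∑ x ∈ boxBoundary c m, harmonicMeasure c m x * g x ≤ A := by
  calc ∑ x ∈ boxBoundary c m, harmonicMeasure c m x * g x
      ≤ ∑ x ∈ boxBoundary c m, harmonicMeasure c m x * A := by
        gcongr with x hx
        · exact harmonicMeasure_nonneg (Finset.mem_sdiff.1 hx).2
        · exact hg x hx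
    _ = A := by rw [← Finset.sum_mul, sum_harmonicMeasure hm, one_mul]

lemma le_sum_harmonicMeasure_mul (hm : 1 ≤ m) {g : Site → ℝ} {A : ℝ}
    (hg : ∀ x ∈ boxBoundary c m, A ≤ g x) :
    A ≤ ∑ x ∈ boxBoundary c m, harmonicMeasure c m x * g x := by
  have := sum_harmonicMeasure_mul_le hm (g := -g) fun x hx => neg_le_neg (hg x hx)
  simp only [Pi.neg_apply, mul_neg, Finset.sum_neg_distrib] at this
  linarith

lemma dirichletForm_boxAverageRep_le (hm : 1 ≤ m) (hV : siteBox c m ⊆ V) {c' : Site} {A : ℝ}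
    (hA : ∀ x ∈ boxBoundary c m, green V x c' ≤ A) :
    dirichletForm V (boxAverageRep V m c) (boxAverageRep V m c') ≤ A := by
  rw [dirichletForm_boxAverageRep hm hV]
  refine sum_harmonicMeasure_mul_le hm fun x hx => ?_
  have hsymm := hA x hx
  rw [green_comm] at hsymm
  exact (sub_le_self _ (green_nonneg _ c' x)).trans hsymm

end HarmonicAverage

/-! ### Bounds on the Green function and on the variance of harmonic averages -/

section GreenBounds

variable {n m : ℕ} {c : Site} {C : ℝ}

lemma sum_latticeLap_log_mul_green_le (hn : 1 ≤ n) (hc : c ∈ Lam n) (hC : 1 ≤ C)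
    (hCn : C ≤ (n : ℝ) ^ 2) (S : Finset Site) {z : Site} (hz : z ∈ Lam n) :
    (4 * π)⁻¹ * ∑ y ∈ S, latticeLap (fun x => log (smoothedDistSq C c x)) y * green (Lam n) y z ≤
      log (16 * (n : ℝ) ^ 2) - log (smoothedDistSq C c z) := by
  set mass := latticeLap (fun x => log (smoothedDistSq C c x)) with hmass
  set potential : Site → ℝ := (4 * π)⁻¹ • ∑ y ∈ S, mass y • green (Lam n) y with hpot
  have hpot_apply : ∀ x, potential x = (4 * π)⁻¹ * ∑ y ∈ S, mass y * green (Lam n) y x :=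
    fun x => by simp only [hpot, Pi.smul_apply, Finset.sum_apply, smul_eq_mul]
  have hlap : ∀ x ∈ Lam n, latticeLap potential x = if x ∈ S then -mass x else 0 := fun x hx => by
    simp only [hpot, map_smul, map_sum, Pi.smul_apply, Finset.sum_apply, smul_eq_mul,
      latticeLap_green _ hx, mul_ite, mul_zero, Finset.sum_ite_eq]
    split_ifs
    · field_simp
    · rfl
  rw [← hpot_apply]
  refine le_of_latticeLap_le
    (g := fun x => log (16 * (n : ℝ) ^ 2) - log (smoothedDistSq C c x)) (fun x hx => ?_)
    (fun v hv y hy hyV => ?_) hz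
  · rw [latticeLap_const_sub, ← hmass, hlap x hx]
    have : 0 ≤ mass x := latticeLap_log_smoothedDistSq_nonneg hC c x
    split_ifs <;> linarith
  · rw [hpot_apply, Finset.sum_eq_zero fun y _ => by rw [green_of_notMem _ hyV, mul_zero], mul_zero]
    exact sub_nonneg.2 (log_smoothedDistSq_le_of_mem_Lam hn (by linarith) hCn hc
      (mem_Lam_add_two_of_mem_latticeNbrs hv hy))

lemma green_sub_le_green {R : ℕ} (hn : 1 ≤ n) (hB : siteBox c m ⊆ Lam n) {z : Site}
    (hz : z ∈ Lam n) (hzc : z ∉ boxInterior c m) (hR : 1 ≤ R) (hRm : 2 * R ≤ m) {y : Site}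
    (hy : y ∈ siteBox c R) :
    green (Lam n) z c - 4 * π * log (16 * (n : ℝ) ^ 2) * (12 * R / m) ≤ green (Lam n) z y := by
  rw [mem_siteBox] at hy
  have hgrad := harmonic_sub_le (h := green (Lam n) z) (m := m) (k := R)
    (fun x y => (sub_le_self _ (green_nonneg _ z y)).trans (green_Lam_le hn hz x))
    (by exact_mod_cast hR) (by exact_mod_cast hRm) (fun x h1 h2 => ?_) hy.1 hy.2
  · push_cast at hgrad
    linarith
  · have hx : x ∈ boxInterior c m := mem_boxInterior.2 ⟨h1, h2⟩
    rw [latticeLap_green z (hB (boxInterior_subset c m hx)), if_neg]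
    rintro rfl
    exact hzc hx

-- The smoothed logarithm is a superharmonic majorant of the potential of its own Laplacian, which
-- has mass almost `4π` near `c`; the gradient estimate moves that mass to the pole.
lemma green_Lam_le_log {R : ℕ} (hn : 1 ≤ n) (hB : siteBox c m ⊆ Lam n) {z : Site} (hz : z ∈ Lam n)
    (hzc : z ∉ boxInterior c m) (hC : 1 ≤ C) (hCn : C ≤ (n : ℝ) ^ 2) (hR : 3 ≤ R)
    (hCR : C ≤ (R : ℝ) ^ 2) (hRm : 2 * R ≤ m) :
    (1 - 3 / R) * (1 - C / (R : ℝ) ^ 2) *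
        (green (Lam n) z c - 4 * π * log (16 * (n : ℝ) ^ 2) * (12 * R / m)) ≤
      log (16 * (n : ℝ) ^ 2) - log (smoothedDistSq C c z) := by
  have hc : c ∈ Lam n := hB (self_mem_siteBox c m)
  set mass := latticeLap (fun x => log (smoothedDistSq C c x))
  set low := green (Lam n) z c - 4 * π * log (16 * (n : ℝ) ^ 2) * (12 * R / m)
  rcases le_total low 0 with hlow | hlow
  · have hthree : 0 ≤ 1 - 3 / (R : ℝ) := by
      rw [sub_nonneg, div_le_one (by positivity)]
      exact_mod_cast hR
    have hratio : 0 ≤ 1 - C / (R : ℝ) ^ 2 := by rwa [sub_nonneg, div_le_one (by positivity)]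
    refine (mul_nonpos_of_nonneg_of_nonpos (mul_nonneg hthree hratio) hlow).trans ?_
    simpa using sum_latticeLap_log_mul_green_le hn hc hC hCn ∅ hz
  · calc (1 - 3 / R) * (1 - C / (R : ℝ) ^ 2) * low
        = (4 * π)⁻¹ * (4 * π * ((1 - 3 / R) * (1 - C / (R : ℝ) ^ 2)) * low) := by field_simp
      _ ≤ (4 * π)⁻¹ * ((∑ y ∈ siteBox c R, mass y) * low) := by
          gcongr
          exact le_sum_siteBox_latticeLap_log (by linarith) c hR hCR
      _ ≤ (4 * π)⁻¹ * ∑ y ∈ siteBox c R, mass y * green (Lam n) y z := by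
          rw [Finset.sum_mul]
          gcongr with y hy
          · exact latticeLap_log_smoothedDistSq_nonneg hC c y
          · rw [green_comm]
            exact green_sub_le_green hn hB hz hzc (by omega) hRm hy
      _ ≤ log (16 * (n : ℝ) ^ 2) - log (smoothedDistSq C c z) :=
          sum_latticeLap_log_mul_green_le hn hc hC hCn _ hz

/-- The positive part of `log (n² / 16) - log (|x - c|² + C)`: the test function bounding the
variance of a harmonic average from below. -/
def truncatedLog (n : ℕ) (C : ℝ) (c x : Site) : ℝ :=
  max 0 (log ((n : ℝ) ^ 2 / 16) - log (smoothedDistSq C c x))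

lemma truncatedLog_of_notMem_Lam (hn : 1 ≤ n) (hC : 0 ≤ C) (hc1 : 4 * |c.1| ≤ (n : ℤ))
    (hc2 : 4 * |c.2| ≤ (n : ℤ)) {x : Site} (hx : x ∉ Lam n) : truncatedLog n C c x = 0 := by
  have hfar : ∀ a b : ℤ, ¬2 * |a| ≤ (n : ℤ) → 4 * |b| ≤ (n : ℤ) →
      (n : ℝ) ^ 2 / 16 ≤ ((a : ℝ) - b) ^ 2 := fun a b ha hb => by
    have hint : (n : ℤ) ≤ 4 * |a - b| := by
      have := abs_sub_abs_le_abs_sub a b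
      omega
    have hreal : (n : ℝ) ≤ 4 * |(a : ℝ) - b| := by exact_mod_cast hint
    rw [← sq_abs ((a : ℝ) - b)]
    nlinarith [abs_nonneg ((a : ℝ) - b)]
  have hn' : (0 : ℝ) < n := by exact_mod_cast hn
  refine max_eq_left (sub_nonpos.2 (log_le_log (by positivity) ?_))
  rw [mem_Lam, not_and_or] at hx
  unfold smoothedDistSq
  rcases hx with hx | hx
  · linarith [hfar _ _ hx hc1, sq_nonneg ((x.2 : ℝ) - c.2)]
  · linarith [hfar _ _ hx hc2, sq_nonneg ((x.1 : ℝ) - c.1)]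

lemma neg_latticeLap_truncatedLog_mul_le (hC : 1 ≤ C) (hCn : 16 * C ≤ (n : ℝ) ^ 2) (c x : Site) :
    -latticeLap (truncatedLog n C c) x * truncatedLog n C c x ≤
      log ((n : ℝ) ^ 2 / (16 * C)) * latticeLap (fun y => log (smoothedDistSq C c y)) x := by
  have hn : 0 < (n : ℝ) ^ 2 := by linarith
  have hmass := latticeLap_log_smoothedDistSq_nonneg hC c x
  have hsup : 0 ≤ log ((n : ℝ) ^ 2 / (16 * C)) :=
    log_nonneg ((one_le_div (by positivity)).2 hCn)
  set l : Site → ℝ := fun y => log ((n : ℝ) ^ 2 / 16) - log (smoothedDistSq C c y)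
  have hle : l x ≤ log ((n : ℝ) ^ 2 / (16 * C)) := by
    rw [← div_div, log_div (by positivity) (by positivity)]
    linarith [log_le_log (by linarith) (le_smoothedDistSq C c x)]
  rcases le_total (l x) 0 with hx | hx
  · rw [show truncatedLog n C c x = 0 from max_eq_left hx, mul_zero]
    positivity
  · have hval : truncatedLog n C c x = l x := max_eq_right hx
    have hlap : -latticeLap (truncatedLog n C c) x ≤
        latticeLap (fun y => log (smoothedDistSq C c y)) x := by
      rw [neg_le, ← latticeLap_const_sub (log ((n : ℝ) ^ 2 / 16)), latticeLap_apply,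
        latticeLap_apply, hval]
      gcongr <;> exact le_max_right _ _
    rw [hval, mul_comm (log _)]
    exact mul_le_mul hlap hle hx hmass

lemma dirichletForm_truncatedLog_self_le (hC : 1 ≤ C) (hCn : 16 * C ≤ (n : ℝ) ^ 2) (c : Site) :
    dirichletForm (Lam n) (truncatedLog n C c) (truncatedLog n C c) ≤
      log ((n : ℝ) ^ 2 / (16 * C)) := by
  have hsup : 0 ≤ log ((n : ℝ) ^ 2 / (16 * C)) :=
    log_nonneg ((one_le_div (by positivity)).2 hCn)
  calc dirichletForm (Lam n) (truncatedLog n C c) (truncatedLog n C c)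
      ≤ (4 * π)⁻¹ * ∑ x ∈ Lam n, log ((n : ℝ) ^ 2 / (16 * C)) *
          latticeLap (fun y => log (smoothedDistSq C c y)) x := by
        rw [dirichletForm_apply]
        exact mul_le_mul_of_nonneg_left (Finset.sum_le_sum fun x _ =>
          neg_latticeLap_truncatedLog_mul_le hC hCn c x) (by positivity)
    _ ≤ (4 * π)⁻¹ * (log ((n : ℝ) ^ 2 / (16 * C)) * (4 * π)) := by
        rw [← Finset.mul_sum]
        gcongr
        exact sum_latticeLap_log_le hC c _
    _ = log ((n : ℝ) ^ 2 / (16 * C)) := by field_simp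

lemma log_le_truncatedLog_of_mem_siteBox (hn : 1 ≤ n) (hm : 1 ≤ m) {x : Site}
    (hx : x ∈ siteBox c m) :
    log ((n : ℝ) ^ 2 / (48 * (m : ℝ) ^ 2)) ≤ truncatedLog n ((m : ℝ) ^ 2) c x := by
  have hdist : smoothedDistSq ((m : ℝ) ^ 2) c x ≤ 3 * (m : ℝ) ^ 2 := by
    rw [mem_siteBox] at hx
    have h1 : |(x.1 : ℝ) - c.1| ≤ m := by exact_mod_cast hx.1
    have h2 : |(x.2 : ℝ) - c.2| ≤ m := by exact_mod_cast hx.2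
    unfold smoothedDistSq
    linarith [sq_le_sq' (abs_le.1 h1).1 (abs_le.1 h1).2, sq_le_sq' (abs_le.1 h2).1 (abs_le.1 h2).2]
  refine le_trans ?_ (le_max_right _ _)
  rw [show (n : ℝ) ^ 2 / (48 * (m : ℝ) ^ 2) = (n : ℝ) ^ 2 / 16 / (3 * (m : ℝ) ^ 2) by
    field_simp; norm_num, log_div (by positivity) (by positivity)]
  linarith [log_le_log (smoothedDistSq_pos (by positivity) c x) hdist]

-- Expands `0 ≤ ‖u - f‖²` in the Dirichlet form, with `f` the truncated logarithm.
lemma le_dirichletForm_boxAverageRep_self (hm : 1 ≤ m) (hmn : 4 * m ≤ n) (hc1 : 4 * |c.1| ≤ (n : ℤ))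
    (hc2 : 4 * |c.2| ≤ (n : ℤ)) (hB : siteBox c m ⊆ Lam n) :
    2 * log ((n : ℝ) ^ 2 / (48 * (m : ℝ) ^ 2)) - log ((n : ℝ) ^ 2 / (16 * (m : ℝ) ^ 2)) ≤
      dirichletForm (Lam n) (boxAverageRep (Lam n) m c) (boxAverageRep (Lam n) m c) := by
  have hm' : (1 : ℝ) ≤ (m : ℝ) ^ 2 := one_le_pow₀ (by exact_mod_cast hm)
  have hmn' : 16 * (m : ℝ) ^ 2 ≤ (n : ℝ) ^ 2 := by
    have : 4 * (m : ℝ) ≤ n := by exact_mod_cast hmn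
    nlinarith
  set u := boxAverageRep (Lam n) m c
  set f := truncatedLog n ((m : ℝ) ^ 2) c
  have hu : ∀ x ∉ Lam n, u x = 0 := fun x hx => boxAverageRep_of_notMem hB hx
  have hf : ∀ x ∉ Lam n, f x = 0 :=
    fun x hx => truncatedLog_of_notMem_Lam (by omega) (by positivity) hc1 hc2 hx
  have hsq : 0 ≤ dirichletForm (Lam n) (u - f) (u - f) :=
    dirichletForm_self_nonneg fun x hx => by rw [Pi.sub_apply, hu x hx, hf x hx, sub_zero]
  have hcross : log ((n : ℝ) ^ 2 / (48 * (m : ℝ) ^ 2)) ≤ dirichletForm (Lam n) u f := by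
    rw [dirichletForm_boxAverageRep hm hB]
    exact le_sum_harmonicMeasure_mul hm fun x hx =>
      log_le_truncatedLog_of_mem_siteBox (by omega) hm (Finset.mem_sdiff.1 hx).1
  have hff := dirichletForm_truncatedLog_self_le hm' hmn' c
  simp only [map_sub, LinearMap.sub_apply, dirichletForm_comm hf hu] at hsq
  linarith

end GreenBounds

/-! ### Gaussian measures attached to positive definite forms -/

section GaussianOfForm

open ProbabilityTheory Module

/-- A symmetric and positive definite real bilinear form. -/
structure IsPosDefForm {E : Type*} [AddCommGroup E] [Module ℝ E] (B : E →ₗ[ℝ] E →ₗ[ℝ] ℝ) :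
    Prop where
  symm : ∀ x y, B x y = B y x
  pos : ∀ x, x ≠ 0 → 0 < B x x

lemma IsPosDefForm.nonneg {E : Type*} [AddCommGroup E] [Module ℝ E] {B : E →ₗ[ℝ] E →ₗ[ℝ] ℝ}
    (hB : IsPosDefForm B) (x : E) : 0 ≤ B x x := by
  rcases eq_or_ne x 0 with rfl | hx
  · simp
  · exact (hB.pos x hx).le

variable {E : Type*} [NormedAddCommGroup E] [NormedSpace ℝ E]

/-- The unnormalised Gaussian measure with density `exp (-B x x / 2)` with respect to `ν`. -/
def gaussianWeight [MeasurableSpace E] (ν : Measure E) (B : E →ₗ[ℝ] E →ₗ[ℝ] ℝ) : Measure E :=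
  ν.withDensity fun x => ENNReal.ofReal (exp (-(B x x / 2)))

/-- The centred Gaussian probability measure whose inverse covariance is the form `B`. -/
def gaussianOfForm [MeasurableSpace E] (ν : Measure E) (B : E →ₗ[ℝ] E →ₗ[ℝ] ℝ) : Measure E :=
  (gaussianWeight ν B Set.univ)⁻¹ • gaussianWeight ν B

variable [FiniteDimensional ℝ E] {B : E →ₗ[ℝ] E →ₗ[ℝ] ℝ}

lemma continuous_form_apply (B : E →ₗ[ℝ] E →ₗ[ℝ] ℝ) (f : E) : Continuous (B f) :=
  LinearMap.continuous_of_finiteDimensional (B f)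

lemma continuous_form_self (B : E →ₗ[ℝ] E →ₗ[ℝ] ℝ) : Continuous fun x => B x x := by
  let b := finBasis ℝ E
  have expand (x : E) : B x x = ∑ i, b.coord i x * B (b i) x := by
    calc B x x = B (∑ i, b.repr x i • b i) x := by rw [b.sum_repr]
      _ = ∑ i, b.coord i x * B (b i) x := by
        simp only [map_sum, map_smul, LinearMap.sum_apply, LinearMap.smul_apply, smul_eq_mul,
          Basis.coord_apply]
  simp only [expand]
  exact continuous_finsetSum _ fun i _ =>
    (LinearMap.continuous_of_finiteDimensional (b.coord i)).mul (continuous_form_apply B (b i))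

lemma IsPosDefForm.exists_mul_norm_sq_le (hB : IsPosDefForm B) :
    ∃ c > 0, ∀ x, c * ‖x‖ ^ 2 ≤ B x x := by
  rcases subsingleton_or_nontrivial E with hE | hE
  · exact ⟨1, one_pos, fun x => by simp [Subsingleton.elim x 0]⟩
  obtain ⟨z, hz, hmin⟩ := (isCompact_sphere (0 : E) 1).exists_isMinOn
    (NormedSpace.sphere_nonempty.2 zero_le_one) (continuous_form_self B).continuousOn
  refine ⟨B z z, hB.pos z (ne_zero_of_mem_unit_sphere ⟨z, hz⟩), fun x => ?_⟩
  rcases eq_or_ne x 0 with rfl | hx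
  · simp
  have hunit : ‖x‖⁻¹ • x ∈ Metric.sphere (0 : E) 1 := by
    simp [norm_smul, norm_ne_zero_iff.2 hx]
  have hle : B z z ≤ B (‖x‖⁻¹ • x) (‖x‖⁻¹ • x) := hmin hunit
  simp only [map_smul, LinearMap.smul_apply, smul_eq_mul, ← mul_assoc] at hle
  calc B z z * ‖x‖ ^ 2 ≤ ‖x‖⁻¹ * ‖x‖⁻¹ * B x x * ‖x‖ ^ 2 := by gcongr
    _ = B x x := by field_simp

lemma IsPosDefForm.exists_eq_form (hB : IsPosDefForm B) (L : E →L[ℝ] ℝ) : ∃ f, ⇑L = B f := by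
  have hinj : Function.Injective B := (injective_iff_map_eq_zero B).2 fun x hx => by
    by_contra hne
    simpa [hx] using hB.pos x hne
  obtain ⟨f, hf⟩ := (LinearMap.injective_iff_surjective_of_finrank_eq_finrank
    (Subspace.dual_finrank_eq (K := ℝ) (V := E)).symm).1 hinj (L : E →ₗ[ℝ] ℝ)
  exact ⟨f, by rw [hf]; rfl⟩

variable [MeasurableSpace E] [BorelSpace E] {ν : Measure E} [ν.IsAddHaarMeasure]

lemma integrable_exp_neg_mul_norm_sq {c : ℝ} (hc : 0 < c) :
    Integrable (fun x : E => exp (-c * ‖x‖ ^ 2)) ν := by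
  rcases subsingleton_or_nontrivial E with hE | hE
  · have : IsFiniteMeasure ν := ⟨isCompact_univ.measure_lt_top⟩
    exact .of_finite
  · rw [integrable_fun_norm_addHaar ν (f := fun t : ℝ => exp (-c * t ^ 2))]
    simpa using integrableOn_rpow_mul_exp_neg_mul_sq hc
      (neg_one_lt_zero.trans_le (finrank ℝ E - 1 : ℕ).cast_nonneg)

lemma IsPosDefForm.integrable_density (hB : IsPosDefForm B) :
    Integrable (fun x => exp (-(B x x / 2))) ν := by
  obtain ⟨c, hc, hle⟩ := hB.exists_mul_norm_sq_le
  refine (integrable_exp_neg_mul_norm_sq (half_pos hc)).mono'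
    (continuous_exp.comp ((continuous_form_self B).div_const 2).neg).aestronglyMeasurable
    (ae_of_all _ fun x => ?_)
  rw [norm_of_nonneg (exp_pos _).le, exp_le_exp]
  linarith [hle x]

lemma gaussianWeight_univ (hB : IsPosDefForm B) :
    gaussianWeight ν B Set.univ = ENNReal.ofReal (∫ x, exp (-(B x x / 2)) ∂ν) := by
  rw [gaussianWeight, withDensity_apply _ MeasurableSet.univ, Measure.restrict_univ,
    ofReal_integral_eq_lintegral_ofReal hB.integrable_density (ae_of_all _ fun _ => (exp_pos _).le)]

lemma integral_density_pos (hB : IsPosDefForm B) : 0 < ∫ x, exp (-(B x x / 2)) ∂ν := by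
  have := NeZero.ne ν
  exact integral_exp_pos hB.integrable_density

lemma integral_gaussianOfForm (hB : IsPosDefForm B) (F : E → ℝ) :
    ∫ x, F x ∂(gaussianOfForm ν B) =
      (∫ x, exp (-(B x x / 2)) ∂ν)⁻¹ * ∫ x, exp (-(B x x / 2)) * F x ∂ν := by
  have hmeas : Measurable fun x => exp (-(B x x / 2)) :=
    (continuous_exp.comp ((continuous_form_self B).div_const 2).neg).measurable
  rw [gaussianOfForm, integral_smul_measure, gaussianWeight_univ hB, gaussianWeight,
    integral_withDensity_eq_integral_toReal_smul₀ hmeas.ennreal_ofReal.aemeasurable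
      (ae_of_all _ fun _ => ENNReal.ofReal_lt_top),
    ENNReal.toReal_inv, ENNReal.toReal_ofReal (integral_density_pos hB).le, smul_eq_mul]
  simp only [ENNReal.toReal_ofReal (exp_pos _).le, smul_eq_mul]

lemma isProbabilityMeasure_gaussianOfForm (hB : IsPosDefForm B) :
    IsProbabilityMeasure (gaussianOfForm ν B) := by
  refine ⟨?_⟩
  rw [gaussianOfForm, Measure.smul_apply, smul_eq_mul, gaussianWeight_univ hB]
  exact ENNReal.inv_mul_cancel (ENNReal.ofReal_pos.2 (integral_density_pos hB)).ne'
    ENNReal.ofReal_ne_top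

lemma integral_exp_form (hB : IsPosDefForm B) (f : E) :
    ∫ x, exp (B f x) ∂(gaussianOfForm ν B) = exp (B f f / 2) := by
  have complete_square (x : E) : exp (-(B x x / 2)) * exp (B f x) =
      exp (B f f / 2) * exp (-(B (x - f) (x - f) / 2)) := by
    rw [← exp_add, ← exp_add]
    simp only [map_sub, LinearMap.sub_apply, hB.symm x f]
    ring_nf
  simp only [integral_gaussianOfForm hB, complete_square]
  rw [integral_const_mul, integral_sub_right_eq_self (fun x => exp (-(B x x / 2))) f]
  field_simp [(integral_density_pos (ν := ν) hB).ne']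

lemma integrable_exp_form (hB : IsPosDefForm B) (f : E) :
    Integrable (fun x => exp (B f x)) (gaussianOfForm ν B) := by
  by_contra h
  have := integral_exp_form (ν := ν) hB f
  rw [integral_undef h] at this
  exact (exp_pos _).ne this

lemma map_form_gaussianOfForm (hB : IsPosDefForm B) (f : E) :
    (gaussianOfForm ν B).map (B f) = gaussianReal 0 (B f f).toNNReal := by
  have := isProbabilityMeasure_gaussianOfForm (ν := ν) hB
  have scale (t : ℝ) (x : E) : t * B f x = B (t • f) x := by simp
  have hmgf : mgf (B f) (gaussianOfForm ν B) = mgf id (gaussianReal 0 (B f f).toNNReal) := by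
    funext t
    rw [mgf_id_gaussianReal, mgf, coe_toNNReal _ (hB.nonneg f)]
    simp_rw [scale]
    rw [integral_exp_form hB]
    simp only [map_smul, LinearMap.smul_apply, smul_eq_mul]
    ring_nf
  have hset : integrableExpSet (B f) (gaussianOfForm ν B) = Set.univ := by
    ext t
    simp only [integrableExpSet, Set.mem_ofPred_eq, Set.mem_univ, iff_true]
    simp_rw [scale]
    exact integrable_exp_form hB _
  have hEq := eqOn_complexMGF_of_mgf hmgf
  rw [hset] at hEq
  rw [Measure.ext_of_complexMGF_eq (continuous_form_apply B f).measurable.aemeasurable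
    aemeasurable_id (funext fun z => hEq (by simp)), Measure.map_id]

lemma isGaussian_gaussianOfForm (hB : IsPosDefForm B) : IsGaussian (gaussianOfForm ν B) := by
  refine isGaussian_of_map_eq_gaussianReal fun L => ?_
  obtain ⟨f, hf⟩ := hB.exists_eq_form L
  exact ⟨0, (B f f).toNNReal, by rw [hf, map_form_gaussianOfForm hB f]⟩

lemma variance_form (hB : IsPosDefForm B) (f : E) :
    Var[B f; gaussianOfForm ν B] = B f f := by
  rw [← variance_id_map (continuous_form_apply B f).measurable.aemeasurable,
    map_form_gaussianOfForm hB, variance_id_gaussianReal, coe_toNNReal _ (hB.nonneg f)]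

lemma integral_form (hB : IsPosDefForm B) (f : E) : ∫ x, B f x ∂(gaussianOfForm ν B) = 0 := by
  have hmeas := (continuous_form_apply B f).measurable
  rw [← integral_map (f := fun y => y) hmeas.aemeasurable (by fun_prop),
    map_form_gaussianOfForm hB f]
  exact integral_id_gaussianReal

lemma integral_strongDual_gaussianOfForm (hB : IsPosDefForm B) (L : StrongDual ℝ E) :
    ∫ x, L x ∂(gaussianOfForm ν B) = 0 := by
  obtain ⟨f, hf⟩ := hB.exists_eq_form L
  rw [hf, integral_form hB]

lemma covariance_form (hB : IsPosDefForm B) (f g : E) :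
    cov[B f, B g; gaussianOfForm ν B] = B f g := by
  have := isGaussian_gaussianOfForm (ν := ν) hB
  have hmem (f : E) : MemLp (B f) 2 (gaussianOfForm ν B) :=
    IsGaussian.memLp_dual _ (LinearMap.toContinuousLinearMap (B f)) 2 (by norm_num)
  have hsum := variance_add (hmem f) (hmem g)
  have hvar : Var[⇑(B f) + ⇑(B g); gaussianOfForm ν B] = B (f + g) (f + g) := by
    rw [← variance_form (ν := ν) hB (f + g), map_add]
    rfl
  simp only [hvar, variance_form hB, map_add, LinearMap.add_apply, hB.symm g f] at hsum
  linarith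

end GaussianOfForm

/-! ### Exponential sums of Gaussian functionals -/

section ExpSum

open ProbabilityTheory

variable {E κ : Type*} [NormedAddCommGroup E] [NormedSpace ℝ E]

/-- The partition function `∑ c ∈ S, exp (L c x)` of a family of linear functionals. -/
def expSum (L : κ → StrongDual ℝ E) (S : Finset κ) (x : E) : ℝ := ∑ c ∈ S, exp (L c x)

/-- The Gibbs weight of the index `c` in the partition function `expSum L S x`. -/
def gibbsWeight (L : κ → StrongDual ℝ E) (S : Finset κ) (c : κ) (x : E) : ℝ :=
  exp (L c x) / expSum L S x

variable {L : κ → StrongDual ℝ E} {S : Finset κ}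

lemma expSum_pos (hS : S.Nonempty) (x : E) : 0 < expSum L S x :=
  Finset.sum_pos (fun _ _ => exp_pos _) hS

lemma continuous_expSum (L : κ → StrongDual ℝ E) (S : Finset κ) : Continuous (expSum L S) := by
  unfold expSum
  fun_prop

lemma continuous_gibbsWeight (hS : S.Nonempty) (c : κ) : Continuous (gibbsWeight L S c) :=
  (continuous_exp.comp (L c).continuous).div₀ (continuous_expSum L S) fun x => (expSum_pos hS x).ne'

lemma gibbsWeight_nonneg (L : κ → StrongDual ℝ E) (S : Finset κ) (c : κ) (x : E) :
    0 ≤ gibbsWeight L S c x :=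
  div_nonneg (exp_pos _).le (Finset.sum_nonneg fun _ _ => (exp_pos _).le)

lemma sum_gibbsWeight (hS : S.Nonempty) (x : E) : ∑ c ∈ S, gibbsWeight L S c x = 1 := by
  simp only [gibbsWeight, ← Finset.sum_div]
  exact div_self (expSum_pos hS x).ne'

lemma expSum_sq (L : κ → StrongDual ℝ E) (S : Finset κ) (x : E) :
    expSum L S x ^ 2 = ∑ c ∈ S, ∑ c' ∈ S, exp ((L c + L c') x) := by
  simp only [expSum, sq, Finset.sum_mul_sum, ← exp_add, add_apply]

section Moments

variable [MeasurableSpace E] {μ : Measure E} [IsGaussian μ]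

lemma integral_exp_strongDual (hμ : ∀ l : StrongDual ℝ E, μ[l] = 0) (l : StrongDual ℝ E) :
    ∫ x, exp (l x) ∂μ = exp (Var[l; μ] / 2) := by
  have h := mgf_gaussianReal (IsGaussian.map_eq_gaussianReal (μ := μ) l) 1
  simpa [mgf, hμ l, coe_toNNReal _ (variance_nonneg _ _)] using h

variable [BorelSpace E]

lemma memLp_two_strongDual (μ : Measure E) [IsGaussian μ] (l : StrongDual ℝ E) : MemLp l 2 μ :=
  IsGaussian.memLp_dual μ l 2 ENNReal.ofNat_ne_top

lemma integrable_exp_strongDual (μ : Measure E) [IsGaussian μ] (l : StrongDual ℝ E) :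
    Integrable (fun x => exp (l x)) μ := by
  have h := integrable_exp_mul_gaussianReal (μ := μ[l]) (v := (Var[l; μ]).toNNReal) 1
  rw [← IsGaussian.map_eq_gaussianReal l] at h
  simpa only [one_mul, Function.comp_def] using h.comp_measurable l.continuous.measurable

lemma integrable_expSum (μ : Measure E) [IsGaussian μ] (L : κ → StrongDual ℝ E) (S : Finset κ) :
    Integrable (expSum L S) μ :=
  integrable_finsetSum _ fun c _ => integrable_exp_strongDual μ (L c)

lemma integral_expSum (hμ : ∀ l : StrongDual ℝ E, μ[l] = 0) :
    ∫ x, expSum L S x ∂μ = ∑ c ∈ S, exp (Var[L c; μ] / 2) := by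
  simp only [expSum]
  rw [integral_finsetSum _ fun c _ => integrable_exp_strongDual μ (L c)]
  simp only [integral_exp_strongDual hμ]

lemma integrable_expSum_sq (μ : Measure E) [IsGaussian μ] (L : κ → StrongDual ℝ E)
    (S : Finset κ) : Integrable (fun x => expSum L S x ^ 2) μ := by
  simp only [expSum_sq]
  exact integrable_finsetSum _ fun c _ => integrable_finsetSum _ fun c' _ =>
    integrable_exp_strongDual μ (L c + L c')

lemma measure_le_expSum_le (hμ : ∀ l : StrongDual ℝ E, μ[l] = 0) {V : ℝ}
    (hV : ∀ c ∈ S, Var[L c; μ] ≤ V) {θ : ℝ} (hθ : 0 < θ) :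
    μ {x | θ ≤ expSum L S x} ≤ ENNReal.ofReal (S.card * exp (V / 2) / θ) := by
  rw [← ofReal_measureReal]
  refine ENNReal.ofReal_le_ofReal ?_
  rw [le_div_iff₀' hθ]
  calc θ * μ.real {x | θ ≤ expSum L S x} ≤ ∫ x, expSum L S x ∂μ :=
        mul_meas_ge_le_integral_of_nonneg
          (ae_of_all _ fun _ => Finset.sum_nonneg fun _ _ => (exp_pos _).le)
          (integrable_expSum μ L S) θ
    _ = ∑ c ∈ S, exp (Var[L c; μ] / 2) := integral_expSum hμ
    _ ≤ S.card • exp (V / 2) := Finset.sum_le_card_nsmul _ _ _ fun c hc =>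
        exp_le_exp.2 (by linarith [hV c hc])
    _ = S.card * exp (V / 2) := nsmul_eq_mul _ _

lemma integral_expSum_sq (hμ : ∀ l : StrongDual ℝ E, μ[l] = 0) :
    ∫ x, expSum L S x ^ 2 ∂μ = ∑ c ∈ S, ∑ c' ∈ S,
      exp (Var[L c; μ] / 2 + Var[L c'; μ] / 2 + cov[L c, L c'; μ]) := by
  simp only [expSum_sq]
  rw [integral_finsetSum _ fun c _ => integrable_finsetSum _ fun c' _ =>
    integrable_exp_strongDual μ (L c + L c')]
  refine Finset.sum_congr rfl fun c _ => ?_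
  rw [integral_finsetSum _ fun c' _ => integrable_exp_strongDual μ (L c + L c')]
  refine Finset.sum_congr rfl fun c' _ => ?_
  have hvar : Var[⇑(L c) + ⇑(L c'); μ] =
      Var[L c; μ] + 2 * cov[L c, L c'; μ] + Var[L c'; μ] :=
    variance_add (memLp_two_strongDual μ (L c)) (memLp_two_strongDual μ (L c'))
  rw [integral_exp_strongDual hμ]
  change exp (Var[⇑(L c) + ⇑(L c'); μ] / 2) = _
  rw [hvar]
  ring_nf

end Moments

section Concentration

/-- The rotation interpolation of the Maurey–Pisier argument: at a pair `(u, u')`, the Gibbs average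
at `u` of the exponentials of `(π / 2) t` times the derivatives in the direction `u'`. -/
def rotatedExpSum (L : κ → StrongDual ℝ E) (S : Finset κ) (t : ℝ) (p : E × E) : ℝ :=
  ∑ c ∈ S, gibbsWeight L S c p.1 * exp (t * (π / 2) * L c p.2)

lemma continuous_rotatedExpSum (hS : S.Nonempty) (t : ℝ) : Continuous (rotatedExpSum L S t) :=
  continuous_finsetSum _ fun c _ => ((continuous_gibbsWeight hS c).comp continuous_fst).mul
    (by fun_prop)

lemma rotatedExpSum_nonneg (L : κ → StrongDual ℝ E) (S : Finset κ) (t : ℝ) (p : E × E) :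
    0 ≤ rotatedExpSum L S t p :=
  Finset.sum_nonneg fun c _ => mul_nonneg (gibbsWeight_nonneg L S c _) (exp_pos _).le

lemma hasDerivAt_log_expSum (hS : S.Nonempty) {u : ℝ → E} {u' : E} {θ : ℝ}
    (hu : HasDerivAt u u' θ) :
    HasDerivAt (fun θ => log (expSum L S (u θ))) (∑ c ∈ S, gibbsWeight L S c (u θ) * L c u') θ := by
  have hsum : HasDerivAt (fun θ => expSum L S (u θ)) (∑ c ∈ S, exp (L c (u θ)) * L c u') θ :=
    HasDerivAt.fun_sum fun c _ => ((L c).hasFDerivAt.comp_hasDerivAt θ hu).exp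
  convert hsum.log (expSum_pos hS _).ne' using 1
  simp only [gibbsWeight, Finset.sum_div]
  exact Finset.sum_congr rfl fun c _ => by ring

lemma exp_mul_sum_gibbsWeight_le (hS : S.Nonempty) (t : ℝ) (p : E × E) :
    exp (t * (π / 2) * ∑ c ∈ S, gibbsWeight L S c p.1 * L c p.2) ≤ rotatedExpSum L S t p := by
  have hJensen := convexOn_exp.map_sum_le (t := S) (p := fun c => t * (π / 2) * L c p.2)
    (fun c _ => gibbsWeight_nonneg L S c p.1) (sum_gibbsWeight hS p.1) fun _ _ => Set.mem_univ _
  refine le_trans (le_of_eq (congrArg exp ?_)) hJensen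
  rw [Finset.mul_sum]
  exact Finset.sum_congr rfl fun c _ => by rw [smul_eq_mul]; ring

/-- The rotation of a pair of vectors by the angle `θ`; it preserves the law of two independent
copies of a centered Gaussian vector. -/
def rotatePair (θ : ℝ) (p : E × E) : E × E :=
  (cos θ • p.1 + sin θ • p.2, -sin θ • p.1 + cos θ • p.2)

lemma continuous_rotatePair_uncurry :
    Continuous fun q : (E × E) × ℝ => rotatePair q.2 q.1 := by
  unfold rotatePair
  fun_prop

lemma continuous_rotatePair (θ : ℝ) : Continuous (rotatePair (E := E) θ) := by
  unfold rotatePair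
  fun_prop

lemma continuous_rotatePair_angle (p : E × E) : Continuous fun θ => rotatePair θ p := by
  unfold rotatePair
  fun_prop

lemma hasDerivAt_rotatePair_fst (p : E × E) (θ : ℝ) :
    HasDerivAt (fun θ => (rotatePair θ p).1) (rotatePair θ p).2 θ :=
  ((hasDerivAt_cos θ).smul_const p.1).add ((hasDerivAt_sin θ).smul_const p.2)

lemma continuous_sum_gibbsWeight_rotatePair (hS : S.Nonempty) (p : E × E) :
    Continuous fun θ => ∑ c ∈ S, gibbsWeight L S c (rotatePair θ p).1 * L c (rotatePair θ p).2 :=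
  continuous_finsetSum _ fun c _ =>
    ((continuous_gibbsWeight hS c).comp (continuous_rotatePair_angle p).fst).mul
      ((L c).continuous.comp (continuous_rotatePair_angle p).snd)

lemma integral_sum_gibbsWeight_rotatePair (hS : S.Nonempty) (p : E × E) :
    ∫ θ in (0 : ℝ)..(π / 2), ∑ c ∈ S,
        gibbsWeight L S c (rotatePair θ p).1 * L c (rotatePair θ p).2 =
      log (expSum L S p.2) - log (expSum L S p.1) := by
  rw [intervalIntegral.integral_eq_sub_of_hasDerivAt
    (fun θ _ => hasDerivAt_log_expSum hS (hasDerivAt_rotatePair_fst p θ))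
    ((continuous_sum_gibbsWeight_rotatePair hS p).intervalIntegrable _ _)]
  simp [rotatePair]

lemma exp_log_expSum_sub_le (hS : S.Nonempty) (t : ℝ) (p : E × E) :
    exp (t * (log (expSum L S p.2) - log (expSum L S p.1))) ≤
      2 / π * ∫ θ in (0 : ℝ)..(π / 2), rotatedExpSum L S t (rotatePair θ p) := by
  set slope : ℝ → ℝ := fun θ => ∑ c ∈ S, gibbsWeight L S c (rotatePair θ p).1 *
    L c (rotatePair θ p).2
  have hslope : Continuous slope := continuous_sum_gibbsWeight_rotatePair hS p
  have hexp : Continuous fun θ => exp (t * (π / 2) * slope θ) := by fun_prop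
  have hJensen := convexOn_exp.map_set_average_le (μ := volume) (t := Set.Ioc 0 (π / 2))
    (f := fun θ => t * (π / 2) * slope θ) continuous_exp.continuousOn isClosed_univ
    (by simp [pi_pos]) (by simp) (by simp)
    ((hslope.const_mul _).integrableOn_Icc.mono_set Set.Ioc_subset_Icc_self)
    (hexp.integrableOn_Icc.mono_set Set.Ioc_subset_Icc_self)
  simp only [setAverage_eq, volume_real_Ioc_of_le (half_pos pi_pos).le, smul_eq_mul, sub_zero,
    ← intervalIntegral.integral_of_le (half_pos pi_pos).le, intervalIntegral.integral_const_mul,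
    slope, integral_sum_gibbsWeight_rotatePair hS] at hJensen
  calc exp (t * (log (expSum L S p.2) - log (expSum L S p.1)))
      ≤ (π / 2)⁻¹ * ∫ θ in (0 : ℝ)..(π / 2), exp (t * (π / 2) * slope θ) := by
        convert hJensen using 2
        field_simp
    _ ≤ (π / 2)⁻¹ * ∫ θ in (0 : ℝ)..(π / 2),
          rotatedExpSum L S t (rotatePair θ p) := by
        gcongr
        refine intervalIntegral.integral_mono_on (half_pos pi_pos).le
          (hexp.intervalIntegrable _ _)
          (((continuous_rotatedExpSum hS t).comp
            (continuous_rotatePair_angle p)).intervalIntegrable _ _) fun θ _ =>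
              exp_mul_sum_gibbsWeight_le hS t _
    _ = _ := by rw [inv_div]

variable [MeasurableSpace E] [BorelSpace E] {μ : Measure E} [IsGaussian μ]
  [SecondCountableTopology E] {V : ℝ}

lemma lintegral_rotatedExpSum_le (hμ : ∀ l : StrongDual ℝ E, μ[l] = 0) (hS : S.Nonempty)
    (hV : ∀ c ∈ S, Var[L c; μ] ≤ V) (t : ℝ) :
    ∫⁻ p, ENNReal.ofReal (rotatedExpSum L S t p) ∂(μ.prod μ) ≤
      ENNReal.ofReal (exp (t ^ 2 * π ^ 2 * V / 8)) := by
  rw [lintegral_prod _ (continuous_rotatedExpSum hS t).measurable.ennreal_ofReal.aemeasurable]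
  suffices h : ∀ x, ∫⁻ y, ENNReal.ofReal (rotatedExpSum L S t (x, y)) ∂μ ≤
      ENNReal.ofReal (exp (t ^ 2 * π ^ 2 * V / 8)) from (lintegral_mono h).trans_eq (by simp)
  intro x
  have expand (y : E) : rotatedExpSum L S t (x, y) =
      ∑ c ∈ S, gibbsWeight L S c x * exp (((t * (π / 2)) • L c) y) := by simp [rotatedExpSum]
  have hint (c : κ) : Integrable
      (fun y => gibbsWeight L S c x * exp (((t * (π / 2)) • L c) y)) μ :=
    (integrable_exp_strongDual μ _).const_mul _
  simp only [expand]
  rw [← ofReal_integral_eq_lintegral_ofReal (integrable_finsetSum _ fun c _ => hint c)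
    (ae_of_all _ fun y => (rotatedExpSum_nonneg L S t (x, y)).trans_eq (expand y)),
    integral_finsetSum _ fun c _ => hint c]
  refine ENNReal.ofReal_le_ofReal ?_
  calc ∑ c ∈ S, ∫ y, gibbsWeight L S c x * exp (((t * (π / 2)) • L c) y) ∂μ
      ≤ ∑ c ∈ S, gibbsWeight L S c x * exp (t ^ 2 * π ^ 2 * V / 8) := by
        refine Finset.sum_le_sum fun c hc => ?_
        rw [integral_const_mul, integral_exp_strongDual hμ]
        refine mul_le_mul_of_nonneg_left (exp_le_exp.2 ?_) (gibbsWeight_nonneg L S c x)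
        change Var[(t * (π / 2)) • ⇑(L c); μ] / 2 ≤ _
        rw [variance_smul]
        nlinarith [mul_le_mul_of_nonneg_left (hV c hc) (by positivity : 0 ≤ t ^ 2 * π ^ 2)]
    _ = exp (t ^ 2 * π ^ 2 * V / 8) := by rw [← Finset.sum_mul, sum_gibbsWeight hS, one_mul]

variable [CompleteSpace E]

lemma map_rotatePair (hμ : ∀ l : StrongDual ℝ E, μ[l] = 0) (θ : ℝ) :
    (μ.prod μ).map (rotatePair θ) = μ.prod μ := by
  have hrot : rotatePair θ = ContinuousLinearMap.rotation (E := E) θ :=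
    funext fun p => (ContinuousLinearMap.rotation_apply θ p).symm
  rw [hrot]
  exact IsGaussian.map_rotation_eq_self_of_forall_strongDual_eq_zero hμ θ

lemma lintegral_lintegral_rotatePair (hμ : ∀ l : StrongDual ℝ E, μ[l] = 0) {Φ : E × E → ℝ≥0∞}
    (hΦ : Measurable Φ) :
    ∫⁻ p, (∫⁻ θ in Set.Ioc 0 (π / 2), Φ (rotatePair θ p)) ∂(μ.prod μ) =
      ENNReal.ofReal (π / 2) * ∫⁻ p, Φ p ∂(μ.prod μ) := by
  have rotation_invariant (θ : ℝ) :
      ∫⁻ p, Φ (rotatePair θ p) ∂(μ.prod μ) = ∫⁻ p, Φ p ∂(μ.prod μ) := by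
    rw [← lintegral_map hΦ (continuous_rotatePair θ).measurable, map_rotatePair hμ]
  have hmeas : Measurable (Function.uncurry fun (p : E × E) (θ : ℝ) => Φ (rotatePair θ p)) :=
    hΦ.comp continuous_rotatePair_uncurry.measurable
  rw [lintegral_lintegral_swap hmeas.aemeasurable]
  simp only [rotation_invariant, lintegral_const, Measure.restrict_apply_univ, volume_Ioc,
    sub_zero]
  rw [mul_comm]

lemma lintegral_exp_log_expSum_sub_le (hμ : ∀ l : StrongDual ℝ E, μ[l] = 0) (hS : S.Nonempty)
    (hV : ∀ c ∈ S, Var[L c; μ] ≤ V) (t : ℝ) :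
    ∫⁻ p, ENNReal.ofReal (exp (t * (log (expSum L S p.2) - log (expSum L S p.1)))) ∂(μ.prod μ) ≤
      ENNReal.ofReal (exp (t ^ 2 * π ^ 2 * V / 8)) := by
  set Φ : E × E → ℝ≥0∞ := fun p => ENNReal.ofReal (rotatedExpSum L S t p)
  have hΦ : Measurable Φ := (continuous_rotatedExpSum hS t).measurable.ennreal_ofReal
  have pointwise (p : E × E) :
      ENNReal.ofReal (exp (t * (log (expSum L S p.2) - log (expSum L S p.1)))) ≤
        ENNReal.ofReal (2 / π) *
          ∫⁻ θ in Set.Ioc 0 (π / 2), Φ (rotatePair θ p) := by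
    have hcont : Continuous fun θ => rotatedExpSum L S t (rotatePair θ p) :=
      (continuous_rotatedExpSum hS t).comp (continuous_rotatePair_angle p)
    refine (ENNReal.ofReal_le_ofReal (exp_log_expSum_sub_le hS t p)).trans_eq ?_
    rw [intervalIntegral.integral_of_le (half_pos pi_pos).le, ENNReal.ofReal_mul (by positivity),
      ofReal_integral_eq_lintegral_ofReal
        (hcont.integrableOn_Icc.mono_set Set.Ioc_subset_Icc_self)
        (ae_of_all _ fun θ => rotatedExpSum_nonneg L S t _)]
  calc ∫⁻ p, ENNReal.ofReal (exp (t * (log (expSum L S p.2) - log (expSum L S p.1)))) ∂(μ.prod μ)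
      ≤ ∫⁻ p, (ENNReal.ofReal (2 / π) *
          ∫⁻ θ in Set.Ioc 0 (π / 2), Φ (rotatePair θ p)) ∂(μ.prod μ) := lintegral_mono pointwise
    _ = ∫⁻ p, Φ p ∂(μ.prod μ) := by
        rw [lintegral_const_mul' _ _ ENNReal.ofReal_ne_top, lintegral_lintegral_rotatePair hμ hΦ,
          ← mul_assoc, ← ENNReal.ofReal_mul (by positivity),
          show 2 / π * (π / 2) = 1 by field_simp, ENNReal.ofReal_one, one_mul]
    _ ≤ ENNReal.ofReal (exp (t ^ 2 * π ^ 2 * V / 8)) := lintegral_rotatedExpSum_le hμ hS hV t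

lemma measure_log_expSum_le_mul_measure_le_log_expSum_le (hμ : ∀ l : StrongDual ℝ E, μ[l] = 0)
    (hS : S.Nonempty) (hV : ∀ c ∈ S, Var[L c; μ] ≤ V) {t : ℝ} (ht : 0 ≤ t) (a b : ℝ) :
    μ {x | log (expSum L S x) ≤ a} * μ {x | b ≤ log (expSum L S x)} ≤
      ENNReal.ofReal (exp (t ^ 2 * π ^ 2 * V / 8 - t * (b - a))) := by
  have hlog : Continuous fun x => log (expSum L S x) :=
    (continuous_expSum L S).log fun x => (expSum_pos hS x).ne'
  have hmeas : Measurable fun p : E × E =>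
      ENNReal.ofReal (exp (t * (log (expSum L S p.2) - log (expSum L S p.1)))) :=
    (continuous_exp.comp (((hlog.comp continuous_snd).sub
      (hlog.comp continuous_fst)).const_mul t)).measurable.ennreal_ofReal
  have hsub : ({x | log (expSum L S x) ≤ a} ×ˢ {x | b ≤ log (expSum L S x)} : Set (E × E)) ⊆
      {p | ENNReal.ofReal (exp (t * (b - a))) ≤
        ENNReal.ofReal (exp (t * (log (expSum L S p.2) - log (expSum L S p.1))))} := by
    rintro p ⟨ha, hb⟩
    exact ENNReal.ofReal_le_ofReal (exp_le_exp.2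
      (mul_le_mul_of_nonneg_left (sub_le_sub hb ha) ht))
  rw [← Measure.prod_prod, exp_sub, ENNReal.ofReal_div_of_pos (exp_pos _)]
  refine (measure_mono hsub).trans ((meas_ge_le_lintegral_div hmeas.aemeasurable
    (ENNReal.ofReal_pos.2 (exp_pos _)).ne' ENNReal.ofReal_ne_top).trans ?_)
  exact ENNReal.div_le_div_right (lintegral_exp_log_expSum_sub_le hμ hS hV t) _

end Concentration

end ExpSum

/-! ### Lower bounds for exponential sums in the `L²` regime -/

section PaleyZygmund

lemma sub_half_le_sq_div_add {z a u : ℝ} (ha : 0 ≤ a) (hu : 0 < u) :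
    z - a / 2 ≤ z ^ 2 / (2 * u) + u / 2 * (if a / 2 ≤ z then 1 else 0) := by
  split_ifs with h
  · have hsq : z ^ 2 / (2 * u) + u / 2 - z = (z - u) ^ 2 / (2 * u) := by
      field_simp
      ring
    have : 0 ≤ (z - u) ^ 2 / (2 * u) := by positivity
    linarith
  · have : 0 ≤ z ^ 2 / (2 * u) := by positivity
    linarith

lemma one_div_le_measureReal_half_integral_le {Ω : Type*} [MeasurableSpace Ω] {μ : Measure Ω}
    [IsProbabilityMeasure μ] {Z : Ω → ℝ} (hmeas : Measurable Z) (hZ : Integrable Z μ)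
    (hZ2 : Integrable (fun x => Z x ^ 2) μ) (hpos : 0 < ∫ x, Z x ∂μ) {K : ℝ} (hK : 0 < K)
    (hle : ∫ x, Z x ^ 2 ∂μ ≤ K * (∫ x, Z x ∂μ) ^ 2) :
    1 / (4 * K) ≤ μ.real {x | (∫ y, Z y ∂μ) / 2 ≤ Z x} := by
  set a := ∫ x, Z x ∂μ
  set A := {x | a / 2 ≤ Z x}
  have hA : MeasurableSet A := measurableSet_le measurable_const hmeas
  have hind : Integrable (A.indicator (1 : Ω → ℝ)) μ := (integrable_const (1 : ℝ)).indicator hA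
  have hint : ∫ x, (Z x - a / 2) ∂μ ≤
      ∫ x, (Z x ^ 2 / (2 * (2 * K * a)) + 2 * K * a / 2 * A.indicator 1 x) ∂μ := by
    refine integral_mono (hZ.sub (integrable_const _))
      ((hZ2.div_const _).add (hind.const_mul _)) fun x => ?_
    simpa [A, Set.indicator_apply] using
      sub_half_le_sq_div_add (z := Z x) hpos.le (by positivity : 0 < 2 * K * a)
  rw [integral_sub hZ (integrable_const _), integral_add (hZ2.div_const _) (hind.const_mul _),
    integral_const_mul, integral_indicator_one hA, integral_div (2 * (2 * K * a)), integral_const,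
    probReal_univ, one_smul] at hint
  have hsecond : (∫ x, Z x ^ 2 ∂μ) / (2 * (2 * K * a)) ≤ a / 4 := by
    rw [div_le_iff₀ (by positivity)]
    linarith
  rw [div_le_iff₀ (by positivity)]
  have : a * 1 ≤ a * (μ.real A * (4 * K)) := by
    change a - a / 2 ≤ _ at hint
    linarith
  exact le_of_mul_le_mul_left this hpos

end PaleyZygmund

section LowerTail

open ProbabilityTheory

variable {E κ : Type*} [NormedAddCommGroup E] [NormedSpace ℝ E] [MeasurableSpace E] [BorelSpace E]
  {μ : Measure E} [IsGaussian μ] {L : κ → StrongDual ℝ E} {S : Finset κ}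

lemma card_mul_exp_le_integral_expSum (hμ : ∀ l : StrongDual ℝ E, μ[l] = 0) {a : ℝ}
    (ha : ∀ c ∈ S, a ≤ Var[L c; μ]) : S.card * exp (a / 2) ≤ ∫ x, expSum L S x ∂μ := by
  rw [integral_expSum hμ, ← nsmul_eq_mul]
  exact Finset.card_nsmul_le_sum _ _ _ fun c hc => exp_le_exp.2 (by linarith [ha c hc])

lemma integral_expSum_sq_le (hμ : ∀ l : StrongDual ℝ E, μ[l] = 0) {a b K : ℝ}
    (ha : ∀ c ∈ S, a ≤ Var[L c; μ]) (hb : ∀ c ∈ S, Var[L c; μ] ≤ b)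
    (hsum : ∑ c ∈ S, ∑ c' ∈ S, exp (cov[L c, L c'; μ]) ≤ S.card ^ 2 * K) (hK : 0 ≤ K) :
    ∫ x, expSum L S x ^ 2 ∂μ ≤ K * exp (b - a) * (∫ x, expSum L S x ∂μ) ^ 2 :=
  calc ∫ x, expSum L S x ^ 2 ∂μ
      = ∑ c ∈ S, ∑ c' ∈ S, exp (Var[L c; μ] / 2 + Var[L c'; μ] / 2 + cov[L c, L c'; μ]) :=
        integral_expSum_sq hμ
    _ ≤ ∑ c ∈ S, ∑ c' ∈ S, exp b * exp (cov[L c, L c'; μ]) :=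
        Finset.sum_le_sum fun c hc => Finset.sum_le_sum fun c' hc' => by
          rw [← exp_add]
          exact exp_le_exp.2 (by linarith [hb c hc, hb c' hc'])
    _ = exp b * ∑ c ∈ S, ∑ c' ∈ S, exp (cov[L c, L c'; μ]) := by simp only [Finset.mul_sum]
    _ ≤ exp b * (S.card ^ 2 * K) := mul_le_mul_of_nonneg_left hsum (exp_pos b).le
    _ = K * exp (b - a) * (S.card * exp (a / 2)) ^ 2 := by
        have : exp b = exp (b - a) * (exp (a / 2)) ^ 2 := by
          rw [← exp_nat_mul, ← exp_add]
          congr 1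
          push_cast
          ring
        rw [this]
        ring
    _ ≤ K * exp (b - a) * (∫ x, expSum L S x ∂μ) ^ 2 := by
        have := card_mul_exp_le_integral_expSum hμ ha
        gcongr

variable [CompleteSpace E] [SecondCountableTopology E]

lemma measure_expSum_le_exp_neg_mul_integral_le (hμ : ∀ l : StrongDual ℝ E, μ[l] = 0)
    (hS : S.Nonempty) {V : ℝ} (hV : ∀ c ∈ S, Var[L c; μ] ≤ V) {K : ℝ} (hK : 0 < K)
    (hle : ∫ x, expSum L S x ^ 2 ∂μ ≤ K * (∫ x, expSum L S x ∂μ) ^ 2) {t : ℝ} (ht : 0 ≤ t) (r : ℝ) :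
    μ {x | expSum L S x ≤ exp (-r) * ((∫ y, expSum L S y ∂μ) / 2)} ≤
      ENNReal.ofReal (4 * K * exp (t ^ 2 * π ^ 2 * V / 8 - t * r)) := by
  set a := ∫ y, expSum L S y ∂μ
  have ha : 0 < a := by
    rw [show a = _ from integral_expSum hμ]
    exact Finset.sum_pos (fun c _ => exp_pos _) hS
  have hlow : {x | expSum L S x ≤ exp (-r) * (a / 2)} ⊆
      {x | log (expSum L S x) ≤ log (a / 2) - r} := fun x hx => by
    refine (log_le_log (expSum_pos hS x) hx).trans_eq ?_
    rw [log_mul (exp_pos _).ne' (by positivity), log_exp]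
    ring
  have hhigh : ENNReal.ofReal (1 / (4 * K)) ≤ μ {x | log (a / 2) ≤ log (expSum L S x)} := by
    rw [← ofReal_measureReal]
    exact ENNReal.ofReal_le_ofReal ((one_div_le_measureReal_half_integral_le
      (continuous_expSum L S).measurable (integrable_expSum μ L S) (integrable_expSum_sq μ L S)
      ha hK hle).trans (measureReal_mono fun x hx => log_le_log (by positivity) hx))
  have hconc := measure_log_expSum_le_mul_measure_le_log_expSum_le hμ hS hV ht
    (log (a / 2) - r) (log (a / 2))
  rw [sub_sub_cancel] at hconc
  refine (measure_mono hlow).trans ?_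
  set P := μ {x | log (expSum L S x) ≤ log (a / 2) - r}
  calc P = P * ENNReal.ofReal (1 / (4 * K)) * ENNReal.ofReal (4 * K) := by
        rw [mul_assoc, ← ENNReal.ofReal_mul (by positivity),
          one_div_mul_cancel (by positivity), ENNReal.ofReal_one, mul_one]
    _ ≤ ENNReal.ofReal (exp (t ^ 2 * π ^ 2 * V / 8 - t * r)) * ENNReal.ofReal (4 * K) := by
        gcongr
        exact (mul_le_mul_right hhigh P).trans hconc
    _ = ENNReal.ofReal (4 * K * exp (t ^ 2 * π ^ 2 * V / 8 - t * r)) := by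
        rw [← ENNReal.ofReal_mul (exp_pos _).le, mul_comm]

lemma measure_expSum_le_le (hμ : ∀ l : StrongDual ℝ E, μ[l] = 0) (hS : S.Nonempty)
    {ℓ w η ρ : ℝ} (hℓ : 0 ≤ ℓ) (hη : 0 ≤ η) (hη1 : η ≤ 1) (hρ : 0 ≤ ρ) (hηρ : 100 * η ≤ ρ ^ 2)
    (hw : w ≤ 2) (hlo : ∀ c ∈ S, (w - η) * ℓ ≤ Var[L c; μ])
    (hup : ∀ c ∈ S, Var[L c; μ] ≤ (w + η) * ℓ)
    (hsum : ∑ c ∈ S, ∑ c' ∈ S, exp (cov[L c, L c'; μ]) ≤ S.card ^ 2 * exp (η * ℓ)) :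
    μ {x | expSum L S x ≤ S.card * exp ((w / 2 - η - ρ) * ℓ) / 2} ≤
      ENNReal.ofReal (4 * exp (-(η * ℓ))) := by
  have hsq := integral_expSum_sq_le hμ hlo hup hsum (exp_pos _).le
  have hsub : {x | expSum L S x ≤ S.card * exp ((w / 2 - η - ρ) * ℓ) / 2} ⊆
      {x | expSum L S x ≤ exp (-(ρ * ℓ)) * ((∫ y, expSum L S y ∂μ) / 2)} := by
    refine Set.ofPred_subset_ofPred.2 fun x hx => hx.trans ?_
    calc S.card * exp ((w / 2 - η - ρ) * ℓ) / 2
        ≤ S.card * exp (-(ρ * ℓ) + (w - η) * ℓ / 2) / 2 := by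
          gcongr
          linarith [mul_nonneg hη hℓ]
      _ = exp (-(ρ * ℓ)) * (S.card * exp ((w - η) * ℓ / 2) / 2) := by
          rw [exp_add]
          ring
      _ ≤ exp (-(ρ * ℓ)) * ((∫ y, expSum L S y ∂μ) / 2) := by
          have := card_mul_exp_le_integral_expSum hμ hlo
          gcongr
  refine (measure_mono hsub).trans ((measure_expSum_le_exp_neg_mul_integral_le hμ hS hup
    (by positivity) hsq (t := ρ / 10) (by positivity) (ρ * ℓ)).trans
      (ENNReal.ofReal_le_ofReal ?_))
  rw [mul_assoc, mul_assoc, ← exp_add, ← exp_add]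
  gcongr
  have hpi : π ^ 2 * (w + η) ≤ 30 := by
    have : π ^ 2 ≤ 10 := by nlinarith [pi_lt_d2, pi_pos]
    nlinarith [sq_nonneg π]
  have hvar : (ρ / 10) ^ 2 * π ^ 2 * ((w + η) * ℓ) / 8 ≤ ρ ^ 2 * ℓ / 800 * 30 :=
    calc _ = ρ ^ 2 * ℓ / 800 * (π ^ 2 * (w + η)) := by ring
      _ ≤ _ := by gcongr
  nlinarith [mul_le_mul_of_nonneg_right hηρ hℓ]

end LowerTail

/-! ### Counting indices with values in a window -/

section Window

open Matrix ProbabilityTheory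

variable {ι : Type*} [Fintype ι]

variable {E κ : Type*} [NormedAddCommGroup E] [NormedSpace ℝ E]

/-- The functionals `∑ i, γ i • h c i`, pairing each vector `(h c i)_i` with the direction `γ`. -/
def pairing (h : κ → ι → StrongDual ℝ E) (γ : ι → ℝ) (c : κ) : StrongDual ℝ E := ∑ i, γ i • h c i

lemma pairing_apply (h : κ → ι → StrongDual ℝ E) (γ : ι → ℝ) (c : κ) (x : E) :
    pairing h γ c x = γ ⬝ᵥ fun i => h c i x := by
  simp [pairing, dotProduct]

/-- The pairs `(i, ±τ)`, each encoding the perturbation of a vector by `±τ` in the direction `i`. -/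
def coordShifts (ι : Type*) [Fintype ι] (τ : ℝ) : Finset (ι × ℝ) := Finset.univ ×ˢ {τ, -τ}

lemma card_coordShifts_le (τ : ℝ) : (coordShifts ι τ).card ≤ 2 * Fintype.card ι := by
  rw [coordShifts, Finset.card_product, Finset.card_univ, mul_comm]
  gcongr
  exact Finset.card_le_two

lemma sum_abs_le_card {γ : ι → ℝ} (hγ : γ ⬝ᵥ γ ≤ 1) : ∑ i, |γ i| ≤ Fintype.card ι := by
  suffices h : ∀ i, |γ i| ≤ 1 by
    simpa using Finset.sum_le_card_nsmul Finset.univ _ 1 fun i _ => h i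
  intro i
  have : γ i * γ i ≤ γ ⬝ᵥ γ :=
    Finset.single_le_sum (f := fun i => γ i * γ i) (fun i _ => mul_self_nonneg _)
      (Finset.mem_univ i)
  exact abs_le_one_iff_mul_self_le_one.2 (this.trans hγ)

lemma dotProduct_le_of_abs_sub_lt {γ m x : ι → ℝ} {a : ℝ} (h : ∀ i, |x i - m i| < a) :
    γ ⬝ᵥ x ≤ γ ⬝ᵥ m + a * ∑ i, |γ i| := by
  rw [← sub_le_iff_le_add', ← dotProduct_sub, Finset.mul_sum]
  refine Finset.sum_le_sum fun i _ => (le_abs_self _).trans ?_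
  rw [abs_mul, mul_comm, Pi.sub_apply]
  exact mul_le_mul_of_nonneg_right (h i).le (abs_nonneg _)

variable [DecidableEq ι]

lemma exp_dotProduct_le {γ m x : ι → ℝ} {a τ : ℝ} (hτ : 0 ≤ τ) :
    exp (γ ⬝ᵥ x) ≤ (if ∀ i, |x i - m i| < a then exp (γ ⬝ᵥ m + a * ∑ i, |γ i|) else 0) +
      ∑ p ∈ coordShifts ι τ,
        exp (-(p.2 * m p.1 + τ * a)) * exp ((γ + Pi.single p.1 p.2) ⬝ᵥ x) := by
  split_ifs with h
  · exact (exp_le_exp.2 (dotProduct_le_of_abs_sub_lt h)).trans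
      (le_add_of_nonneg_right (Finset.sum_nonneg fun _ _ => by positivity))
  rw [zero_add]
  suffices hex : ∃ p ∈ coordShifts ι τ, τ * a ≤ p.2 * (x p.1 - m p.1) by
    obtain ⟨p, hp, hpa⟩ := hex
    refine le_trans ?_ (Finset.single_le_sum (fun _ _ => by positivity) hp)
    rw [← exp_add, add_dotProduct, single_dotProduct]
    exact exp_le_exp.2 (by linarith)
  push Not at h
  obtain ⟨i, hi⟩ := h
  rcases le_abs.1 hi with hi | hi
  · exact ⟨(i, τ), by simp [coordShifts], mul_le_mul_of_nonneg_left hi hτ⟩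
  · exact ⟨(i, -τ), by simp [coordShifts],
      (mul_le_mul_of_nonneg_left hi hτ).trans_eq (neg_mul_comm τ _).symm⟩

lemma expSum_pairing_le (h : κ → ι → StrongDual ℝ E) (S : Finset κ) (γ m : ι → ℝ) (a : ℝ) {τ : ℝ}
    (hτ : 0 ≤ τ) (x : E) :
    expSum (pairing h γ) S x ≤
      {c ∈ S | ∀ i, |h c i x - m i| < a}.card * exp (γ ⬝ᵥ m + a * ∑ i, |γ i|) +
        ∑ p ∈ coordShifts ι τ, exp (-(p.2 * m p.1 + τ * a)) *
          expSum (pairing h (γ + Pi.single p.1 p.2)) S x := by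
  simp only [expSum, pairing_apply, Finset.mul_sum (s := S)]
  rw [Finset.sum_comm (s := coordShifts ι τ), ← nsmul_eq_mul, ← Finset.sum_const,
    Finset.sum_filter, ← Finset.sum_add_distrib]
  exact Finset.sum_le_sum fun c _ => exp_dotProduct_le hτ

section Deterministic

variable {h : κ → ι → StrongDual ℝ E} {S : Finset κ} {γ : ι → ℝ} {ℓ v δ η : ℝ}

lemma sum_shifted_expSum_le {m : ι → ℝ} {a τ W : ℝ} (hW : 0 ≤ W) {x : E}
    (hupp : ∀ p ∈ coordShifts ι τ, expSum (pairing h (γ + Pi.single p.1 p.2)) S x ≤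
      W * exp (p.2 * m p.1 + τ * a) / (8 * Fintype.card ι)) :
    ∑ p ∈ coordShifts ι τ, exp (-(p.2 * m p.1 + τ * a)) *
      expSum (pairing h (γ + Pi.single p.1 p.2)) S x ≤ W / 4 :=
  calc _ ≤ (coordShifts ι τ).card • (W / (8 * Fintype.card ι)) := by
        refine Finset.sum_le_card_nsmul _ _ _ fun p hp =>
          (mul_le_mul_of_nonneg_left (hupp p hp) (exp_pos _).le).trans_eq ?_
        rw [mul_div_assoc', mul_left_comm, ← exp_add, neg_add_cancel, exp_zero, mul_one]
    _ ≤ (2 * Fintype.card ι : ℕ) • (W / (8 * Fintype.card ι)) :=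
        nsmul_le_nsmul_left (by positivity) (card_coordShifts_le _)
    _ ≤ W / 4 := by
        rw [nsmul_eq_mul, Nat.cast_mul, Nat.cast_ofNat]
        rcases eq_or_ne (Fintype.card ι : ℝ) 0 with hι | hι
        · rw [hι, mul_zero, zero_mul]
          positivity
        · exact le_of_eq (by field_simp; ring)

lemma lt_card_window_of_expSum_bounds (hℓ : 0 ≤ ℓ) (hv : 0 ≤ v) (hδ : 0 < δ) (hδ1 : δ ≤ 1)
    (hη : 25600 * η ≤ δ ^ 4) (hγ : γ ⬝ᵥ γ ≤ 1) {x : E}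
    (hlow : S.card * exp ((γ ⬝ᵥ γ * v / 2 - η - δ ^ 2 / 16) * ℓ) / 2 < expSum (pairing h γ) S x)
    (hupp : ∀ p ∈ coordShifts ι (δ / 2), expSum (pairing h (γ + Pi.single p.1 p.2)) S x ≤
      S.card * exp ((γ ⬝ᵥ γ * v / 2 - η - δ ^ 2 / 16) * ℓ) *
        exp (p.2 * (v * γ p.1 * ℓ) + δ / 2 * (δ * ℓ)) / (8 * Fintype.card ι)) :
    S.card * exp (-((v / 2 + (Fintype.card ι + 1) * δ) * ℓ)) / 4 <
      {c ∈ S | ∀ i, |h c i x - v * γ i * ℓ| < δ * ℓ}.card := by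
  set g := γ ⬝ᵥ γ
  set W := S.card * exp ((g * v / 2 - η - δ ^ 2 / 16) * ℓ) with hW
  set M := ({c ∈ S | ∀ i, |h c i x - v * γ i * ℓ| < δ * ℓ}.card : ℝ)
  have hcount : W / 4 < M * exp ((g * v + Fintype.card ι * δ) * ℓ) := by
    have hdecomp := expSum_pairing_le h S γ (fun i => v * γ i * ℓ) (δ * ℓ) (half_pos hδ).le x
    have hshift := sum_shifted_expSum_le (m := fun i => v * γ i * ℓ) (by positivity) hupp
    have hdot : γ ⬝ᵥ (fun i => v * γ i * ℓ) = g * v * ℓ := by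
      simp only [g, dotProduct, Finset.sum_mul]
      exact Finset.sum_congr rfl fun i _ => by ring
    have : M * exp (γ ⬝ᵥ (fun i => v * γ i * ℓ) + δ * ℓ * ∑ i, |γ i|) ≤
        M * exp ((g * v + Fintype.card ι * δ) * ℓ) := by
      refine mul_le_mul_of_nonneg_left (exp_le_exp.2 ?_) (Nat.cast_nonneg _)
      linarith [mul_le_mul_of_nonneg_left (sum_abs_le_card hγ) (mul_nonneg hδ.le hℓ)]
    linarith
  have hrate : g * v - v / 2 - δ ≤ g * v / 2 - η - δ ^ 2 / 16 := by
    have : δ ^ 4 ≤ δ := pow_le_of_le_one hδ.le hδ1 (by norm_num)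
    have : δ ^ 2 ≤ δ := pow_le_of_le_one hδ.le hδ1 (by norm_num)
    linarith [mul_le_of_le_one_left hv hγ]
  refine lt_of_mul_lt_mul_right (lt_of_le_of_lt ?_ hcount) (exp_pos _).le
  calc S.card * exp (-((v / 2 + (Fintype.card ι + 1) * δ) * ℓ)) / 4 *
        exp ((g * v + Fintype.card ι * δ) * ℓ)
      = S.card * exp ((g * v - v / 2 - δ) * ℓ) / 4 := by
        rw [div_mul_eq_mul_div, mul_assoc, ← exp_add]
        congr 3
        ring
    _ ≤ W / 4 := by
        rw [hW]
        gcongr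

end Deterministic

variable [MeasurableSpace E] [BorelSpace E] {μ : Measure E} [IsGaussian μ]
  {h : κ → ι → StrongDual ℝ E} {G : κ → κ → ℝ} {S : Finset κ} {γ : ι → ℝ} {ℓ v δ η : ℝ}

lemma covariance_pairing {c c' : κ} {a : ℝ}
    (hcov : ∀ i j, cov[h c i, h c' j; μ] = if i = j then a else 0) (γ γ' : ι → ℝ) :
    cov[pairing h γ c, pairing h γ' c'; μ] = γ ⬝ᵥ γ' * a := by
  have hL (c : κ) (i : ι) : MemLp (h c i) 2 μ := memLp_two_strongDual μ _
  have hcoe (γ : ι → ℝ) (c : κ) : ⇑(pairing h γ c) = ∑ i, γ i • ⇑(h c i) := by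
    ext x
    simp [pairing]
  rw [hcoe, hcoe, covariance_sum_sum (fun i => (hL c i).const_smul _)
    fun i => (hL c' i).const_smul _]
  simp only [covariance_smul_left, covariance_smul_right, hcov, mul_ite, mul_zero,
    Finset.sum_ite_eq, Finset.mem_univ, if_true, dotProduct, Finset.sum_mul]
  exact Finset.sum_congr rfl fun i _ => by ring

lemma variance_pairing {c : κ} {a : ℝ}
    (hcov : ∀ i j, cov[h c i, h c j; μ] = if i = j then a else 0) (γ : ι → ℝ) :
    Var[pairing h γ c; μ] = γ ⬝ᵥ γ * a := by
  rw [← covariance_self (pairing h γ c).continuous.measurable.aemeasurable,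
    covariance_pairing hcov]

lemma measure_le_expSum_pairing_shift_le (hμ : ∀ l : StrongDual ℝ E, μ[l] = 0) (hS : S.Nonempty)
    (hcov : ∀ c ∈ S, ∀ c' ∈ S, ∀ i j, cov[h c i, h c' j; μ] = if i = j then G c c' else 0)
    (hℓ : 0 ≤ ℓ) (hv : v ≤ 2) (hδ : 0 < δ) (hδ1 : δ ≤ 1) (hη0 : 0 ≤ η) (hη : 25600 * η ≤ δ ^ 4)
    (hG : ∀ c ∈ S, G c c ≤ (v + η) * ℓ) (hγ : γ ⬝ᵥ γ ≤ 1) {p : ι × ℝ}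
    (hp : p ∈ coordShifts ι (δ / 2)) :
    μ {x | S.card * exp ((γ ⬝ᵥ γ * v / 2 - η - δ ^ 2 / 16) * ℓ) *
        exp (p.2 * (v * γ p.1 * ℓ) + δ / 2 * (δ * ℓ)) / (8 * Fintype.card ι) ≤
          expSum (pairing h (γ + Pi.single p.1 p.2)) S x} ≤
      ENNReal.ofReal (8 * Fintype.card ι * exp (-(η * ℓ))) := by
  obtain ⟨i, t⟩ := p
  have : Nonempty ι := ⟨i⟩
  have ht : t ^ 2 = δ ^ 2 / 4 := by
    rcases by simpa [coordShifts] using hp with rfl | rfl <;> ring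
  set g := γ ⬝ᵥ γ
  set q := (γ + Pi.single i t) ⬝ᵥ (γ + Pi.single i t)
  have hq0 : 0 ≤ q := Finset.sum_nonneg fun _ _ => mul_self_nonneg _
  have hq : q = g + 2 * (t * γ i) + t ^ 2 := by
    simp only [q, g, add_dotProduct, dotProduct_add, single_dotProduct, dotProduct_single,
      Pi.add_apply, Pi.single_eq_same]
    ring
  have hq4 : q ≤ 4 := by
    have : γ i * γ i ≤ g := Finset.single_le_sum (f := fun i => γ i * γ i)
      (fun i _ => mul_self_nonneg _) (Finset.mem_univ i)
    nlinarith [sq_nonneg (t - γ i)]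
  refine (measure_le_expSum_le hμ (V := q * ((v + η) * ℓ)) (fun c hc => ?_)
    (by positivity)).trans (ENNReal.ofReal_le_ofReal ?_)
  · rw [variance_pairing (hcov c hc c hc)]
    exact mul_le_mul_of_nonneg_left (hG c hc) hq0
  set X := (g * v / 2 - η - δ ^ 2 / 16) * ℓ
  set Y := t * (v * γ i * ℓ) + δ / 2 * (δ * ℓ)
  have hexp : q * ((v + η) * ℓ) / 2 - (X + Y) ≤ -(η * ℓ) := by
    have hrate : δ ^ 2 / 8 * v - δ ^ 2 / 2 + η + δ ^ 2 / 16 + q * η / 2 ≤ -η := by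
      have : δ ^ 4 ≤ δ ^ 2 := pow_le_pow_of_le_one hδ.le hδ1 (by norm_num)
      nlinarith [mul_le_mul_of_nonneg_right hq4 hη0]
    calc q * ((v + η) * ℓ) / 2 - (X + Y)
        = (δ ^ 2 / 8 * v - δ ^ 2 / 2 + η + δ ^ 2 / 16 + q * η / 2) * ℓ := by
          linear_combination (v * ℓ / 2) * hq + (v * ℓ / 2) * ht
      _ ≤ -η * ℓ := mul_le_mul_of_nonneg_right hrate hℓ
      _ = -(η * ℓ) := neg_mul _ _
  clear_value X Y
  calc S.card * exp (q * ((v + η) * ℓ) / 2) / (S.card * exp X * exp Y / (8 * Fintype.card ι))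
      = 8 * Fintype.card ι * exp (q * ((v + η) * ℓ) / 2 - (X + Y)) := by
        rw [exp_sub, exp_add]
        field_simp
    _ ≤ 8 * Fintype.card ι * exp (-(η * ℓ)) := by gcongr

variable [CompleteSpace E] [SecondCountableTopology E]

lemma measure_expSum_pairing_le_le (hμ : ∀ l : StrongDual ℝ E, μ[l] = 0) (hS : S.Nonempty)
    (hcov : ∀ c ∈ S, ∀ c' ∈ S, ∀ i j, cov[h c i, h c' j; μ] = if i = j then G c c' else 0)
    (hℓ : 0 ≤ ℓ) (hv0 : 0 ≤ v) (hv2 : v ≤ 2) (hδ : 0 < δ) (hδ1 : δ ≤ 1) (hη0 : 0 ≤ η)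
    (hη : 25600 * η ≤ δ ^ 4) (hlo : ∀ c ∈ S, (v - η) * ℓ ≤ G c c)
    (hup : ∀ c ∈ S, G c c ≤ (v + η) * ℓ) (hγ : γ ⬝ᵥ γ ≤ 1)
    (hsum : ∑ c ∈ S, ∑ c' ∈ S, exp (γ ⬝ᵥ γ * G c c') ≤ S.card ^ 2 * exp (η * ℓ)) :
    μ {x | expSum (pairing h γ) S x ≤
        S.card * exp ((γ ⬝ᵥ γ * v / 2 - η - δ ^ 2 / 16) * ℓ) / 2} ≤
      ENNReal.ofReal (4 * exp (-(η * ℓ))) := by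
  have hg0 : 0 ≤ γ ⬝ᵥ γ := Finset.sum_nonneg fun _ _ => mul_self_nonneg _
  have hgη : γ ⬝ᵥ γ * (η * ℓ) ≤ η * ℓ := mul_le_of_le_one_left (by positivity) hγ
  have hδ4 : δ ^ 4 ≤ 1 := pow_le_one₀ hδ.le hδ1
  refine measure_expSum_le_le hμ hS hℓ hη0 (by linarith) (by positivity) ?_ ?_ (fun c hc => ?_)
    (fun c hc => ?_) ?_
  · linarith [show (δ ^ 2 / 16) ^ 2 = δ ^ 4 / 256 by ring]
  · nlinarith
  · rw [variance_pairing (hcov c hc c hc)]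
    linarith [mul_le_mul_of_nonneg_left (hlo c hc) hg0]
  · rw [variance_pairing (hcov c hc c hc)]
    linarith [mul_le_mul_of_nonneg_left (hup c hc) hg0]
  · refine le_of_eq_of_le (Finset.sum_congr rfl fun c hc => Finset.sum_congr rfl fun c' hc' => ?_)
      hsum
    rw [covariance_pairing (hcov c hc c' hc')]

theorem measure_card_window_le (hμ : ∀ l : StrongDual ℝ E, μ[l] = 0) (hS : S.Nonempty)
    (hcov : ∀ c ∈ S, ∀ c' ∈ S, ∀ i j, cov[h c i, h c' j; μ] = if i = j then G c c' else 0)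
    (hℓ : 0 ≤ ℓ) (hv0 : 0 ≤ v) (hv2 : v ≤ 2) (hδ : 0 < δ) (hδ1 : δ ≤ 1) (hη0 : 0 ≤ η)
    (hη : 25600 * η ≤ δ ^ 4) (hlo : ∀ c ∈ S, (v - η) * ℓ ≤ G c c)
    (hup : ∀ c ∈ S, G c c ≤ (v + η) * ℓ) (hγ : γ ⬝ᵥ γ ≤ 1)
    (hsum : ∑ c ∈ S, ∑ c' ∈ S, exp (γ ⬝ᵥ γ * G c c') ≤ S.card ^ 2 * exp (η * ℓ)) :
    μ {x | ({c ∈ S | ∀ i, |h c i x - v * γ i * ℓ| < δ * ℓ}.card : ℝ) ≤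
        S.card * exp (-((v / 2 + (Fintype.card ι + 1) * δ) * ℓ)) / 4} ≤
      ENNReal.ofReal ((4 + 16 * Fintype.card ι ^ 2) * exp (-(η * ℓ))) := by
  set low := {x | expSum (pairing h γ) S x ≤
    S.card * exp ((γ ⬝ᵥ γ * v / 2 - η - δ ^ 2 / 16) * ℓ) / 2}
  set high : ι × ℝ → Set E := fun p => {x | S.card * exp ((γ ⬝ᵥ γ * v / 2 - η - δ ^ 2 / 16) * ℓ) *
    exp (p.2 * (v * γ p.1 * ℓ) + δ / 2 * (δ * ℓ)) / (8 * Fintype.card ι) ≤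
      expSum (pairing h (γ + Pi.single p.1 p.2)) S x}
  have hcover : {x | ({c ∈ S | ∀ i, |h c i x - v * γ i * ℓ| < δ * ℓ}.card : ℝ) ≤
      S.card * exp (-((v / 2 + (Fintype.card ι + 1) * δ) * ℓ)) / 4} ⊆
        low ∪ ⋃ p ∈ coordShifts ι (δ / 2), high p := by
    intro x hx
    by_contra hout
    simp only [Set.mem_union, Set.mem_iUnion, not_or, not_exists, low, high, Set.mem_ofPred_eq,
      not_le] at hout hx
    exact hx.not_gt (lt_card_window_of_expSum_bounds hℓ hv0 hδ hδ1 hη hγ hout.1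
      fun p hp => (hout.2 p hp).le)
  calc _ ≤ μ low + ∑ p ∈ coordShifts ι (δ / 2), μ (high p) := (measure_mono hcover).trans
        ((measure_union_le _ _).trans (add_le_add_right (measure_biUnion_finset_le _ _) _))
    _ ≤ ENNReal.ofReal (4 * exp (-(η * ℓ))) +
          (2 * Fintype.card ι : ℕ) • ENNReal.ofReal (8 * Fintype.card ι * exp (-(η * ℓ))) := by
        refine add_le_add (measure_expSum_pairing_le_le hμ hS hcov hℓ hv0 hv2 hδ hδ1 hη0 hη hlo
          hup hγ hsum) ((Finset.sum_le_card_nsmul _ _ _ fun p hp =>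
            measure_le_expSum_pairing_shift_le hμ hS hcov hℓ hv2 hδ hδ1 hη0 hη hup hγ hp).trans ?_)
        exact nsmul_le_nsmul_left zero_le (card_coordShifts_le _)
    _ = ENNReal.ofReal ((4 + 16 * Fintype.card ι ^ 2) * exp (-(η * ℓ))) := by
        rw [← ENNReal.ofReal_nsmul, ← ENNReal.ofReal_add (by positivity) (by positivity)]
        congr 1
        push_cast [nsmul_eq_mul]
        ring

end Window

/-! ### The free field as a Gaussian measure -/

section FreeField

open ProbabilityTheory

lemma eq_zero_of_dirichletForm_self_eq_zero {V : Finset Site} {f : Site → ℝ}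
    (hf : ∀ x ∉ V, f x = 0) (h0 : dirichletForm V f f = 0) : f = 0 := by
  by_contra hne
  obtain ⟨y, hy⟩ := Function.ne_iff.1 hne
  have hyV : y ∈ V := not_imp_comm.1 (hf y) hy
  set g := green V y
  have hgf : dirichletForm V g f = f y := dirichletForm_green hyV f
  have hfg : dirichletForm V f g = f y :=
    (dirichletForm_comm hf fun x hx => green_of_notMem y hx).trans hgf
  set t := -(dirichletForm V g g + 1) / (2 * f y)
  have hnonneg := dirichletForm_self_nonneg (V := V) (f := g + t • f) fun x hx => by
    simp only [Pi.add_apply, Pi.smul_apply, smul_eq_mul, g, hf x hx, green_of_notMem y hx, mul_zero,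
      add_zero]
  simp only [map_add, map_smul, LinearMap.add_apply, LinearMap.smul_apply, smul_eq_mul, hgf, hfg,
    h0, mul_zero, add_zero] at hnonneg
  have hty : t * (2 * f y) = -(dirichletForm V g g + 1) :=
    div_mul_cancel₀ _ (mul_ne_zero two_ne_zero hy)
  linarith

/-- The fields on `Λ_n`, before their extension by zero. -/
abbrev LamField (n N : ℕ) : Type := {x // x ∈ Lam n} → Spin N

variable {n N : ℕ}

/-- The value at a site of `ℤ²` of the extension by zero of a field on `Λ_n`. -/
def evalAt (n N : ℕ) (x : Site) : LamField n N →L[ℝ] Spin N :=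
  if h : x ∈ Lam n then ContinuousLinearMap.proj ⟨x, h⟩ else 0

lemma evalAt_apply (x : Site) (ω : LamField n N) : evalAt n N x ω = extZero n ω x := by
  unfold evalAt extZero
  split_ifs <;> rfl

lemma evalAt_of_notMem {x : Site} (hx : x ∉ Lam n) : evalAt n N x = 0 := dif_neg hx

/-- The `i`-th coordinate of a field on `Λ_n`, extended by zero to `ℤ²`. -/
def component (i : Fin N) : LamField n N →ₗ[ℝ] Site → ℝ :=
  LinearMap.pi fun x => ((EuclideanSpace.proj i).comp (evalAt n N x)).toLinearMap

lemma component_apply (i : Fin N) (ω : LamField n N) (x : Site) :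
    component i ω x = evalAt n N x ω i := rfl

lemma component_of_notMem (i : Fin N) (ω : LamField n N) {x : Site} (hx : x ∉ Lam n) :
    component i ω x = 0 := by
  rw [component_apply, evalAt_of_notMem hx]
  rfl

/-- The field on `Λ_n` whose `i`-th coordinate is `f` and whose other coordinates vanish. -/
def singleComponent (n : ℕ) (i : Fin N) (f : Site → ℝ) : LamField n N :=
  fun x => EuclideanSpace.single i (f x)

lemma component_singleComponent {f : Site → ℝ} (hf : ∀ x ∉ Lam n, f x = 0) (i j : Fin N) :
    component j (singleComponent n i f) = if j = i then f else 0 := by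
  funext x
  by_cases hx : x ∈ Lam n
  · rw [component_apply, evalAt_apply, extZero, dif_pos hx, singleComponent,
      PiLp.single_apply]
    split_ifs <;> rfl
  · rw [component_of_notMem j _ hx]
    split_ifs
    exacts [(hf x hx).symm, rfl]

/-- The form `B` for which the free field has density proportional to `exp (-B ω ω / 2)`. -/
def gffForm (n N : ℕ) : LamField n N →ₗ[ℝ] LamField n N →ₗ[ℝ] ℝ :=
  ∑ i, (dirichletForm (Lam n)).compl₁₂ (component i) (component i)

lemma gffForm_apply (ω η : LamField n N) :
    gffForm n N ω η = ∑ i, dirichletForm (Lam n) (component i ω) (component i η) := by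
  simp [gffForm]

lemma gffForm_singleComponent {f : Site → ℝ} (hf : ∀ x ∉ Lam n, f x = 0) (i : Fin N)
    (ω : LamField n N) :
    gffForm n N (singleComponent n i f) ω = dirichletForm (Lam n) f (component i ω) := by
  rw [gffForm_apply, Finset.sum_eq_single i]
  · rw [component_singleComponent hf, if_pos rfl]
  · intro j _ hji
    rw [component_singleComponent hf, if_neg hji, map_zero, LinearMap.zero_apply]
  · exact fun h => absurd (Finset.mem_univ i) h

lemma isPosDefForm_gffForm (n N : ℕ) : IsPosDefForm (gffForm n N) where
  symm ω η := by
    simp only [gffForm_apply]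
    exact Finset.sum_congr rfl fun i _ => dirichletForm_comm
      (fun _ => component_of_notMem i ω) fun _ => component_of_notMem i η
  pos ω hω := by
    have hnonneg (i : Fin N) :
        0 ≤ dirichletForm (Lam n) (component i ω) (component i ω) :=
      dirichletForm_self_nonneg fun _ => component_of_notMem i ω
    rw [gffForm_apply]
    refine lt_of_le_of_ne (Finset.sum_nonneg fun i _ => hnonneg i) fun h0 => hω ?_
    ext x i
    have hi := (Finset.sum_eq_zero_iff_of_nonneg fun i _ => hnonneg i).1 h0.symm i
      (Finset.mem_univ i)
    have := congr_fun (eq_zero_of_dirichletForm_self_eq_zero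
      (fun _ => component_of_notMem i ω) hi) x
    rwa [component_apply, evalAt_apply, extZero, dif_pos x.2] at this

lemma dirEnergy_extZero (ω : LamField n N) :
    dirEnergy n N (extZero n ω) = gffForm n N ω ω / 2 := by
  have hself (i : Fin N) : dirichletForm (Lam n) (component i ω) (component i ω) = (4 * π)⁻¹ *
      ∑ x ∈ Lam (n + 4), ((component i ω x - component i ω (x + (1, 0))) ^ 2 +
        (component i ω x - component i ω (x + (0, 1))) ^ 2) := by
    have abs_sub_one_le (a : ℤ) : |a - 1| ≤ |a| + 1 := abs_sub a 1
    refine dirichletForm_self_eq_sum_sq (fun _ => component_of_notMem i ω) ?_ ?_ ?_ <;>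
      intro x hx <;> have := abs_sub_one_le x.1 <;> have := abs_sub_one_le x.2 <;>
      simp only [mem_Lam, Prod.fst_sub, Prod.snd_sub, sub_zero] at hx ⊢ <;> omega
  simp only [gffForm_apply, hself]
  rw [← Finset.mul_sum, Finset.sum_comm, dirEnergy, ← div_mul_eq_mul_div]
  congr 1
  · field_simp
    norm_num
  · refine Finset.sum_congr rfl fun x _ => ?_
    simp only [EuclideanSpace.real_norm_sq_eq, Finset.sum_add_distrib, component_apply,
      evalAt_apply, PiLp.sub_apply]

lemma measurable_extZero (n N : ℕ) : Measurable (extZero n : LamField n N → Conf N) := by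
  refine measurable_pi_iff.2 fun x => ?_
  simp only [← evalAt_apply]
  exact (evalAt n N x).continuous.measurable

/-- The law of the free field on `Λ_n`, before the extension by zero. -/
def lamGff (n N : ℕ) : Measure (LamField n N) :=
  gaussianOfForm (Measure.pi fun _ => volume) (gffForm n N)

lemma gff_eq_map_lamGff (n N : ℕ) : gff n N = (lamGff n N).map (extZero n) := by
  have : gffAux n N = gaussianWeight (Measure.pi fun _ => volume) (gffForm n N) := by
    simp only [gffAux, gaussianWeight, dirEnergy_extZero]
  rw [gff, lamGff, gaussianOfForm, Measure.map_smul, this]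

instance isGaussian_lamGff (n N : ℕ) : IsGaussian (lamGff n N) :=
  isGaussian_gaussianOfForm (isPosDefForm_gffForm n N)

lemma integral_strongDual_lamGff (L : StrongDual ℝ (LamField n N)) : (lamGff n N)[L] = 0 :=
  integral_strongDual_gaussianOfForm (isPosDefForm_gffForm n N) L

instance isProbabilityMeasure_gff (n N : ℕ) : IsProbabilityMeasure (gff n N) := by
  rw [gff_eq_map_lamGff]
  exact Measure.isProbabilityMeasure_map (measurable_extZero n N).aemeasurable

end FreeField

/-! ### The harmonic extension as a boundary average -/

section HarmonicExtension

open ProbabilityTheory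

variable {n N m : ℕ} {c c' : Site}

/-- The average of a field over the boundary of a box for harmonic measure seen from the centre. -/
def boxAverage (m : ℕ) (c : Site) (φ : Conf N) : Spin N :=
  ∑ x ∈ boxBoundary c m, harmonicMeasure c m x • φ x

/-- `boxAverage` as a functional of the field on `Λ_n`. -/
def lamBoxAverage (n N m : ℕ) (c : Site) : LamField n N →L[ℝ] Spin N :=
  ∑ x ∈ boxBoundary c m, harmonicMeasure c m x • evalAt n N x

/-- The value at the centre of a box minus the boundary average. -/
def boxFluctuation (n N m : ℕ) (c : Site) : LamField n N →L[ℝ] Spin N :=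
  evalAt n N c - lamBoxAverage n N m c

/-- The operation of setting a field to zero on `V`. -/
def zeroOn (n N : ℕ) (V : Finset Site) : LamField n N →L[ℝ] LamField n N :=
  ContinuousLinearMap.pi fun x => if (x : Site) ∈ V then 0 else ContinuousLinearMap.proj x

lemma lamBoxAverage_apply (ω : LamField n N) :
    lamBoxAverage n N m c ω = boxAverage m c (extZero n ω) := by
  simp [lamBoxAverage, boxAverage, evalAt_apply]

lemma boxFluctuation_apply (ω : LamField n N) :
    boxFluctuation n N m c ω = extZero n ω c - boxAverage m c (extZero n ω) := by
  rw [boxFluctuation, sub_apply, evalAt_apply, lamBoxAverage_apply]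

lemma lamBoxAverage_apply_coord (hm : 1 ≤ m) (hB : siteBox c m ⊆ Lam n) (ω : LamField n N)
    (i : Fin N) :
    lamBoxAverage n N m c ω i =
      gffForm n N (singleComponent n i (boxAverageRep (Lam n) m c)) ω := by
  rw [gffForm_singleComponent (fun _ => boxAverageRep_of_notMem hB),
    dirichletForm_boxAverageRep hm hB]
  simp [lamBoxAverage, component_apply]

lemma green_boxInterior_of_notMem_Lam (hB : siteBox c m ⊆ Lam n) {x : Site} (hx : x ∉ Lam n) :
    green (boxInterior c m) c x = 0 :=
  green_of_notMem _ fun h => hx (hB (boxInterior_subset c m h))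

lemma boxFluctuation_apply_coord (hm : 1 ≤ m) (hB : siteBox c m ⊆ Lam n) (ω : LamField n N)
    (i : Fin N) :
    boxFluctuation n N m c ω i =
      gffForm n N (singleComponent n i (green (boxInterior c m) c)) ω := by
  rw [gffForm_singleComponent (fun _ => green_boxInterior_of_notMem_Lam hB),
    dirichletForm_green_boxInterior hm hB]
  simp [boxFluctuation, lamBoxAverage, component_apply]

lemma zeroOn_singleComponent {V : Finset Site} {f : Site → ℝ} (hf : ∀ x ∉ V, f x = 0)
    (i : Fin N) : zeroOn n N V (singleComponent n i f) = 0 := by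
  funext x
  by_cases hx : (x : Site) ∈ V
  · simp [zeroOn, hx]
  · simp [zeroOn, hx, singleComponent, hf]

lemma extZero_zeroOn_of_notMem {V : Finset Site} {x : Site} (hx : x ∉ V) (ω : LamField n N) :
    extZero n (zeroOn n N V ω) x = extZero n ω x := by
  by_cases hxL : x ∈ Lam n <;> simp [extZero, hxL, zeroOn, hx]

/-- `φ(c) - h_c` is represented in the Dirichlet form by a function supported in the box interior,
so it is uncorrelated with the field outside. -/
lemma indepFun_boxFluctuation_zeroOn (hm : 1 ≤ m) (hB : siteBox c m ⊆ Lam n) :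
    IndepFun (boxFluctuation n N m c) (zeroOn n N (boxInterior c m)) (lamGff n N) := by
  refine HasGaussianLaw.indepFun_of_covariance_strongDual ((IsGaussian.hasGaussianLaw_id
    (μ := lamGff n N)).map ((boxFluctuation n N m c).prod (zeroOn n N (boxInterior c m)))) ?_
  intro L₁ L₂
  set f₁ : LamField n N := ∑ i, L₁ (EuclideanSpace.single i 1) •
    singleComponent n i (green (boxInterior c m) c) with hf₁
  have hL₁ : ⇑L₁ ∘ ⇑(boxFluctuation n N m c) = gffForm n N f₁ := by
    funext ω
    set w := boxFluctuation n N m c ω with hw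
    calc L₁ w = ∑ i, w i * L₁ (EuclideanSpace.single i 1) := by
          conv_lhs => rw [← (EuclideanSpace.basisFun (Fin N) ℝ).sum_repr w]
          simp
      _ = gffForm n N f₁ ω := by
          simp only [hf₁, map_sum, map_smul, LinearMap.sum_apply, LinearMap.smul_apply, smul_eq_mul,
            hw, boxFluctuation_apply_coord hm hB, mul_comm]
  obtain ⟨f₂, hf₂⟩ := (isPosDefForm_gffForm n N).exists_eq_form
    (L₂.comp (zeroOn n N (boxInterior c m)))
  rw [hL₁, ← ContinuousLinearMap.coe_comp, hf₂, lamGff,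
    covariance_form (isPosDefForm_gffForm n N), (isPosDefForm_gffForm n N).symm, ← hf₂]
  have : zeroOn n N (boxInterior c m) f₁ = 0 := by
    simp only [hf₁, map_sum, map_smul, zeroOn_singleComponent fun _ => green_of_notMem c, smul_zero,
      Finset.sum_const_zero]
  rw [ContinuousLinearMap.comp_apply, this, map_zero]

lemma indepFun_map_of_comp {Ω Ω' β β' : Type*} [MeasurableSpace Ω] [MeasurableSpace Ω']
    [MeasurableSpace β] [MeasurableSpace β'] {μ : Measure Ω} {T : Ω → Ω'} {f : Ω' → β}
    {g : Ω' → β'} (hT : Measurable T) (hf : Measurable f) (hg : Measurable g)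
    (h : IndepFun (f ∘ T) (g ∘ T) μ) : IndepFun f g (μ.map T) := by
  refine indepFun_iff_measure_inter_preimage_eq_mul.2 fun s t hs ht => ?_
  rw [Measure.map_apply hT ((hf hs).inter (hg ht)), Measure.map_apply hT (hf hs),
    Measure.map_apply hT (hg ht)]
  exact h.measure_inter_preimage_eq_mul s t hs ht

lemma measurable_restrict (K : Set Site) : Measurable fun (φ : Conf N) (y : K) => φ y :=
  measurable_pi_iff.2 fun _ => measurable_pi_apply _

lemma stronglyMeasurable_boxAverage {K : Set Site} (hK : ∀ x ∈ boxBoundary c m, x ∈ K) :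
    StronglyMeasurable[mGrid N K] (boxAverage (N := N) m c) := by
  refine Measurable.stronglyMeasurable (Finset.measurable_fun_sum _ fun x hx => ?_)
  have hres : Measurable[mGrid N K] fun (φ : Conf N) (y : K) => φ y := comap_measurable _
  exact ((measurable_pi_apply (⟨x, hK x hx⟩ : K)).comp hres).const_smul (harmonicMeasure c m x)

lemma measurable_boxAverage : Measurable (boxAverage (N := N) m c) :=
  Finset.measurable_fun_sum _ fun x _ => (measurable_pi_apply x).const_smul (harmonicMeasure c m x)

lemma integrable_eval_gff (x : Site) : Integrable (fun φ : Conf N => φ x) (gff n N) := by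
  rw [gff_eq_map_lamGff, integrable_map_measure (measurable_pi_apply x).aestronglyMeasurable
    (measurable_extZero n N).aemeasurable]
  refine ((evalAt n N x).integrable_comp IsGaussian.integrable_id).congr (ae_of_all _ fun ω => ?_)
  exact evalAt_apply x ω

lemma integrable_boxAverage : Integrable (boxAverage m c) (gff n N) :=
  integrable_finsetSum _ fun x _ => (integrable_eval_gff x).smul (harmonicMeasure c m x)

lemma measurable_sub_boxAverage :
    Measurable fun φ : Conf N => φ c - boxAverage m c φ :=
  (measurable_pi_apply c).sub measurable_boxAverage

lemma integral_sub_boxAverage : ∫ φ, (φ c - boxAverage m c φ) ∂(gff n N) = 0 := by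
  rw [gff_eq_map_lamGff, integral_map (measurable_extZero n N).aemeasurable
    measurable_sub_boxAverage.aestronglyMeasurable]
  simp only [← boxFluctuation_apply]
  refine (SeparatingDual.eq_zero_iff_forall_dual_eq_zero (R := ℝ) _).2 fun l => ?_
  have hint : Integrable (boxFluctuation n N m c) (lamGff n N) :=
    (boxFluctuation n N m c).integrable_comp IsGaussian.integrable_id
  rw [← l.integral_comp_comm hint]
  exact integral_strongDual_lamGff (l.comp (boxFluctuation n N m c))

lemma indepFun_sub_boxAverage_restrict (hm : 1 ≤ m) (hB : siteBox c m ⊆ Lam n) {K : Set Site}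
    (hK : ∀ x ∈ K, x ∉ boxInterior c m) :
    IndepFun (fun φ => φ c - boxAverage m c φ) (fun (φ : Conf N) (y : K) => φ y) (gff n N) := by
  rw [gff_eq_map_lamGff]
  refine indepFun_map_of_comp (measurable_extZero n N) measurable_sub_boxAverage
    (measurable_restrict K) ?_
  convert (indepFun_boxFluctuation_zeroOn hm hB).comp measurable_id
    ((measurable_restrict K).comp (measurable_extZero n N)) using 1
  · funext ω
    exact (boxFluctuation_apply ω).symm
  · funext ω y
    exact (extZero_zeroOn_of_notMem (hK y y.2) ω).symm

lemma harmExt_ae_eq_boxAverage (hm : 1 ≤ m) (hB : siteBox c m ⊆ Lam n) {K : Set Site}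
    (hKint : ∀ x ∈ K, x ∉ boxInterior c m) (hKbdry : ∀ x ∈ boxBoundary c m, x ∈ K) :
    harmExt n N K c =ᵐ[gff n N] boxAverage m c := by
  set A : Conf N → Spin N := fun φ => φ c - boxAverage m c φ with hA
  have hle : mGrid N K ≤ (inferInstance : MeasurableSpace (Conf N)) :=
    (measurable_restrict K).comap_le
  have hcondA : (gff n N)[A | mGrid N K] =ᵐ[gff n N] fun _ => 0 := by
    have h := condExp_indep_eq (m₁ := MeasurableSpace.comap A inferInstance) (f := A)
      measurable_sub_boxAverage.comap_le hle (comap_measurable A).stronglyMeasurable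
      (indepFun_sub_boxAverage_restrict hm hB hKint)
    rwa [integral_sub_boxAverage] at h
  have hcondAvg : (gff n N)[boxAverage m c | mGrid N K] = boxAverage m c :=
    condExp_of_stronglyMeasurable hle (stronglyMeasurable_boxAverage hKbdry) integrable_boxAverage
  have hintA : Integrable A (gff n N) := (integrable_eval_gff c).sub integrable_boxAverage
  have hsplit : (fun φ : Conf N => φ c) = A + boxAverage m c := by
    funext φ
    simp [hA]
  rw [harmExt, hsplit]
  filter_upwards [condExp_add hintA (integrable_boxAverage (m := m) (c := c)) (mGrid N K),
    hcondA] with φ hadd hzero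
  rw [hadd, Pi.add_apply, hzero, hcondAvg, zero_add]

/-- The `i`-th coordinate of the boundary average, as a continuous linear functional. -/
def lamBoxAverageCoord (n m : ℕ) (c : Site) (i : Fin N) : StrongDual ℝ (LamField n N) :=
  (EuclideanSpace.proj i).comp (lamBoxAverage n N m c)

lemma lamBoxAverageCoord_apply (i : Fin N) (ω : LamField n N) :
    lamBoxAverageCoord n m c i ω = boxAverage m c (extZero n ω) i := by
  rw [← lamBoxAverage_apply]
  rfl

/-- The covariance of the boundary averages over the boxes of radius `m` around `c` and `c'`, for a
single coordinate of the field. -/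
def boxCov (n m : ℕ) (c c' : Site) : ℝ :=
  dirichletForm (Lam n) (boxAverageRep (Lam n) m c) (boxAverageRep (Lam n) m c')

lemma covariance_lamBoxAverageCoord (hm : 1 ≤ m) (hB : siteBox c m ⊆ Lam n)
    (hB' : siteBox c' m ⊆ Lam n) (i j : Fin N) :
    cov[lamBoxAverageCoord n m c i, lamBoxAverageCoord n m c' j; lamGff n N] =
      if i = j then boxCov n m c c' else 0 := by
  have hform {c : Site} (hB : siteBox c m ⊆ Lam n) (i : Fin N) : ⇑(lamBoxAverageCoord n m c i) =
      gffForm n N (singleComponent n i (boxAverageRep (Lam n) m c)) :=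
    funext fun ω => lamBoxAverage_apply_coord hm hB ω i
  rw [hform hB, hform hB', lamGff, covariance_form (isPosDefForm_gffForm n N),
    gffForm_singleComponent (fun _ => boxAverageRep_of_notMem hB),
    component_singleComponent (fun _ => boxAverageRep_of_notMem hB')]
  split_ifs
  · rfl
  · exact map_zero _

end HarmonicExtension

/-! ### The grid of boxes -/

section Grid

/-- The centre with index `p` of the grid of boxes of radius `m`. -/
def gridSite (m : ℕ) (p : ℤ × ℤ) : Site := (p.1 * (2 * m), p.2 * (2 * m))

/-- The centres of the boxes of side length `evenSide n α` that are contained in the lattice ball of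
radius `ρ`, i.e. `Π_α ∩ 𝔹`. -/
def ballCenters (D : Set (ℝ × ℝ)) (n : ℕ) (α ρ : ℝ) : Finset Site :=
  {c ∈ centersF D n α (0, 0) | boxAt (evenSide n α) c ⊆ latBall ρ}

variable {D : Set (ℝ × ℝ)} {n m : ℕ} {α ρ : ℝ} {c x : Site} {p q : ℤ × ℤ}

lemma gridSite_injective (hm : 1 ≤ m) : Function.Injective (gridSite m) := by
  intro p q hpq
  simp only [gridSite, Prod.mk.injEq] at hpq
  have hm0 : 2 * (m : ℤ) ≠ 0 := by omega
  exact Prod.ext (mul_right_cancel₀ hm0 hpq.1) (mul_right_cancel₀ hm0 hpq.2)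

lemma mem_boxBoundary : x ∈ boxBoundary c m ↔
    (|x.1 - c.1| ≤ (m : ℤ) ∧ |x.2 - c.2| ≤ (m : ℤ)) ∧
      (|x.1 - c.1| = (m : ℤ) ∨ |x.2 - c.2| = (m : ℤ)) := by
  rw [boxBoundary, Finset.mem_sdiff, mem_siteBox, mem_boxInterior]
  omega

lemma le_abs_sub_mul_of_abs_sub_mul_eq {m x k k' : ℤ} (hm : 0 < m)
    (h : |x - k' * (2 * m)| = m) : m ≤ |x - k * (2 * m)| := by
  by_contra! hlt
  obtain ⟨hlo, hup⟩ := abs_lt.1 hlt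
  rcases (abs_eq hm.le).1 h with h' | h' <;> rcases lt_trichotomy k k' with hk | rfl | hk <;>
    nlinarith

lemma notMem_boxInterior_gridSite (hm : 1 ≤ m) (hx : x ∈ boxBoundary (gridSite m q) m) :
    x ∉ boxInterior (gridSite m p) m := by
  rw [mem_boxBoundary] at hx
  rw [mem_boxInterior]
  have hm' : (0 : ℤ) < m := by exact_mod_cast hm
  rintro ⟨h₁, h₂⟩
  rcases hx.2 with h | h
  · exact (le_abs_sub_mul_of_abs_sub_mul_eq hm' h).not_gt h₁
  · exact (le_abs_sub_mul_of_abs_sub_mul_eq hm' h).not_gt h₂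

lemma mem_boxAt_two_mul : x ∈ boxAt (2 * m) c ↔ x ∈ siteBox c m := by
  rw [mem_siteBox, boxAt, Set.mem_ofPred_eq]
  omega

lemma mem_innerBdryAt_two_mul : x ∈ innerBdryAt (2 * m) c ↔ x ∈ boxBoundary c m := by
  rw [innerBdryAt, Set.mem_ofPred_eq, mem_boxAt_two_mul, mem_siteBox, mem_boxBoundary]
  omega

lemma exists_eq_gridSite (ha : evenSide n α = 2 * m) (hc : c ∈ centersF D n α (0, 0)) :
    ∃ p, c = gridSite m p := by
  obtain ⟨k, l, hkl⟩ := (Finset.mem_filter.1 hc).2.1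
  exact ⟨(k, l), by simp [hkl, ha, gridSite]⟩

lemma notMem_boxInterior_of_mem_gridK (hm : 1 ≤ m) (ha : evenSide n α = 2 * m)
    (hc : c ∈ centersF D n α (0, 0)) (hx : x ∈ gridK D n α (0, 0)) : x ∉ boxInterior c m := by
  simp only [gridK, Set.mem_iUnion] at hx
  obtain ⟨c', hc', hx⟩ := hx
  rw [ha, mem_innerBdryAt_two_mul] at hx
  obtain ⟨p, rfl⟩ := exists_eq_gridSite ha hc
  obtain ⟨q, rfl⟩ := exists_eq_gridSite ha hc'
  exact notMem_boxInterior_gridSite hm hx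

lemma mem_gridK_of_mem_boxBoundary (ha : evenSide n α = 2 * m)
    (hc : c ∈ centersF D n α (0, 0)) (hx : x ∈ boxBoundary c m) : x ∈ gridK D n α (0, 0) := by
  simp only [gridK, Set.mem_iUnion]
  exact ⟨c, hc, by rwa [ha, mem_innerBdryAt_two_mul]⟩

lemma four_mul_abs_le_of_mem_latBall (hρ : ρ ≤ 1 / 4) (hx : x ∈ latBall (ρ * n)) :
    4 * |x.1| ≤ (n : ℤ) ∧ 4 * |x.2| ≤ (n : ℤ) := by
  have hnorm : √((x.1 : ℝ) ^ 2 + (x.2 : ℝ) ^ 2) < ρ * n := hx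
  have hρn : ρ * n ≤ n / 4 := by nlinarith [(Nat.cast_nonneg n : (0 : ℝ) ≤ n)]
  have h₁ : |(x.1 : ℝ)| ≤ √((x.1 : ℝ) ^ 2 + (x.2 : ℝ) ^ 2) :=
    abs_le_sqrt (le_add_of_nonneg_right (sq_nonneg _))
  have h₂ : |(x.2 : ℝ)| ≤ √((x.1 : ℝ) ^ 2 + (x.2 : ℝ) ^ 2) :=
    abs_le_sqrt (le_add_of_nonneg_left (sq_nonneg _))
  constructor
  · exact_mod_cast (by linarith : (4 : ℝ) * |(x.1 : ℝ)| ≤ n)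
  · exact_mod_cast (by linarith : (4 : ℝ) * |(x.2 : ℝ)| ≤ n)

lemma mem_Lam_of_mem_latBall (hρ : ρ ≤ 1 / 4) (hx : x ∈ latBall (ρ * n)) : x ∈ Lam n := by
  have := four_mul_abs_le_of_mem_latBall hρ hx
  rw [mem_Lam]
  omega

lemma siteBox_subset_latBall (ha : evenSide n α = 2 * m) (hc : c ∈ ballCenters D n α ρ)
    (hx : x ∈ siteBox c m) : x ∈ latBall ρ :=
  (Finset.mem_filter.1 hc).2 (by rwa [ha, mem_boxAt_two_mul])

lemma siteBox_gridSite_subset_latBall {J : ℕ} (hp₁ : p.1 ∈ Set.Icc 0 (J : ℤ))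
    (hp₂ : p.2 ∈ Set.Icc 0 (J : ℤ)) (hJ : 4 * (m : ℝ) * (J + 1) < ρ)
    (hx : x ∈ siteBox (gridSite m p) m) : x ∈ latBall ρ := by
  have hcoord {y k : ℤ} (hk : k ∈ Set.Icc 0 (J : ℤ)) (hy : |y - k * (2 * m)| ≤ (m : ℤ)) :
      (y : ℝ) ^ 2 ≤ (2 * m * (J + 1)) ^ 2 := by
    rw [sq_le_sq, abs_of_nonneg (by positivity : (0 : ℝ) ≤ 2 * m * (J + 1))]
    obtain ⟨hlo, hup⟩ := abs_le.1 hy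
    have : |y| ≤ 2 * m * ((J : ℤ) + 1) :=
      abs_le.2 ⟨by nlinarith [hk.1, hk.2], by nlinarith [hk.1, hk.2]⟩
    exact_mod_cast this
  rw [mem_siteBox] at hx
  have h₁ := hcoord hp₁ hx.1
  have h₂ := hcoord hp₂ hx.2
  refine lt_of_le_of_lt ((sqrt_le_left (by positivity)).2 ?_) hJ
  nlinarith

lemma sq_le_card_ballCenters (hm : 1 ≤ m) (ha : evenSide n α = 2 * m) (hρ : ρ ≤ 1 / 4)
    (hD : ∀ x : Site, x ∈ latBall (ρ * n) → x ∈ Dn D n) {J : ℕ}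
    (hJ : 4 * (m : ℝ) * (J + 1) < ρ * n) :
    ((J : ℝ) + 1) ^ 2 ≤ (ballCenters D n α (ρ * n)).card := by
  have hsub : (Finset.Icc 0 (J : ℤ) ×ˢ Finset.Icc 0 (J : ℤ)).image (gridSite m) ⊆
      ballCenters D n α (ρ * n) := by
    intro c hc
    obtain ⟨p, hp, rfl⟩ := Finset.mem_image.1 hc
    rw [Finset.mem_product, Finset.mem_Icc, Finset.mem_Icc] at hp
    have hbox : boxAt (evenSide n α) (gridSite m p) ⊆ latBall (ρ * n) := fun x hx =>
      siteBox_gridSite_subset_latBall hp.1 hp.2 hJ (by rwa [ha, mem_boxAt_two_mul] at hx)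
    have hcenter : gridSite m p ∈ latBall (ρ * n) :=
      siteBox_gridSite_subset_latBall hp.1 hp.2 hJ (self_mem_siteBox _ _)
    refine Finset.mem_filter.2 ⟨Finset.mem_filter.2 ⟨mem_Lam_of_mem_latBall hρ hcenter,
      ⟨p.1, p.2, ?_⟩, fun x hx => hD x (hbox hx)⟩, hbox⟩
    simp [ha, gridSite]
  have hcard := Finset.card_le_card hsub
  rw [Finset.card_image_of_injective _ (gridSite_injective hm), Finset.card_product,
    Int.card_Icc, sub_zero] at hcard
  rw [sq]
  exact_mod_cast hcard

end Grid

/-! ### The covariance of boxes of the grid -/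

section BoxCov

variable {n m : ℕ} {p q : ℤ × ℤ} {x : Site}

lemma sq_mul_sq_sub_le_sq_sub {x k k' : ℤ} (h : |x - k * (2 * m)| ≤ (m : ℤ)) :
    (m : ℝ) ^ 2 * ((k' - k : ℤ) : ℝ) ^ 2 ≤ ((x : ℝ) - (k' * (2 * m) : ℤ)) ^ 2 := by
  have hint : (m : ℤ) ^ 2 * (k' - k) ^ 2 ≤ (x - k' * (2 * m)) ^ 2 := by
    rw [← mul_pow, sq_le_sq, abs_mul, Nat.abs_cast]
    calc (m : ℤ) * |k' - k| ≤ 2 * m * |k' - k| - m * |k' - k| := by linarith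
      _ ≤ |x - k' * (2 * m)| := by
        rcases eq_or_ne k k' with rfl | hne
        · simp
        have hone : 1 ≤ |k' - k| := Int.one_le_abs (sub_ne_zero.2 hne.symm)
        have hdist : 2 * m * |k' - k| ≤ |x - k' * (2 * m)| + |x - k * (2 * m)| := by
          have := abs_sub (x - k * (2 * m)) (x - k' * (2 * m))
          rw [show x - k * (2 * m) - (x - k' * (2 * m)) = 2 * m * (k' - k) by ring, abs_mul,
            abs_of_nonneg (by positivity : (0 : ℤ) ≤ 2 * m)] at this
          linarith
        nlinarith
  exact_mod_cast hint

lemma one_le_sq_add_sq_of_ne (hpq : q ≠ p) :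
    (1 : ℝ) ≤ ((q.1 - p.1 : ℤ) : ℝ) ^ 2 + ((q.2 - p.2 : ℤ) : ℝ) ^ 2 := by
  suffices h : (1 : ℤ) ≤ (q.1 - p.1) ^ 2 + (q.2 - p.2) ^ 2 by exact_mod_cast h
  by_contra! hlt
  have h₁ : (q.1 - p.1) ^ 2 = 0 := by nlinarith [sq_nonneg (q.1 - p.1), sq_nonneg (q.2 - p.2)]
  have h₂ : (q.2 - p.2) ^ 2 = 0 := by nlinarith [sq_nonneg (q.1 - p.1), sq_nonneg (q.2 - p.2)]
  exact hpq (Prod.ext (sub_eq_zero.1 (sq_eq_zero_iff.1 h₁)) (sub_eq_zero.1 (sq_eq_zero_iff.1 h₂)))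

lemma le_smoothedDistSq_gridSite (hx : x ∈ boxBoundary (gridSite m p) m) :
    (m : ℝ) ^ 2 * (1 + ((q.1 - p.1 : ℤ) : ℝ) ^ 2 + ((q.2 - p.2 : ℤ) : ℝ) ^ 2) / 2 ≤
      smoothedDistSq 1 (gridSite m q) x := by
  rw [mem_boxBoundary] at hx
  simp only [smoothedDistSq, gridSite]
  have : (0 : ℝ) ≤ (m : ℝ) ^ 2 := by positivity
  rcases eq_or_ne q p with rfl | hqp
  · have hsq {y k : ℤ} (h : |y - k * (2 * m)| = (m : ℤ)) :
        ((y : ℝ) - (k * (2 * m) : ℤ)) ^ 2 = (m : ℝ) ^ 2 := by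
      rw [← sq_abs]
      exact congrArg (· ^ 2) (by exact_mod_cast h)
    simp only [sub_self, Int.cast_zero]
    rcases hx.2 with h | h
    · nlinarith [hsq h, sq_nonneg ((x.2 : ℝ) - (q.2 * (2 * m) : ℤ))]
    · nlinarith [hsq h, sq_nonneg ((x.1 : ℝ) - (q.1 * (2 * m) : ℤ))]
  · have h₁ := sq_mul_sq_sub_le_sq_sub (k' := q.1) hx.1.1
    have h₂ := sq_mul_sq_sub_le_sq_sub (k' := q.2) hx.1.2
    nlinarith [one_le_sq_add_sq_of_ne hqp]

lemma le_add_one_of_mul_sub_le {R m L g A : ℝ} (hR : 3 ≤ R) (hRm : R * R ≤ m) (hL : 0 ≤ L)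
    (h : (1 - 3 / R) * (1 - 1 / R ^ 2) * (g - 4 * π * L * (12 * R / m)) ≤ A)
    (hg : g ≤ 4 * π * L) (hLR : 64 * π * L ≤ R) : g ≤ A + 1 := by
  have hR0 : 0 < R := by linarith
  have hm0 : 0 < m := by nlinarith
  set θ := (1 - 3 / R) * (1 - 1 / R ^ 2) with hθ
  set e := 4 * π * L * (12 * R / m)
  have he0 : 0 ≤ e := by positivity
  have hθ0 : 0 ≤ 1 - θ ∧ 1 - θ ≤ 4 * (1 / R) := by
    have hsq : 1 / R ^ 2 ≤ 1 / R := one_div_le_one_div_of_le hR0 (by nlinarith)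
    have h3 : 3 / R = 3 * (1 / R) := by ring
    have h3le : 3 / R ≤ 1 := (div_le_one hR0).2 hR
    have : 0 ≤ 1 / R ^ 2 := by positivity
    have : 0 ≤ 3 / R := by positivity
    rw [hθ]
    constructor <;> nlinarith
  have he1 : e ≤ 48 * π * L * (1 / R) := by
    have : 12 * R / m ≤ 12 * (1 / R) := by
      rw [mul_one_div, div_le_div_iff₀ hm0 hR0]
      linarith
    calc e ≤ 4 * π * L * (12 * (1 / R)) := mul_le_mul_of_nonneg_left this (by positivity)
      _ = 48 * π * L * (1 / R) := by ring
  have hdefect : (1 - θ) * (g - e) ≤ 16 * π * L * (1 / R) :=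
    calc (1 - θ) * (g - e) ≤ (1 - θ) * (4 * π * L) :=
          mul_le_mul_of_nonneg_left (by linarith) hθ0.1
      _ ≤ 4 * (1 / R) * (4 * π * L) := mul_le_mul_of_nonneg_right hθ0.2 (by positivity)
      _ = 16 * π * L * (1 / R) := by ring
  have hsmall : 64 * π * L * (1 / R) ≤ 1 := by rwa [mul_one_div, div_le_one hR0]
  nlinarith only [h, hdefect, hsmall, he1]

lemma boxCov_gridSite_le (hn : 1 ≤ n) (hm : 9 ≤ m) (hB : siteBox (gridSite m p) m ⊆ Lam n)
    (hB' : siteBox (gridSite m q) m ⊆ Lam n) (hnm : 64 * π * log (16 * (n : ℝ) ^ 2) ≤ Nat.sqrt m) :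
    boxCov n m (gridSite m p) (gridSite m q) ≤ log (32 * (n : ℝ) ^ 2 /
      ((m : ℝ) ^ 2 * (1 + ((q.1 - p.1 : ℤ) : ℝ) ^ 2 + ((q.2 - p.2 : ℤ) : ℝ) ^ 2))) + 1 := by
  refine dirichletForm_boxAverageRep_le (by omega) hB fun x hx => ?_
  have hR : 3 ≤ Nat.sqrt m := Nat.le_sqrt.2 (by omega)
  have hRm : Nat.sqrt m * Nat.sqrt m ≤ m := Nat.sqrt_le m
  have hxL : x ∈ Lam n := hB (Finset.sdiff_subset hx)
  have hn' : (1 : ℝ) ≤ n := by exact_mod_cast hn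
  have : (0 : ℝ) < m := by exact_mod_cast (by omega : 0 < m)
  have hgreen := green_Lam_le_log (R := Nat.sqrt m) hn hB' hxL
    (notMem_boxInterior_gridSite (by omega) hx) (C := 1) le_rfl (by nlinarith) hR
    (by exact_mod_cast Nat.one_le_pow 2 (Nat.sqrt m) (by omega)) (by nlinarith)
  set d : ℝ := 1 + ((q.1 - p.1 : ℤ) : ℝ) ^ 2 + ((q.2 - p.2 : ℤ) : ℝ) ^ 2
  have hd : 0 < d := by positivity
  have hdist : log ((m : ℝ) ^ 2 * d / 2) ≤ log (smoothedDistSq 1 (gridSite m q) x) :=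
    log_le_log (by positivity) (le_smoothedDistSq_gridSite hx)
  have hlog : log (32 * (n : ℝ) ^ 2 / ((m : ℝ) ^ 2 * d)) =
      log (16 * (n : ℝ) ^ 2) - log ((m : ℝ) ^ 2 * d / 2) := by
    rw [← log_div (by positivity) (by positivity)]
    congr 1
    field_simp
    norm_num
  rw [hlog]
  exact le_add_one_of_mul_sub_le (by exact_mod_cast hR) (by exact_mod_cast hRm)
    (log_nonneg (by nlinarith)) (hgreen.trans (sub_le_sub_left hdist _))
    (green_Lam_le hn hxL _) hnm

lemma exp_boxCov_gridSite_le (hn : 1 ≤ n) (hm : 9 ≤ m) (hB : siteBox (gridSite m p) m ⊆ Lam n)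
    (hB' : siteBox (gridSite m q) m ⊆ Lam n) (hnm : 64 * π * log (16 * (n : ℝ) ^ 2) ≤ Nat.sqrt m) :
    exp (boxCov n m (gridSite m p) (gridSite m q)) ≤ 100 * ((n : ℝ) ^ 2 / (m : ℝ) ^ 2) *
      (1 / (1 + ((q.1 - p.1 : ℤ) : ℝ) ^ 2 + ((q.2 - p.2 : ℤ) : ℝ) ^ 2)) := by
  have : (0 : ℝ) < n := by exact_mod_cast hn
  have : (0 : ℝ) < m := by exact_mod_cast (by omega : 0 < m)
  set d : ℝ := 1 + ((q.1 - p.1 : ℤ) : ℝ) ^ 2 + ((q.2 - p.2 : ℤ) : ℝ) ^ 2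
  have hd : 0 < d := by positivity
  calc exp (boxCov n m (gridSite m p) (gridSite m q))
      ≤ exp (log (32 * (n : ℝ) ^ 2 / ((m : ℝ) ^ 2 * d)) + 1) :=
        exp_le_exp.2 (boxCov_gridSite_le hn hm hB hB' hnm)
    _ = (n : ℝ) ^ 2 / (m : ℝ) ^ 2 * (1 / d) * (32 * exp 1) := by
        rw [exp_add, exp_log (by positivity)]
        field_simp
    _ ≤ (n : ℝ) ^ 2 / (m : ℝ) ^ 2 * (1 / d) * 100 :=
        mul_le_mul_of_nonneg_left (by linarith [exp_one_lt_d9]) (by positivity)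
    _ = 100 * ((n : ℝ) ^ 2 / (m : ℝ) ^ 2) * (1 / d) := by ring

lemma sum_Icc_one_div_one_add_abs_le (n : ℕ) :
    ∑ k ∈ Finset.Icc (-(n : ℤ)) n, 1 / (1 + |(k : ℝ)|) ≤ 2 * (1 + log (n + 1)) := by
  let pos := (Finset.range (n + 1)).image fun j : ℕ => (j : ℤ)
  let neg := (Finset.range (n + 1)).image fun j : ℕ => -(j : ℤ)
  have hsub : Finset.Icc (-(n : ℤ)) n ⊆ pos ∪ neg := by
    intro k hk
    rw [Finset.mem_Icc] at hk
    rw [Finset.mem_union, Finset.mem_image, Finset.mem_image]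
    rcases le_total 0 k with h | h
    · exact Or.inl ⟨k.toNat, by rw [Finset.mem_range]; omega, by omega⟩
    · exact Or.inr ⟨(-k).toNat, by rw [Finset.mem_range]; omega, by omega⟩
  have hharmonic : ∑ j ∈ Finset.range (n + 1), 1 / (1 + (j : ℝ)) ≤ 1 + log (n + 1) := by
    have h := harmonic_le_one_add_log (n + 1)
    rw [harmonic] at h
    push_cast at h
    simpa only [one_div, add_comm (1 : ℝ)] using h
  have hnonneg (k : ℤ) : 0 ≤ 1 / (1 + |(k : ℝ)|) := by positivity
  calc ∑ k ∈ Finset.Icc (-(n : ℤ)) n, 1 / (1 + |(k : ℝ)|)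
      ≤ ∑ k ∈ pos ∪ neg, 1 / (1 + |(k : ℝ)|) :=
        Finset.sum_le_sum_of_subset_of_nonneg hsub fun k _ _ => hnonneg k
    _ ≤ ∑ k ∈ pos ∪ neg, 1 / (1 + |(k : ℝ)|) + ∑ k ∈ pos ∩ neg, 1 / (1 + |(k : ℝ)|) :=
        le_add_of_nonneg_right (Finset.sum_nonneg fun k _ => hnonneg k)
    _ = ∑ k ∈ pos, 1 / (1 + |(k : ℝ)|) + ∑ k ∈ neg, 1 / (1 + |(k : ℝ)|) :=
        Finset.sum_union_inter
    _ = 2 * ∑ j ∈ Finset.range (n + 1), 1 / (1 + (j : ℝ)) := by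
        rw [Finset.sum_image (by simp), Finset.sum_image (by simp), two_mul]
        simp only [Int.cast_neg, Int.cast_natCast, abs_neg, Nat.abs_cast]
    _ ≤ 2 * (1 + log (n + 1)) := by linarith

lemma sum_Icc_prod_one_div_one_add_sq_le (n : ℕ) :
    ∑ p ∈ Finset.Icc (-(n : ℤ)) n ×ˢ Finset.Icc (-(n : ℤ)) n,
      1 / (1 + (p.1 : ℝ) ^ 2 + (p.2 : ℝ) ^ 2) ≤ 8 * (1 + log (n + 1)) ^ 2 := by
  have hpoint (p : ℤ × ℤ) : 1 / (1 + (p.1 : ℝ) ^ 2 + (p.2 : ℝ) ^ 2) ≤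
      2 * (1 / (1 + |(p.1 : ℝ)|) * (1 / (1 + |(p.2 : ℝ)|))) := by
    rw [one_div_mul_one_div, mul_one_div, div_le_div_iff₀ (by positivity) (by positivity)]
    nlinarith [sq_abs (p.1 : ℝ), sq_abs (p.2 : ℝ), sq_nonneg (|(p.1 : ℝ)| - |(p.2 : ℝ)|),
      sq_nonneg (|(p.1 : ℝ)| - 1), sq_nonneg (|(p.2 : ℝ)| - 1)]
  have hnonneg : 0 ≤ ∑ k ∈ Finset.Icc (-(n : ℤ)) n, 1 / (1 + |(k : ℝ)|) :=
    Finset.sum_nonneg fun k _ => by positivity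
  refine (Finset.sum_le_sum fun p _ => hpoint p).trans ?_
  rw [← Finset.mul_sum, Finset.sum_product]
  simp only [← Finset.mul_sum]
  rw [← Finset.sum_mul]
  nlinarith [sum_Icc_one_div_one_add_abs_le n]

lemma sum_one_div_one_add_sq_sub_le {I : Finset (ℤ × ℤ)}
    (hI : ∀ q ∈ I, |q.1 - p.1| ≤ (n : ℤ) ∧ |q.2 - p.2| ≤ (n : ℤ)) :
    ∑ q ∈ I, 1 / (1 + ((q.1 - p.1 : ℤ) : ℝ) ^ 2 + ((q.2 - p.2 : ℤ) : ℝ) ^ 2) ≤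
      8 * (1 + log (n + 1)) ^ 2 := by
  refine le_trans ?_ (sum_Icc_prod_one_div_one_add_sq_le n)
  have himage := Finset.sum_image (s := I) (g := fun q => q - p)
    (f := fun q : ℤ × ℤ => 1 / (1 + (q.1 : ℝ) ^ 2 + (q.2 : ℝ) ^ 2)) (by simp)
  refine himage.symm.le.trans
    (Finset.sum_le_sum_of_subset_of_nonneg ?_ fun q _ _ => by positivity)
  intro _ hmem
  obtain ⟨q, hq, rfl⟩ := Finset.mem_image.1 hmem
  simpa only [Finset.mem_product, Finset.mem_Icc, ← abs_le, Prod.fst_sub, Prod.snd_sub]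
    using hI q hq

lemma abs_sub_le_of_gridSite_mem_Lam (hm : 1 ≤ m) (hp : gridSite m p ∈ Lam n)
    (hq : gridSite m q ∈ Lam n) : |q.1 - p.1| ≤ (n : ℤ) ∧ |q.2 - p.2| ≤ (n : ℤ) := by
  have hcoord {k l : ℤ} (hk : 2 * |k * (2 * m)| ≤ n) (hl : 2 * |l * (2 * m)| ≤ n) :
      |l - k| ≤ n := by
    have hdiff := abs_sub (l * (2 * m)) (k * (2 * m))
    rw [← sub_mul, abs_mul, abs_of_pos (by omega : (0 : ℤ) < 2 * m)] at hdiff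
    nlinarith [abs_nonneg (l - k)]
  rw [mem_Lam] at hp hq
  exact ⟨hcoord hp.1 hq.1, hcoord hp.2 hq.2⟩

lemma exp_mul_le_one_add_exp {g b : ℝ} (hg0 : 0 ≤ g) (hg1 : g ≤ 1) : exp (g * b) ≤ 1 + exp b := by
  rcases le_total 0 b with h | h
  · linarith [exp_le_exp.2 (mul_le_of_le_one_left h hg1)]
  · linarith [exp_le_one_iff.2 (mul_nonpos_of_nonneg_of_nonpos hg0 h), exp_pos b]

lemma sum_exp_mul_boxCov_le (hn : 1 ≤ n) (hm : 9 ≤ m) {S : Finset Site}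
    (hS : ∀ c ∈ S, ∃ p, c = gridSite m p) (hSB : ∀ c ∈ S, siteBox c m ⊆ Lam n)
    (hnm : 64 * π * log (16 * (n : ℝ) ^ 2) ≤ Nat.sqrt m) {g : ℝ} (hg0 : 0 ≤ g) (hg1 : g ≤ 1)
    {c : Site} (hc : c ∈ S) :
    ∑ c' ∈ S, exp (g * boxCov n m c c') ≤
      S.card + 100 * ((n : ℝ) ^ 2 / (m : ℝ) ^ 2) * (8 * (1 + log (n + 1)) ^ 2) := by
  refine (Finset.sum_le_sum fun c' _ => exp_mul_le_one_add_exp hg0 hg1).trans ?_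
  rw [Finset.sum_add_distrib, Finset.sum_const, nsmul_one]
  refine add_le_add_right ?_ _
  obtain ⟨I, rfl⟩ : ∃ I : Finset (ℤ × ℤ), I.image (gridSite m) = S := by
    obtain ⟨I, -, hI⟩ := Finset.subset_set_image_iff (s := Set.univ) (f := gridSite m) (t := S) |>.1
      fun c hc => (hS c hc).imp fun p hp => ⟨trivial, hp.symm⟩
    exact ⟨I, hI⟩
  obtain ⟨p, hp, rfl⟩ := Finset.mem_image.1 hc
  have hbox {q} (hq : q ∈ I) : siteBox (gridSite m q) m ⊆ Lam n :=
    hSB _ (Finset.mem_image_of_mem _ hq)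
  rw [Finset.sum_image (gridSite_injective (by omega)).injOn]
  refine (Finset.sum_le_sum fun q hq =>
    exp_boxCov_gridSite_le hn hm (hbox hp) (hbox hq) hnm).trans ?_
  rw [← Finset.mul_sum]
  exact mul_le_mul_of_nonneg_left (sum_one_div_one_add_sq_sub_le fun q hq =>
    abs_sub_le_of_gridSite_mem_Lam (by omega) (hbox hp (self_mem_siteBox _ _))
      (hbox hq (self_mem_siteBox _ _))) (by positivity)

end BoxCov

/-! ### The box count for a fixed size -/

section Count

variable {D : Set (ℝ × ℝ)} {n N m : ℕ} {α ρ δ : ℝ} {c : Site}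

lemma measurable_card_filter {Ω κ : Type*} [MeasurableSpace Ω] (S : Finset κ) {P : κ → Ω → Prop}
    [∀ c x, Decidable (P c x)] (hP : ∀ c ∈ S, MeasurableSet {x | P c x}) :
    Measurable fun x => {c ∈ S | P c x}.card := by
  simp only [Finset.card_filter]
  exact Finset.measurable_sum S fun c hc =>
    Measurable.ite (hP c hc) measurable_const measurable_const

lemma measurableSet_abs_boxAverage_sub_lt (s : Fin N → ℝ) (a b : ℝ) :
    MeasurableSet {φ : Conf N | ∀ i, |boxAverage m c φ i - s i * a| < b} := by
  have hcoord (i : Fin N) : Measurable fun φ : Conf N => boxAverage m c φ i :=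
    (EuclideanSpace.proj (𝕜 := ℝ) i).measurable.comp measurable_boxAverage
  simp only [Set.ofPred_forall]
  exact MeasurableSet.iInter fun i =>
    measurableSet_lt ((hcoord i).sub_const _).abs measurable_const

lemma siteBox_subset_Lam (hρ : ρ ≤ 1 / 4) (ha : evenSide n α = 2 * m)
    (hc : c ∈ ballCenters D n α (ρ * n)) : siteBox c m ⊆ Lam n := fun _ hx =>
  mem_Lam_of_mem_latBall hρ (siteBox_subset_latBall ha hc hx)

lemma harmExt_gridK_ae_eq (hm : 1 ≤ m) (ha : evenSide n α = 2 * m) (hρ : ρ ≤ 1 / 4) :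
    ∀ᵐ φ ∂(gff n N), ∀ c ∈ ballCenters D n α (ρ * n),
      harmExt n N (gridK D n α (0, 0)) c φ = boxAverage m c φ := by
  rw [Filter.eventually_all_finset]
  intro c hc
  have hcenter : c ∈ centersF D n α (0, 0) := Finset.mem_of_mem_filter c hc
  exact harmExt_ae_eq_boxAverage hm (siteBox_subset_Lam hρ ha hc)
    (fun _ => notMem_boxInterior_of_mem_gridK hm ha hcenter)
    (fun _ => mem_gridK_of_mem_boxBoundary ha hcenter)

lemma countRange_eq_card {s : Fin N → ℝ} {φ : Conf N}
    (hφ : ∀ c ∈ ballCenters D n α (ρ * n),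
      harmExt n N (gridK D n α (0, 0)) c φ = boxAverage m c φ) :
    countRange D N n α (ρ * n) s δ φ = {c ∈ ballCenters D n α (ρ * n) | ∀ i,
      |boxAverage m c φ i - s i * log n| < δ * log n}.card := by
  rw [countRange, ← Finset.filter_filter]
  refine congrArg Finset.card (Finset.filter_congr fun c hc => forall_congr' fun i => ?_)
  rw [hφ c hc, abs_sub_lt_iff, sub_lt_iff_lt_add', sub_lt_comm, add_mul, sub_mul, and_comm]

lemma gff_countRange_le_eq (hm : 1 ≤ m) (ha : evenSide n α = 2 * m) (hρ : ρ ≤ 1 / 4)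
    (s : Fin N → ℝ) (K : ℝ) :
    gff n N {φ | (countRange D N n α (ρ * n) s δ φ : ℝ) ≤ K} =
      lamGff n N {ω | ({c ∈ ballCenters D n α (ρ * n) | ∀ i,
        |lamBoxAverageCoord n m c i ω - s i * log n| < δ * log n}.card : ℝ) ≤ K} := by
  set S := ballCenters D n α (ρ * n)
  have hmeas : MeasurableSet {φ : Conf N |
      ({c ∈ S | ∀ i, |boxAverage m c φ i - s i * log n| < δ * log n}.card : ℝ) ≤ K} := by
    have hcard : Measurable fun φ : Conf N =>
        {c ∈ S | ∀ i, |boxAverage m c φ i - s i * log n| < δ * log n}.card :=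
      measurable_card_filter S fun c _ => measurableSet_abs_boxAverage_sub_lt s _ _
    exact measurableSet_le (measurable_from_nat.comp hcard) measurable_const
  have hae : {φ | (countRange D N n α (ρ * n) s δ φ : ℝ) ≤ K} =ᵐ[gff n N] {φ : Conf N |
      ({c ∈ S | ∀ i, |boxAverage m c φ i - s i * log n| < δ * log n}.card : ℝ) ≤ K} := by
    filter_upwards [harmExt_gridK_ae_eq (D := D) hm ha hρ] with φ hφ
    exact congrArg (fun k : ℕ => (k : ℝ) ≤ K) (countRange_eq_card hφ)
  rw [measure_congr hae, gff_eq_map_lamGff, Measure.map_apply (measurable_extZero n N) hmeas]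
  simp only [lamBoxAverageCoord_apply, Set.preimage_ofPred_eq]

lemma exists_evenSide_eq_two_mul (hα : 3 ≤ (n : ℝ) ^ α) :
    ∃ m : ℕ, evenSide n α = 2 * m ∧ (n : ℝ) ^ α ≤ 3 * m ∧ m ≤ (n : ℝ) ^ α := by
  obtain ⟨hlo, hup⟩ := abs_le.1 (abs_sub_round ((n : ℝ) ^ α / 2))
  have hnonneg : 0 ≤ round ((n : ℝ) ^ α / 2) := by
    have : (-1 : ℝ) < round ((n : ℝ) ^ α / 2) := by linarith
    exact_mod_cast this
  obtain ⟨m, hm⟩ := Int.eq_ofNat_of_zero_le hnonneg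
  rw [hm, Int.cast_natCast] at hlo hup
  exact ⟨m, by rw [evenSide, hm], by linarith, by linarith⟩

lemma log_le_of_le_two_pow {x : ℝ} {k : ℕ} (hx : 0 < x) (hxk : x ≤ 2 ^ k) : log x ≤ k * 0.7 :=
  calc log x ≤ k * log 2 := by rw [← log_pow]; exact log_le_log hx hxk
    _ ≤ k * 0.7 := mul_le_mul_of_nonneg_left (by linarith [log_two_lt_d9]) (Nat.cast_nonneg k)

lemma log_le_mul_log (hn : 1 ≤ n) (hm : 1 ≤ m) (hup : m ≤ (n : ℝ) ^ α) :
    log m ≤ α * log n := by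
  rw [← log_rpow (by exact_mod_cast hn)]
  exact log_le_log (by exact_mod_cast hm) hup

lemma mul_log_sub_le_log (hn : 1 ≤ n) (hm : 1 ≤ m) (hlo : (n : ℝ) ^ α ≤ 3 * m) :
    α * log n - 2 ≤ log m := by
  have hm' : (0 : ℝ) < m := by exact_mod_cast hm
  have hn' : (0 : ℝ) < n := by exact_mod_cast hn
  have h := log_le_log (by positivity) hlo
  rw [log_rpow hn', log_mul three_ne_zero hm'.ne'] at h
  linarith [log_le_of_le_two_pow (x := 3) (k := 2) (by norm_num) (by norm_num)]

lemma le_boxCov_self (hn : 1 ≤ n) (hm : 1 ≤ m) (hmn : 4 * m ≤ n) (hup : m ≤ (n : ℝ) ^ α)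
    (hc : 4 * |c.1| ≤ (n : ℤ) ∧ 4 * |c.2| ≤ (n : ℤ)) (hB : siteBox c m ⊆ Lam n) :
    2 * (1 - α) * log n - 10 ≤ boxCov n m c c := by
  refine le_trans ?_ (le_dirichletForm_boxAverageRep_self hm hmn hc.1 hc.2 hB)
  have : (0 : ℝ) < m := by exact_mod_cast hm
  have : (0 : ℝ) < n := by exact_mod_cast hn
  rw [log_div (by positivity) (by positivity), log_div (by positivity) (by positivity),
    log_mul (by norm_num) (by positivity), log_mul (by norm_num) (by positivity), log_pow, log_pow,
    Nat.cast_ofNat]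
  linarith [log_le_of_le_two_pow (x := 48) (k := 6) (by norm_num) (by norm_num),
    log_nonneg (by norm_num : (1 : ℝ) ≤ 16), log_le_mul_log hn hm hup]

lemma boxCov_self_le (hn : 1 ≤ n) (hm : 9 ≤ m) (hlo : (n : ℝ) ^ α ≤ 3 * m) {p : ℤ × ℤ}
    (hB : siteBox (gridSite m p) m ⊆ Lam n)
    (hnm : 64 * π * log (16 * (n : ℝ) ^ 2) ≤ Nat.sqrt m) :
    boxCov n m (gridSite m p) (gridSite m p) ≤ 2 * (1 - α) * log n + 10 := by
  refine (boxCov_gridSite_le hn hm hB hB hnm).trans ?_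
  have : (0 : ℝ) < m := by exact_mod_cast (by omega : 0 < m)
  have : (0 : ℝ) < n := by exact_mod_cast hn
  simp only [sub_self, Int.cast_zero, zero_pow two_ne_zero, add_zero, mul_one]
  rw [log_div (by positivity) (by positivity), log_mul (by norm_num) (by positivity), log_pow,
    log_pow, Nat.cast_ofNat]
  linarith [log_le_of_le_two_pow (x := 32) (k := 5) (by norm_num) (by norm_num),
    mul_log_sub_le_log hn (by omega : 1 ≤ m) hlo]

lemma sq_div_sq_le (hn : 1 ≤ n) (hm : 1 ≤ m) (hlo : (n : ℝ) ^ α ≤ 3 * m) :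
    (n : ℝ) ^ 2 / (m : ℝ) ^ 2 ≤ 9 * exp (2 * (1 - α) * log n) := by
  have hn' : (0 : ℝ) < n := by exact_mod_cast hn
  have : (0 : ℝ) < m := by exact_mod_cast hm
  have hexp : exp (2 * (1 - α) * log n) * ((n : ℝ) ^ α) ^ 2 = (n : ℝ) ^ 2 := by
    rw [rpow_def_of_pos hn', ← exp_nat_mul, ← exp_add, ← exp_log hn', ← exp_nat_mul, log_exp]
    congr 1
    push_cast
    ring
  rw [div_le_iff₀ (by positivity), ← hexp]
  calc exp (2 * (1 - α) * log n) * ((n : ℝ) ^ α) ^ 2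
      ≤ exp (2 * (1 - α) * log n) * (3 * m) ^ 2 := by gcongr
    _ = 9 * exp (2 * (1 - α) * log n) * (m : ℝ) ^ 2 := by ring

lemma sq_div_le_card_ballCenters (hm : 1 ≤ m) (ha : evenSide n α = 2 * m) (hρ : ρ ≤ 1 / 4)
    (hD : ∀ x : Site, x ∈ latBall (ρ * n) → x ∈ Dn D n) (hρn : 8 * (m : ℝ) ≤ ρ * n) :
    (ρ * n / (16 * m)) ^ 2 ≤ (ballCenters D n α (ρ * n)).card := by
  have hm' : (0 : ℝ) < m := by exact_mod_cast hm
  set y := ρ * n / (8 * m) with hy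
  have hy1 : 1 ≤ y := (one_le_div (by positivity)).2 hρn
  have hfloor : 1 ≤ ⌊y⌋₊ := Nat.le_floor (by exact_mod_cast hy1)
  have hpred : ((⌊y⌋₊ - 1 : ℕ) : ℝ) + 1 = ⌊y⌋₊ := by
    rw [Nat.cast_sub hfloor, Nat.cast_one, sub_add_cancel]
  have hle : (⌊y⌋₊ : ℝ) ≤ y := Nat.floor_le (by linarith)
  have hlt : y < ⌊y⌋₊ + 1 := Nat.lt_floor_add_one y
  have hyn : y * (8 * m) = ρ * n := div_mul_cancel₀ _ (by positivity)
  have hcard := sq_le_card_ballCenters hm ha hρ hD (J := ⌊y⌋₊ - 1) (by rw [hpred]; nlinarith)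
  rw [hpred] at hcard
  have hhalf : ρ * n / (16 * m) = y / 2 := by
    rw [hy]
    field_simp
    ring
  have : (1 : ℝ) ≤ ⌊y⌋₊ := by exact_mod_cast hfloor
  rw [hhalf]
  exact (pow_le_pow_left₀ (by linarith) (by linarith) 2).trans hcard

end Count

/-! ### Asymptotics of the box count -/

section LargeSize

open Matrix

variable {D : Set (ℝ × ℝ)} {n N m : ℕ} {α ρ δ η : ℝ}

lemma one_le_of_log_pos (hn : 0 < log n) : 1 ≤ n :=
  Nat.one_le_iff_ne_zero.2 fun h => hn.ne' (by rw [h, Nat.cast_zero, log_zero])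

lemma two_pow_mul_le_mul (hn : 1 ≤ n) (hm : 1 ≤ m) (hup : m ≤ (n : ℝ) ^ α) (hρ0 : 0 < ρ)
    {k : ℕ} (hlog : k * 0.7 + log (1 / ρ) ≤ (1 - α) * log n) : 2 ^ k * (m : ℝ) ≤ ρ * n := by
  have hn' : (0 : ℝ) < n := by exact_mod_cast hn
  have hm' : (0 : ℝ) < m := by exact_mod_cast hm
  rw [← log_le_log_iff (by positivity) (by positivity), log_mul (by positivity) hm'.ne',
    log_mul hρ0.ne' hn'.ne']
  rw [one_div, log_inv] at hlog
  linarith [log_le_of_le_two_pow (x := 2 ^ k) (by positivity) le_rfl, log_le_mul_log hn hm hup]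

lemma exp_le_card_ballCenters (hn : 1 ≤ n) (hm : 1 ≤ m) (ha : evenSide n α = 2 * m)
    (hup : m ≤ (n : ℝ) ^ α) (hα : α ≤ 1 / 2) (hρ0 : 0 < ρ) (hρ : ρ ≤ 1 / 4)
    (hD : ∀ x : Site, x ∈ latBall (ρ * n) → x ∈ Dn D n) (hη : η ≤ 1) (hηn : 30 ≤ η * log n)
    (hρη : log (1 / ρ) ≤ η / 8 * log n) :
    exp ((2 * (1 - α) - η / 2) * log n) ≤ (ballCenters D n α (ρ * n)).card := by
  have hn' : (0 : ℝ) < n := by exact_mod_cast hn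
  have hm' : (0 : ℝ) < m := by exact_mod_cast hm
  have hL : 0 ≤ log n := log_natCast_nonneg n
  have hρn : 8 * (m : ℝ) ≤ ρ * n := by
    have := two_pow_mul_le_mul hn hm hup hρ0 (k := 3) (by push_cast; nlinarith)
    linarith
  refine le_trans ?_ (sq_div_le_card_ballCenters hm ha hρ hD hρn)
  rw [← le_log_iff_exp_le (by positivity), log_pow, log_div (by positivity) (by positivity),
    log_mul hρ0.ne' hn'.ne', log_mul (by norm_num) hm'.ne', Nat.cast_ofNat]
  rw [one_div, log_inv] at hρη
  linarith [log_le_of_le_two_pow (x := 16) (k := 4) (by norm_num) (by norm_num),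
    log_le_mul_log hn hm hup]

lemma one_add_log_add_one_sq_le (hL : 2 ≤ log n) : (1 + log (n + 1)) ^ 2 ≤ 4 * log n ^ 2 := by
  have hn : (1 : ℝ) ≤ n := by exact_mod_cast one_le_of_log_pos (by linarith)
  have hup : log (n + 1) ≤ log n + log 2 := by
    rw [← log_mul (by linarith) two_ne_zero]
    exact log_le_log (by linarith) (by linarith)
  have hnonneg : 0 ≤ log (n + 1 : ℝ) := log_nonneg (by linarith)
  rw [show 4 * log n ^ 2 = (2 * log n) ^ 2 by ring]
  exact pow_le_pow_left₀ (by linarith) (by linarith [log_two_lt_d9]) 2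

lemma add_sq_div_sq_mul_le {M : ℝ} (hm : 1 ≤ m) (hlo : (n : ℝ) ^ α ≤ 3 * m)
    (hL : 2 ≤ log n) (hM : exp ((2 * (1 - α) - η / 2) * log n) ≤ M)
    (hbig : 10 ^ 7 * log n ^ 2 ≤ exp (η / 2 * log n)) :
    M + 100 * ((n : ℝ) ^ 2 / (m : ℝ) ^ 2) * (8 * (1 + log (n + 1)) ^ 2) ≤ M * exp (η * log n) := by
  set X := exp (η / 2 * log n) with hX
  have hM0 : 0 < M := (exp_pos _).trans_le hM
  have hratio : (n : ℝ) ^ 2 / (m : ℝ) ^ 2 ≤ 9 * (M * X) := by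
    refine (sq_div_sq_le (one_le_of_log_pos (by linarith)) hm hlo).trans ?_
    refine mul_le_mul_of_nonneg_left ?_ (by norm_num)
    calc exp (2 * (1 - α) * log n) = exp ((2 * (1 - α) - η / 2) * log n) * X := by
          rw [hX, ← exp_add]; ring_nf
      _ ≤ M * X := by gcongr
  have hXX : exp (η * log n) = X * X := by rw [hX, ← exp_add]; ring_nf
  have hX2 : 2 ≤ X := by nlinarith
  clear_value X
  calc M + 100 * ((n : ℝ) ^ 2 / (m : ℝ) ^ 2) * (8 * (1 + log (n + 1)) ^ 2)
      ≤ M + 100 * (9 * (M * X)) * (8 * (4 * log n ^ 2)) := by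
        gcongr
        exact one_add_log_add_one_sq_le hL
    _ = M + M * X * (28800 * log n ^ 2) := by ring
    _ ≤ M + M * X * (X / 2) := by gcongr; linarith
    _ ≤ M * exp (η * log n) := by
        rw [hXX]
        nlinarith [mul_le_mul hX2 hX2 zero_le_two (by linarith)]

lemma rpow_le_card_mul_exp {M : ℝ} (hN : 1 ≤ N) (hα : α ≤ 1 / 2)
    (hNδ : N * δ ≤ 1 / 16) (hδ : 0 < δ) (hη : η ≤ 1 / 16) (hL : 20 ≤ log n)
    (hM : exp ((2 * (1 - α) - η / 2) * log n) ≤ M) :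
    (n : ℝ) ^ ((1 - α) / 2) ≤
      M * exp (-((2 * (1 - α) / 2 + (N + 1) * δ) * log n)) / 4 := by
  have hδN : δ ≤ N * δ := le_mul_of_one_le_left hδ.le (by exact_mod_cast hN)
  have hgap : 3 / 32 * log n ≤ (((1 - α) / 2) - η / 2 - (N + 1) * δ) * log n := by
    gcongr
    linarith
  rw [rpow_def_of_pos (by exact_mod_cast one_le_of_log_pos (by linarith : 0 < log n))]
  calc exp (log n * ((1 - α) / 2))
      ≤ exp ((2 * (1 - α) - η / 2) * log n + -((2 * (1 - α) / 2 + (N + 1) * δ) * log n)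
          - log 4) := by
        refine exp_le_exp.2 ?_
        linarith [log_le_of_le_two_pow (x := 4) (k := 2) (by norm_num) (by norm_num)]
    _ = exp ((2 * (1 - α) - η / 2) * log n) * exp (-((2 * (1 - α) / 2 + (N + 1) * δ) * log n))
          / 4 := by rw [exp_sub, exp_add, exp_log (by norm_num)]
    _ ≤ M * exp (-((2 * (1 - α) / 2 + (N + 1) * δ) * log n)) / 4 := by gcongr

lemma mul_log_le_sqrt (hL : 20 ≤ log n) (hm : 10 ^ 6 * log n ^ 2 ≤ m) :
    64 * π * log (16 * (n : ℝ) ^ 2) ≤ Nat.sqrt m := by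
  have hn' : (1 : ℝ) ≤ n := by exact_mod_cast one_le_of_log_pos (by linarith : 0 < log n)
  have : 0 ≤ log (16 * (n : ℝ) ^ 2) := log_nonneg (by nlinarith)
  have hlog : log (16 * (n : ℝ) ^ 2) ≤ 3 * log n := by
    rw [log_mul (by norm_num) (by positivity), log_pow, Nat.cast_ofNat]
    linarith [log_le_of_le_two_pow (x := 16) (k := 4) (by norm_num) (by norm_num)]
  have hsqrt : 1000 * log n ≤ Nat.sqrt m + 1 := by
    refine abs_le_of_sq_le_sq' ?_ (by positivity) |>.2
    have : (m : ℝ) < (Nat.sqrt m + 1) * (Nat.sqrt m + 1) := by exact_mod_cast Nat.lt_succ_sqrt m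
    linarith
  calc 64 * π * log (16 * (n : ℝ) ^ 2) ≤ 64 * 4 * (3 * log n) := by
        gcongr
        exact pi_le_four
    _ ≤ Nat.sqrt m := by linarith

lemma sum_sum_exp_mul_boxCov_le (hm : 9 ≤ m) (ha : evenSide n α = 2 * m)
    (hlo : (n : ℝ) ^ α ≤ 3 * m) (hρ : ρ ≤ 1 / 4) (hL : 2 ≤ log n)
    (hnm : 64 * π * log (16 * (n : ℝ) ^ 2) ≤ Nat.sqrt m)
    (hcard : exp ((2 * (1 - α) - η / 2) * log n) ≤ (ballCenters D n α (ρ * n)).card)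
    (hbig : 10 ^ 7 * log n ^ 2 ≤ exp (η / 2 * log n)) {g : ℝ} (hg0 : 0 ≤ g) (hg1 : g ≤ 1) :
    ∑ c ∈ ballCenters D n α (ρ * n), ∑ c' ∈ ballCenters D n α (ρ * n), exp (g * boxCov n m c c') ≤
      (ballCenters D n α (ρ * n)).card ^ 2 * exp (η * log n) := by
  have hn : 1 ≤ n := one_le_of_log_pos (by linarith)
  set S := ballCenters D n α (ρ * n)
  have hrow (c : Site) (hc : c ∈ S) :
      ∑ c' ∈ S, exp (g * boxCov n m c c') ≤ S.card * exp (η * log n) :=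
    (sum_exp_mul_boxCov_le hn hm
      (fun _ hc => exists_eq_gridSite ha (Finset.mem_of_mem_filter _ hc))
      (fun _ => siteBox_subset_Lam hρ ha) hnm hg0 hg1 hc).trans
      (add_sq_div_sq_mul_le (by omega) hlo hL hcard hbig)
  calc ∑ c ∈ S, ∑ c' ∈ S, exp (g * boxCov n m c c') ≤ ∑ _c ∈ S, S.card * exp (η * log n) :=
        Finset.sum_le_sum hrow
    _ = S.card ^ 2 * exp (η * log n) := by rw [Finset.sum_const, nsmul_eq_mul]; ring

lemma lamGff_card_window_le {γ : Fin N → ℝ} (hm : 9 ≤ m) (hmn : 4 * m ≤ n)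
    (ha : evenSide n α = 2 * m) (hlo : (n : ℝ) ^ α ≤ 3 * m) (hup : m ≤ (n : ℝ) ^ α) (hα0 : 0 ≤ α)
    (hα1 : α ≤ 1) (hρ : ρ ≤ 1 / 4) (hL : 2 ≤ log n)
    (hnm : 64 * π * log (16 * (n : ℝ) ^ 2) ≤ Nat.sqrt m)
    (hcard : exp ((2 * (1 - α) - η / 2) * log n) ≤ (ballCenters D n α (ρ * n)).card)
    (hbig : 10 ^ 7 * log n ^ 2 ≤ exp (η / 2 * log n)) (hδ : 0 < δ) (hδ1 : δ ≤ 1)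
    (hη : 25600 * η ≤ δ ^ 4) (hηn : 10 ≤ η * log n) (hγ : γ ⬝ᵥ γ ≤ 1) :
    lamGff n N {ω | ({c ∈ ballCenters D n α (ρ * n) | ∀ i,
        |lamBoxAverageCoord n m c i ω - 2 * (1 - α) * γ i * log n| < δ * log n}.card : ℝ) ≤
        (ballCenters D n α (ρ * n)).card * exp (-((2 * (1 - α) / 2 + (N + 1) * δ) * log n)) / 4} ≤
      ENNReal.ofReal ((4 + 16 * N ^ 2) * exp (-(η * log n))) := by
  have hn : 1 ≤ n := one_le_of_log_pos (by linarith)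
  have hm1 : 1 ≤ m := by omega
  have hη0 : 0 ≤ η := nonneg_of_mul_nonneg_left (by linarith : 0 ≤ η * log n) (by linarith)
  have hSne : (ballCenters D n α (ρ * n)).Nonempty :=
    Finset.card_pos.1 (by exact_mod_cast (exp_pos _).trans_le hcard)
  have hbox (c : Site) (hc : c ∈ ballCenters D n α (ρ * n)) : siteBox c m ⊆ Lam n :=
    siteBox_subset_Lam hρ ha hc
  have hmain := measure_card_window_le (μ := lamGff n N) (h := lamBoxAverageCoord n m)
    (S := ballCenters D n α (ρ * n)) (G := boxCov n m) (v := 2 * (1 - α)) (γ := γ)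
    integral_strongDual_lamGff hSne
    (fun c hc c' hc' => covariance_lamBoxAverageCoord hm1 (hbox c hc) (hbox c' hc'))
    (by linarith) (by linarith) (by linarith) hδ hδ1 hη0 hη ?_ ?_ hγ
    (sum_sum_exp_mul_boxCov_le hm ha hlo hρ hL hnm hcard hbig
      (Finset.sum_nonneg fun i _ => mul_self_nonneg (γ i)) hγ)
  · rw [Fintype.card_fin] at hmain
    convert hmain
  · intro c hc
    have := le_boxCov_self hn hm1 hmn hup (four_mul_abs_le_of_mem_latBall hρ
      (siteBox_subset_latBall ha hc (self_mem_siteBox c m))) (hbox c hc)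
    linarith
  · intro c hc
    obtain ⟨p, rfl⟩ := exists_eq_gridSite ha (Finset.mem_of_mem_filter c hc)
    have := boxCov_self_le hn hm hlo (hbox _ hc) hnm
    linarith

lemma gff_countRange_le {s : Fin N → ℝ} (hN : 1 ≤ N) (hα : α ≤ 1 / 2) (hα0 : 0 ≤ α)
    (hs : ∑ i, s i ^ 2 ≤ (2 * (1 - α)) ^ 2) (hδ : 0 < δ) (hNδ : N * δ ≤ 1 / 16)
    (hη : 25600 * η ≤ δ ^ 4) (hρ0 : 0 < ρ) (hρ : ρ ≤ 1 / 4)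
    (hD : ∀ x : Site, x ∈ latBall (ρ * n) → x ∈ Dn D n)
    (hρη : log (1 / ρ) ≤ η / 8 * log n) (hL : 20 ≤ log n) (hηn : 30 ≤ η * log n)
    (hαbig : 10 ^ 7 * log n ^ 2 ≤ exp (α * log n))
    (hηbig : 10 ^ 7 * log n ^ 2 ≤ exp (η / 2 * log n)) :
    gff n N {φ | (countRange D N n α (ρ * n) s δ φ : ℝ) ≤ (n : ℝ) ^ ((1 - α) / 2)} ≤
      ENNReal.ofReal ((4 + 16 * N ^ 2) * exp (-(η * log n))) := by
  have hn : 1 ≤ n := one_le_of_log_pos (by linarith)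
  have hδ1 : δ ≤ 1 / 16 := (le_mul_of_one_le_left hδ.le (by exact_mod_cast hN)).trans hNδ
  have hη16 : η ≤ 1 / 16 := by linarith [pow_le_one₀ (n := 4) hδ.le (by linarith : δ ≤ 1)]
  rw [mul_comm α, ← rpow_def_of_pos (by exact_mod_cast hn)] at hαbig
  obtain ⟨m, ha, hlo, hup⟩ := exists_evenSide_eq_two_mul (by nlinarith : 3 ≤ (n : ℝ) ^ α)
  have hmL : 10 ^ 6 * log n ^ 2 ≤ m := by nlinarith
  have hm : 9 ≤ m := by
    have : (9 : ℝ) ≤ m := by nlinarith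
    exact_mod_cast this
  have hnm := mul_log_le_sqrt hL hmL
  have hm1 : 1 ≤ m := by omega
  have hmn : 4 * m ≤ n := by
    have := two_pow_mul_le_mul hn hm1 hup one_pos (k := 2) (by norm_num; nlinarith)
    exact_mod_cast (by linarith : 4 * (m : ℝ) ≤ n)
  have hcard := exp_le_card_ballCenters hn hm1 ha hup hα hρ0 hρ hD (by linarith) hηn hρη
  have hγ : (fun i => s i / (2 * (1 - α))) ⬝ᵥ (fun i => s i / (2 * (1 - α))) ≤ 1 := by
    simp only [dotProduct, ← sq, div_pow, ← Finset.sum_div]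
    exact div_le_one_of_le₀ hs (sq_nonneg _)
  have hwindow := lamGff_card_window_le (N := N) hm hmn ha hlo hup hα0 (by linarith) hρ
    (by linarith) hnm hcard hηbig hδ (by linarith) hη (by linarith) hγ
  have hsv (i : Fin N) : 2 * (1 - α) * (s i / (2 * (1 - α))) = s i :=
    mul_div_cancel₀ _ (by linarith)
  simp only [hsv] at hwindow
  rw [gff_countRange_le_eq hm1 ha hρ]
  exact (measure_mono (Set.ofPred_subset_ofPred.2 fun _ h => h.trans
    (rpow_le_card_mul_exp hN hα hNδ hδ hη16 hL hcard))).trans hwindow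

lemma eventually_mul_log_sq_le_exp {a : ℝ} (ha : 0 < a) (C : ℝ) :
    ∀ᶠ n : ℕ in atTop, C * log n ^ 2 ≤ exp (a * log n) := by
  have hlog : Tendsto (fun n : ℕ => log n) atTop atTop :=
    tendsto_log_atTop.comp tendsto_natCast_atTop_atTop
  have hlittle := ((isLittleO_pow_exp_pos_mul_atTop 2 ha).const_mul_left C).comp_tendsto hlog
  filter_upwards [hlittle.def one_pos] with n hn
  rw [one_mul, Function.comp_apply, Function.comp_apply, norm_of_nonneg (exp_nonneg _)] at hn
  exact (le_abs_self _).trans hn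

lemma tendsto_ofReal_mul_exp_neg_log {a : ℝ} (ha : 0 < a) (C : ℝ) :
    Tendsto (fun n : ℕ => ENNReal.ofReal (C * exp (-(a * log n)))) atTop (nhds 0) := by
  have hlog : Tendsto (fun n : ℕ => log n) atTop atTop :=
    tendsto_log_atTop.comp tendsto_natCast_atTop_atTop
  have hexp := (tendsto_exp_neg_atTop_nhds_zero.comp (hlog.const_mul_atTop ha)).const_mul C
  simpa only [mul_zero, ENNReal.ofReal_zero, Function.comp_def] using ENNReal.tendsto_ofReal hexp

lemma tendsto_gff_countRange_le {r : ℕ → ℝ} {s : Fin N → ℝ} (hN : 1 ≤ N) (hα0 : 0 < α)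
    (hα : α ≤ 1 / 2) (hs : ∑ i, s i ^ 2 ≤ (2 * (1 - α)) ^ 2) (hδ : 0 < δ) (hNδ : N * δ ≤ 1 / 16)
    (hrpos : ∀ n, 0 < r n) (hrquarter : ∀ n, r n ≤ 1 / 4)
    (hrlog : (fun n : ℕ => log (1 / r n)) =o[atTop] fun n : ℕ => log n)
    (hrD : ∀ n : ℕ, ∀ x : Site, x ∈ latBall (r n * n) → x ∈ Dn D n) :
    Tendsto (fun n : ℕ => gff n N {φ | (countRange D N n α (r n * n) s δ φ : ℝ) ≤
      (n : ℝ) ^ ((1 - α) / 2)}) atTop (nhds 0) := by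
  obtain ⟨η, hη, hη0⟩ : ∃ η, 25600 * η = δ ^ 4 ∧ 0 < η := ⟨δ ^ 4 / 25600, by ring, by positivity⟩
  have hlog : Tendsto (fun n : ℕ => log n) atTop atTop :=
    tendsto_log_atTop.comp tendsto_natCast_atTop_atTop
  refine tendsto_of_tendsto_of_tendsto_of_le_of_le' tendsto_const_nhds
    (tendsto_ofReal_mul_exp_neg_log hη0 (4 + 16 * N ^ 2)) (.of_forall fun _ => zero_le) ?_
  filter_upwards [hrlog.def (c := η / 8) (by positivity), hlog.eventually_ge_atTop 20,
    hlog.eventually_ge_atTop (30 / η), eventually_mul_log_sq_le_exp hα0 (10 ^ 7),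
    eventually_mul_log_sq_le_exp (half_pos hη0) (10 ^ 7)] with n hr hL hηn hαbig hηbig
  rw [norm_of_nonneg (by linarith : 0 ≤ log n)] at hr
  rw [div_le_iff₀' hη0] at hηn
  exact gff_countRange_le hN hα hα0.le hs hδ hNδ hη.le (hrpos n) (hrquarter n) (hrD n)
    ((le_abs_self _).trans hr) hL hηn hαbig hηbig

end LargeSize

theorem no_hole_harmonic_general (N : ℕ) (hN : 0 < N) (D : Set (ℝ × ℝ)) (r : ℕ → ℝ)
    (hrpos : ∀ n, 0 < r n) (hrquarter : ∀ n, r n ≤ 1 / 4)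
    (hrlog : (fun n : ℕ => log (1 / r n)) =o[atTop] fun n : ℕ => log n)
    (hrD : ∀ n : ℕ, ∀ x : Site, x ∈ latBall (r n * n) → x ∈ Dn D n)
    (ε : ℝ) (hε : 0 < ε) (s : Fin N → ℝ) (hnorm : √(∑ i, s i ^ 2) ≤ 2 * (1 - ε)) :
    ∃ α : ℝ, α ∈ Set.Ioo (0 : ℝ) 1 ∧
      ∃ κ : ℝ, κ ∈ Set.Ioo 0 (2 * (1 - α)) ∧
        ∃ δ : ℝ, δ ∈ Set.Ioo 0 √(2 * α * κ / N) ∧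
          Tendsto
            (fun n : ℕ =>
              gff n N {φ : Conf N |
                (countRange D N n α (r n * n) s δ φ : ℝ) ≤ (n : ℝ) ^ κ})
            atTop (nhds 0) := by
  obtain ⟨α, hα0, hα, hαε⟩ : ∃ α, 0 < α ∧ α ≤ 1 / 2 ∧ α ≤ ε :=
    ⟨min ε (1 / 2), lt_min hε one_half_pos, min_le_right _ _, min_le_left _ _⟩
  have : (0 : ℝ) < N := by exact_mod_cast hN
  have hκ : 0 < (1 - α) / 2 := by linarith
  obtain ⟨δ, hδ, hδlt⟩ := exists_between
    (lt_min (Real.sqrt_pos.2 (by positivity)) (by positivity) :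
      0 < min √(2 * α * ((1 - α) / 2) / N) (1 / (16 * N)))
  obtain ⟨hδsqrt, hδN⟩ := lt_min_iff.1 hδlt
  refine ⟨α, ⟨hα0, by linarith⟩, (1 - α) / 2, ⟨hκ, by linarith⟩, δ, ⟨hδ, hδsqrt⟩, ?_⟩
  have hNδ : N * δ ≤ 1 / 16 := by
    rw [lt_div_iff₀ (by positivity)] at hδN
    linarith
  have hs : ∑ i, s i ^ 2 ≤ (2 * (1 - α)) ^ 2 :=
    (Real.sqrt_le_left (by linarith)).1 (hnorm.trans (by linarith))
  exact tendsto_gff_countRange_le hN hα0 hα hs hδ hNδ hrpos hrquarter hrlog hrD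

/-- **Proposition (many boxes with harmonic extension near `s log n`).**
For any `ε > 0` and `s ∈ ℝ^N` with `s¹ ≥ ⋯ ≥ s^N ≥ 0` and `|s| ≤ 2(1-ε)`, there exist
`α ∈ (0,1)`, `κ ∈ (0, 2(1-α))` and `δ ∈ (0, √(2ακ/N))` such that
`P_n[N^α_{s-δ,s+δ} ≤ n^κ] → 0`. -/
theorem no_hole_harmonic (N : ℕ) (hN : 0 < N)
    (D : Set (ℝ × ℝ)) (hDopen : IsOpen D) (hD0 : (0, 0) ∈ D) (hDsub : D ⊆ unitSq)
    (ι : ℝ) (hι : 0 < ι) (hdist : ∀ p ∈ D, ∀ q ∈ frontier unitSq, ι ≤ dist p q)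
    (r : ℕ → ℝ) (hrpos : ∀ n, 0 < r n) (hrquarter : ∀ n, r n ≤ 1 / 4)
    (hrlog : (fun n : ℕ => Real.log (1 / r n)) =o[atTop] fun n : ℕ => Real.log n)
    (hrD : ∀ n : ℕ, ∀ x : Site, x ∈ latBall (r n * n) → x ∈ Dn D n)
    (ε : ℝ) (hε : 0 < ε) (s : Fin N → ℝ)
    (hmono : ∀ i j : Fin N, i ≤ j → s j ≤ s i) (hpos : ∀ i, 0 ≤ s i)
    (hnorm : Real.sqrt (∑ i, s i ^ 2) ≤ 2 * (1 - ε)) :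
    ∃ α : ℝ, α ∈ Set.Ioo (0 : ℝ) 1 ∧
      ∃ κ : ℝ, κ ∈ Set.Ioo 0 (2 * (1 - α)) ∧
        ∃ δ : ℝ, δ ∈ Set.Ioo 0 (Real.sqrt (2 * α * κ / N)) ∧
          Tendsto
            (fun n : ℕ =>
              gff n N {φ : Conf N |
                (countRange D N n α (r n * n) s δ φ : ℝ) ≤ (n : ℝ) ^ κ})
            atTop (nhds 0) :=
  no_hole_harmonic_general N hN D r hrpos hrquarter hrlog hrD ε hε s hnorm

end
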